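/- arXiv:2510.24119 — 2 statements merged into one kernel-verified Lean document; each statement's English description precedes it below -/
import Mathlib

section
/- Uniform large deviation principle for empirical distributions of a random dynamical system (abstract criterion): Assume hypotheses (I) and (C) hold for the one-step transition kernel κ of the RDS. Then there exists a function I : P(X) → [0,∞] which is convex, lower semicontinuous for the topology of weak convergence, and has compact sublevel sets {σ : I(σ) ≤ a} for every a ∈ [0,∞), such that for every Borel set B ⊆ P(X): −inf_{σ∈B°} I(σ) ≤ liminf_{n→∞} inf_{μ∈P(X)} (1/n)·log ℙ_μ(L_{n,μ} ∈ B) ≤ limsup_{n→∞} sup_{μ∈P(X)} (1/n)·log ℙ_μ(L_{n,μ} ∈ B) ≤ −inf_{σ∈cl(B)} I(σ), where B° and cl(B) are the interior and closure of B, ℙ_μ(L_{n,μ} ∈ B) := (μ ⊗ ℓ^⊗ℕ)({(x,ω) : (1/n)·Σ_{k=1}^n δ_{x_k(x,ω)} ∈ B}), all inequalities are in the extended reals with the conventions log 0 = −∞ and inf over the empty set = +∞. -/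
open MeasureTheory Filter Topology
open scoped ENNReal NNReal

noncomputable def kIter {X : Type*} [MeasurableSpace X] (κ : X → Measure X) : ℕ → X → Measure X
  | 0 => fun x => Measure.dirac x
  | n + 1 => fun x => (kIter κ n x).bind κ

/-- The trajectory of the random dynamical system: `x_0(x,ω) = x` and
`x_k(x,ω) = S(x_{k-1}(x,ω), ω_{k-1})`. -/
def traj {X E : Type*} (S : X × E → X) : ℕ → X × (ℕ → E) → X
  | 0 => fun p => p.1
  | k + 1 => fun p => S (traj S k p, p.2 k)

/-- The empirical measure `(1/n)·Σ_{k=1}^n δ_{x_k}`. -/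
noncomputable def empMeas {X E : Type*} [MeasurableSpace X] (S : X × E → X) (n : ℕ)
    (p : X × (ℕ → E)) : Measure X :=
  (n : ℝ≥0∞)⁻¹ • ∑ k ∈ Finset.Icc 1 n, Measure.dirac (traj S k p)

lemma empMeas_isProbabilityMeasure {X E : Type*} [MeasurableSpace X] (S : X × E → X)
    {n : ℕ} (hn : n ≠ 0) (p : X × (ℕ → E)) : IsProbabilityMeasure (empMeas S n p) := by
  constructor
  rw [empMeas, Measure.smul_apply, Measure.finset_sum_apply]
  simp only [measure_univ, Finset.sum_const, Nat.card_Icc, Nat.add_sub_cancel,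
    nsmul_eq_mul, mul_one, smul_eq_mul]
  exact ENNReal.inv_mul_cancel (by exact_mod_cast hn) (ENNReal.natCast_ne_top n)

/-- The empirical distribution `L_{n} = (1/n)·Σ_{k=1}^n δ_{x_k}` as a (random) probability
measure on `X` (for `n = 0` we use an irrelevant junk value). -/
noncomputable def empDist {X E : Type*} [MeasurableSpace X] (S : X × E → X) (n : ℕ)
    (p : X × (ℕ → E)) : ProbabilityMeasure X :=
  if hn : n = 0 then ⟨Measure.dirac p.1, inferInstance⟩
  else ⟨empMeas S n p, empMeas_isProbabilityMeasure S hn p⟩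

/-!
For a Lipschitz potential `V` the Feynman–Kac operator `f ↦ T (exp V * f)` of the transition
operator `T` is positive; the coupling gives it a Lasota–Yorke inequality for Lipschitz
functions, and together with irreducibility this yields a positive Lipschitz eigenfunction at the
Perron root. The total weights `∫ exp (∑ V (x_k))` therefore grow like `exp (n * pressure V)`
uniformly in the initial law. The Doob transform by the eigenfunction is a Markov operator of the
same kind whose iterates converge to constants, so the pressure is differentiable at `V` along
Lipschitz directions. The rate function is the Legendre transform of the pressure. The upper bound
is the exponential Chebyshev inequality and the compactness of the space of probability measures.
For the lower bound at `σ`, a minimization in the span of finitely many Lipschitz test functions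
produces a potential at which the gradient of the pressure is close to the integrals of the test
functions under `σ`; under the weights of this potential the empirical measure concentrates near
`σ`, and undoing the tilting costs at most the rate of `σ`.
-/

section PerronRoot

variable {X : Type*} [TopologicalSpace X] {L L' : C(X, ℝ) →L[ℝ] C(X, ℝ)}

theorem pow_succ_apply (L : C(X, ℝ) →L[ℝ] C(X, ℝ)) (n : ℕ) (f : C(X, ℝ)) :
    (L ^ (n + 1)) f = L ((L ^ n) f) := by
  rw [pow_succ']
  rfl

theorem pow_add_apply (L : C(X, ℝ) →L[ℝ] C(X, ℝ)) (m n : ℕ) (f : C(X, ℝ)) :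
    (L ^ (m + n)) f = (L ^ m) ((L ^ n) f) := by
  rw [pow_add]
  rfl

theorem map_nonneg_of_monotone (hL : Monotone L) {f : C(X, ℝ)} (hf : 0 ≤ f) : 0 ≤ L f := by
  simpa using hL hf

theorem monotone_pow (hL : Monotone L) (n : ℕ) : Monotone (L ^ n) := by
  rw [FunLike.coe_pow_eq_iterate]
  exact hL.iterate n

theorem pow_apply_of_apply_eq_smul {g : C(X, ℝ)} {θ : ℝ} (hg : L g = θ • g) (n : ℕ) :
    (L ^ n) g = θ ^ n • g := by
  induction n with
  | zero => simp
  | succ n ih => rw [pow_succ_apply, ih, map_smul, hg, smul_smul, pow_succ]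

theorem supersolution_rate_nonneg [Nonempty X] (hL : Monotone L) {ψ : C(X, ℝ)} {ρ : ℝ}
    (hψ : ∀ x, 0 < ψ x) (hsup : L ψ ≤ ρ • ψ) : 0 ≤ ρ := by
  have h := (map_nonneg_of_monotone hL fun x => (hψ x).le).trans hsup (Classical.arbitrary X)
  exact nonneg_of_mul_nonneg_left (by simpa using h) (hψ (Classical.arbitrary X))

theorem pow_apply_supersolution_le [Nonempty X] (hL : Monotone L) {ψ : C(X, ℝ)} {ρ : ℝ}
    (hψ : ∀ x, 0 < ψ x) (hsup : L ψ ≤ ρ • ψ) (n : ℕ) : (L ^ n) ψ ≤ ρ ^ n • ψ := by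
  have hρ := supersolution_rate_nonneg hL hψ hsup
  induction n with
  | zero => simp
  | succ n ih =>
    calc (L ^ (n + 1)) ψ = L ((L ^ n) ψ) := pow_succ_apply L n ψ
      _ ≤ ρ ^ n • L ψ := by simpa using hL ih
      _ ≤ ρ ^ n • ρ • ψ := smul_le_smul_of_nonneg_left hsup (by positivity)
      _ = ρ ^ (n + 1) • ψ := by rw [smul_smul, pow_succ]

/-- The affine map whose fixed point is the resolvent `(θ - L)⁻¹ 1`; its iterates from `0` are the
partial sums of the Neumann series. -/
noncomputable def resolventStep (L : C(X, ℝ) →L[ℝ] C(X, ℝ)) (θ : ℝ) (f : C(X, ℝ)) : C(X, ℝ) :=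
  θ⁻¹ • (1 + L f)

theorem resolventStep_iterate_succ_sub (L : C(X, ℝ) →L[ℝ] C(X, ℝ)) (θ : ℝ) (n : ℕ) :
    (resolventStep L θ)^[n + 1] 0 - (resolventStep L θ)^[n] 0 = θ⁻¹ ^ (n + 1) • (L ^ n) 1 := by
  induction n with
  | zero => simp [resolventStep]
  | succ n ih =>
    have hsub : ∀ f g, resolventStep L θ f - resolventStep L θ g = θ⁻¹ • L (f - g) := fun f g => by
      rw [resolventStep, resolventStep, ← smul_sub, add_sub_add_left_eq_sub, map_sub]
    have hstep := hsub ((resolventStep L θ)^[n + 1] 0) ((resolventStep L θ)^[n] 0)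
    simp only [← Function.iterate_succ_apply' (resolventStep L θ)] at hstep
    rw [hstep, ih, map_smul, smul_smul, ← pow_succ', pow_succ_apply]

/-- `G` is the value at the constant `1` of the resolvent `(θ - L)⁻¹`, given by its Neumann
series. -/
structure IsResolvent (L : C(X, ℝ) →L[ℝ] C(X, ℝ)) (θ : ℝ) (G : C(X, ℝ)) : Prop where
  nonneg : 0 ≤ G
  smul_eq : θ • G = 1 + L G
  tendsto : Tendsto (fun n => (resolventStep L θ)^[n] 0) atTop (𝓝 G)

theorem IsResolvent.pos {θ : ℝ} {G : C(X, ℝ)} (hG : IsResolvent L θ G) (hL : Monotone L)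
    (hθ : 0 < θ) (x : X) : 0 < G x := by
  have hLG : 0 ≤ L G x := map_nonneg_of_monotone hL hG.nonneg x
  have h : θ * G x = 1 + L G x := congr($hG.smul_eq x)
  exact pos_of_mul_pos_right (by linarith) hθ.le

variable [CompactSpace X]

theorem exists_pos_smul_one_le {ψ : C(X, ℝ)} (hψ : ∀ x, 0 < ψ x) :
    ∃ m : ℝ, 0 < m ∧ m • (1 : C(X, ℝ)) ≤ ψ := by
  obtain ⟨m, hm, hle⟩ := isCompact_univ.exists_forall_le' ψ.continuous.continuousOn
    fun x _ => hψ x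
  exact ⟨m, hm, fun x => by simpa using hle x trivial⟩

theorem le_norm_smul_one (f : C(X, ℝ)) : f ≤ ‖f‖ • 1 := fun x => by
  simpa using (le_abs_self _).trans (f.norm_coe_le_norm x)

/-- The Perron root of a positive operator on `C(X, ℝ)` in its Collatz–Wielandt form: the infimum
of the rates `θ` of strictly positive supersolutions `L ψ ≤ θ • ψ`. -/
noncomputable def perronRoot (L : C(X, ℝ) →L[ℝ] C(X, ℝ)) : ℝ :=
  sInf {θ | ∃ ψ : C(X, ℝ), (∀ x, 0 < ψ x) ∧ L ψ ≤ θ • ψ}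

theorem subsolution_rate_le_supersolution_rate (hL : Monotone L) {φ ψ : C(X, ℝ)} {b θ : ℝ}
    (hφ : ∃ x, 0 < φ x) (hψ : ∀ x, 0 < ψ x) (hsub : b • φ ≤ L φ) (hsup : L ψ ≤ θ • ψ) :
    b ≤ θ := by
  obtain ⟨x₁, hx₁⟩ := hφ
  have hcont : ContinuousOn (fun x => φ x / ψ x) Set.univ :=
    (φ.continuous.div ψ.continuous fun x => (hψ x).ne').continuousOn
  obtain ⟨x₀, -, hmax⟩ := isCompact_univ.exists_isMaxOn ⟨x₁, trivial⟩ hcont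
  set c := φ x₀ / ψ x₀
  have hc : 0 < c := (div_pos hx₁ (hψ x₁)).trans_le (hmax trivial)
  have hφ_eq : φ x₀ = c * ψ x₀ := (div_mul_cancel₀ _ (hψ x₀).ne').symm
  have hφ_le : φ ≤ c • ψ := fun x => (div_le_iff₀ (hψ x)).1 (hmax (Set.mem_univ x))
  have hLφ : L φ x₀ ≤ c * L ψ x₀ := by simpa using hL hφ_le x₀
  have key : b * (c * ψ x₀) ≤ θ * (c * ψ x₀) :=
    calc b * (c * ψ x₀) = (b • φ) x₀ := by simp [hφ_eq]
      _ ≤ c * L ψ x₀ := (hsub x₀).trans hLφ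
      _ ≤ c * (θ * ψ x₀) := by simpa [hc] using hsup x₀
      _ = θ * (c * ψ x₀) := by ring
  exact le_of_mul_le_mul_right key (mul_pos hc (hψ x₀))

theorem nonempty_supersolution_rates (L : C(X, ℝ) →L[ℝ] C(X, ℝ)) :
    {θ : ℝ | ∃ ψ : C(X, ℝ), (∀ x, 0 < ψ x) ∧ L ψ ≤ θ • ψ}.Nonempty :=
  ⟨‖L 1‖, 1, fun _ => one_pos, le_norm_smul_one _⟩

theorem exists_supersolution_of_perronRoot_lt {θ : ℝ} (hθ : perronRoot L < θ) :
    ∃ ρ < θ, ∃ ψ : C(X, ℝ), (∀ x, 0 < ψ x) ∧ L ψ ≤ ρ • ψ := by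
  obtain ⟨ρ, hρ, hlt⟩ := exists_lt_of_csInf_lt (nonempty_supersolution_rates L) hθ
  exact ⟨ρ, hlt, hρ⟩

theorem le_perronRoot (hL : Monotone L) {φ : C(X, ℝ)} {b : ℝ}
    (hφ : ∃ x, 0 < φ x) (hsub : b • φ ≤ L φ) : b ≤ perronRoot L :=
  le_csInf (nonempty_supersolution_rates L) fun _ ⟨_, hψ, hsup⟩ =>
    subsolution_rate_le_supersolution_rate hL hφ hψ hsub hsup

variable [Nonempty X]

theorem perronRoot_le (hL : Monotone L) {ψ : C(X, ℝ)} {θ : ℝ}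
    (hψ : ∀ x, 0 < ψ x) (hsup : L ψ ≤ θ • ψ) : perronRoot L ≤ θ := by
  have hsub : (0 : ℝ) • (1 : C(X, ℝ)) ≤ L 1 := by
    simpa using map_nonneg_of_monotone hL zero_le_one
  exact csInf_le ⟨0, fun _ ⟨_, hψ', hsup'⟩ => subsolution_rate_le_supersolution_rate hL
    ⟨Classical.arbitrary X, one_pos⟩ hψ' hsub hsup'⟩ ⟨ψ, hψ, hsup⟩

theorem perronRoot_eq (hL : Monotone L) {ψ : C(X, ℝ)} {θ : ℝ}
    (hψ : ∀ x, 0 < ψ x) (hθ : L ψ = θ • ψ) : perronRoot L = θ :=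
  (perronRoot_le hL hψ hθ.le).antisymm (le_perronRoot hL ⟨Classical.arbitrary X, hψ _⟩ hθ.ge)

theorem perronRoot_pos (hL : Monotone L) (hL1 : ∀ x, 0 < L 1 x) : 0 < perronRoot L := by
  obtain ⟨m, hm, hle⟩ := exists_pos_smul_one_le hL1
  exact hm.trans_le (le_perronRoot hL ⟨Classical.arbitrary X, one_pos⟩ hle)

theorem perronRoot_le_mul (hL : Monotone L) {c : ℝ} (hc : 0 < c)
    (hle : ∀ f : C(X, ℝ), 0 ≤ f → L f ≤ c • L' f) : perronRoot L ≤ c * perronRoot L' := by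
  rw [← div_le_iff₀' hc]
  refine le_csInf (nonempty_supersolution_rates L') ?_
  rintro θ ⟨ψ, hψ, hsup⟩
  rw [div_le_iff₀' hc]
  refine perronRoot_le hL hψ ((hle ψ fun x => (hψ x).le).trans ?_)
  simpa [mul_smul] using smul_le_smul_of_nonneg_left hsup hc.le

theorem abs_perronRoot_sub_le (hL : Monotone L) {ψ : C(X, ℝ)} {b r : ℝ} (hψ : ∀ x, 0 < ψ x)
    (h : ∀ x, |L ψ x - b * ψ x| ≤ r * ψ x) : |perronRoot L - b| ≤ r := by
  have hsub : (b - r) • ψ ≤ L ψ := ContinuousMap.le_def.2 fun x => by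
    have := (abs_le.1 (h x)).1
    simp only [ContinuousMap.smul_apply, smul_eq_mul]
    linarith
  have hsup : L ψ ≤ (b + r) • ψ := ContinuousMap.le_def.2 fun x => by
    have := (abs_le.1 (h x)).2
    simp only [ContinuousMap.smul_apply, smul_eq_mul]
    linarith
  have hlow := le_perronRoot hL ⟨Classical.arbitrary X, hψ _⟩ hsub
  have hup := perronRoot_le hL hψ hsup
  exact abs_le.2 ⟨by linarith, by linarith⟩

theorem exists_norm_pow_apply_one_le (hL : Monotone L) {ψ : C(X, ℝ)} {ρ : ℝ}
    (hψ : ∀ x, 0 < ψ x) (hsup : L ψ ≤ ρ • ψ) : ∃ M : ℝ, ∀ n, ‖(L ^ n) 1‖ ≤ M * ρ ^ n := by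
  have hρ := supersolution_rate_nonneg hL hψ hsup
  obtain ⟨m, hm, hle⟩ := exists_pos_smul_one_le hψ
  refine ⟨‖ψ‖ / m, fun n => (ContinuousMap.norm_le _ (by positivity)).2 fun x => ?_⟩
  have h0 : 0 ≤ (L ^ n) 1 x := map_nonneg_of_monotone (monotone_pow hL n) zero_le_one x
  have h : m * (L ^ n) 1 x ≤ ρ ^ n * ‖ψ‖ :=
    calc m * (L ^ n) 1 x = (L ^ n) (m • 1) x := by simp
      _ ≤ (L ^ n) ψ x := monotone_pow hL n hle x
      _ ≤ ρ ^ n * ψ x := pow_apply_supersolution_le hL hψ hsup n x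
      _ ≤ ρ ^ n * ‖ψ‖ := by gcongr; exact (le_abs_self _).trans (ψ.norm_coe_le_norm x)
  rw [Real.norm_of_nonneg h0, div_mul_eq_mul_div, le_div_iff₀' hm]
  linarith

theorem exists_tendsto_resolventStep_iterate (hL : Monotone L) {θ : ℝ} (hθ : perronRoot L < θ) :
    ∃ G : C(X, ℝ), Tendsto (fun n => (resolventStep L θ)^[n] 0) atTop (𝓝 G) := by
  obtain ⟨ρ, hρθ, ψ, hψ, hsup⟩ := exists_supersolution_of_perronRoot_lt hθ
  have hρ := supersolution_rate_nonneg hL hψ hsup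
  have hθ_pos : 0 < θ := hρ.trans_lt hρθ
  obtain ⟨M, hM⟩ := exists_norm_pow_apply_one_le hL hψ hsup
  refine cauchySeq_tendsto_of_complete (cauchySeq_of_le_geometric (ρ / θ) (θ⁻¹ * M)
    ((div_lt_one hθ_pos).2 hρθ) fun n => ?_)
  rw [dist_comm, dist_eq_norm, resolventStep_iterate_succ_sub, norm_smul, norm_pow, norm_inv,
    Real.norm_of_nonneg hθ_pos.le]
  calc θ⁻¹ ^ (n + 1) * ‖(L ^ n) 1‖ ≤ θ⁻¹ ^ (n + 1) * (M * ρ ^ n) := by gcongr; exact hM n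
    _ = θ⁻¹ * M * (ρ / θ) ^ n := by rw [div_eq_mul_inv, mul_pow]; ring

theorem exists_isResolvent (hL : Monotone L) {θ : ℝ} (hθ_pos : 0 < θ) (hθ : perronRoot L < θ) :
    ∃ G, IsResolvent L θ G := by
  obtain ⟨G, hG⟩ := exists_tendsto_resolventStep_iterate hL hθ
  have hcont : Continuous (resolventStep L θ) := by unfold resolventStep; fun_prop
  have hfix : θ⁻¹ • (1 + L G) = G := isFixedPt_of_tendsto_iterate hG hcont.continuousAt
  have hnonneg : ∀ n, 0 ≤ (resolventStep L θ)^[n] 0 := by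
    intro n
    induction n with
    | zero => rfl
    | succ n ih =>
      rw [Function.iterate_succ_apply']
      exact smul_nonneg (by positivity) (add_nonneg zero_le_one (map_nonneg_of_monotone hL ih))
  refine ⟨G, ContinuousMap.le_def.2 fun x => ?_, ?_, hG⟩
  · exact ge_of_tendsto' ((ContinuousMap.evalCLM ℝ x).continuous.tendsto G |>.comp hG)
      fun n => hnonneg n x
  · rw [← hfix, smul_inv_smul₀ hθ_pos.ne', hfix]

/-- `G` is a supersolution at rate `θ - ‖G‖⁻¹`. -/
theorem IsResolvent.inv_norm_le {θ : ℝ} {G : C(X, ℝ)} (hG : IsResolvent L θ G) (hL : Monotone L)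
    (hθ : 0 < θ) : ‖G‖⁻¹ ≤ θ - perronRoot L := by
  have hG_pos := hG.pos hL hθ
  have hnorm : 0 < ‖G‖ := (hG_pos (Classical.arbitrary X)).trans_le
    ((le_abs_self _).trans (G.norm_coe_le_norm _))
  have hsup : L G ≤ (θ - ‖G‖⁻¹) • G := by
    have hLG : L G = θ • G - 1 := by rw [hG.smul_eq, add_sub_cancel_left]
    have hinv : ‖G‖⁻¹ • G ≤ 1 := by
      simpa [hnorm.ne', smul_smul] using
        smul_le_smul_of_nonneg_left (le_norm_smul_one G) (inv_nonneg.2 hnorm.le)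
    rw [hLG, sub_smul]
    exact sub_le_sub_left hinv _
  linarith [perronRoot_le hL hG_pos hsup]

end PerronRoot

section Lipschitz

variable (X : Type*) [PseudoMetricSpace X]

/-- The space of Lipschitz functions, as a subspace of the continuous ones. -/
def lipschitzSubmodule : Submodule ℝ C(X, ℝ) where
  carrier := {f | ∃ K, LipschitzWith K f}
  zero_mem' := ⟨0, LipschitzWith.const 0⟩
  add_mem' := fun ⟨_, hf⟩ ⟨_, hg⟩ => ⟨_, hf.add hg⟩
  smul_mem' := fun c _ ⟨_, hf⟩ => ⟨_, (lipschitzWith_smul c).comp hf⟩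

variable {X} [CompactSpace X]

theorem exists_lipschitzWith_comp {f : C(X, ℝ)} (hf : f ∈ lipschitzSubmodule X) {h : ℝ → ℝ}
    {s : Set ℝ} (hs : Set.range f ⊆ s) (hh : LocallyLipschitzOn s h) :
    ∃ K, LipschitzWith K (h ∘ f) := by
  obtain ⟨K, hK⟩ := hf
  obtain ⟨K', hK'⟩ :=
    (hh.mono hs).exists_lipschitzOnWith_of_compact (isCompact_range f.continuous)
  refine ⟨K' * K, lipschitzOnWith_univ.1 ?_⟩
  exact hK'.comp hK.lipschitzOnWith fun x _ => Set.mem_range_self x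

theorem exp_apply {X : Type*} [TopologicalSpace X] [CompactSpace X] (V : C(X, ℝ)) (x : X) :
    NormedSpace.exp V x = Real.exp (V x) := by
  rw [Real.exp_eq_exp_ℝ]
  exact NormedSpace.map_exp (ContinuousMap.evalAlgHom ℝ ℝ x)
    (ContinuousMap.evalCLM ℝ x).continuous V

theorem exp_mem_lipschitzSubmodule {V : C(X, ℝ)} (hV : V ∈ lipschitzSubmodule X) :
    NormedSpace.exp V ∈ lipschitzSubmodule X := by
  have h := exists_lipschitzWith_comp hV (Set.subset_univ _)
    Real.contDiff_exp.locallyLipschitz.locallyLipschitzOn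
  rwa [show Real.exp ∘ V = NormedSpace.exp V from funext fun x => (exp_apply V x).symm] at h

theorem exists_exp_eq {g : C(X, ℝ)} (hg : g ∈ lipschitzSubmodule X) (hpos : ∀ x, 0 < g x) :
    ∃ G ∈ lipschitzSubmodule X, NormedSpace.exp G = g := by
  refine ⟨⟨fun x => Real.log (g x), g.continuous.log fun x => (hpos x).ne'⟩, ?_, ?_⟩
  · have hlog : ContDiffOn ℝ 1 Real.log (Set.Ioi 0) :=
      Real.contDiffOn_log.mono fun x (hx : 0 < x) => hx.ne'
    exact exists_lipschitzWith_comp hg (Set.range_subset_iff.2 hpos)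
      (hlog.locallyLipschitzOn (convex_Ioi 0))
  · ext x
    rw [exp_apply]
    exact Real.exp_log (hpos x)

end Lipschitz

section LasotaYorke

variable {X : Type*} [PseudoMetricSpace X]

/-- `w` bounds the difference quotients of `f` based at each point; a substitute for
`|∇f| ≤ w`. -/
def HasGradientBound (f w : C(X, ℝ)) : Prop :=
  ∀ y y', |f y - f y'| ≤ dist y y' * w y

theorem HasGradientBound.mono {f w w' : C(X, ℝ)} (h : HasGradientBound f w) (hw : w ≤ w') :
    HasGradientBound f w' := fun y y' =>
  (h y y').trans (mul_le_mul_of_nonneg_left (hw y) dist_nonneg)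

theorem hasGradientBound_of_lipschitzWith {f : C(X, ℝ)} {K : ℝ≥0} (hf : LipschitzWith K f) :
    HasGradientBound f ((K : ℝ) • 1) := fun y y' => by
  simpa [Real.dist_eq, mul_comm] using hf.dist_le_mul y y'

theorem HasGradientBound.lipschitzWith {f w : C(X, ℝ)} {K : ℝ≥0} (h : HasGradientBound f w)
    (hw : w ≤ (K : ℝ) • 1) : LipschitzWith K f :=
  LipschitzWith.of_dist_le_mul fun y y' => by
    simpa [Real.dist_eq, mul_comm] using h.mono hw y y'

variable [CompactSpace X]

theorem HasGradientBound.mul {f w u : C(X, ℝ)} (hf : HasGradientBound f w) (hu : 0 ≤ u) {K : ℝ≥0}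
    (hK : LipschitzWith K u) : HasGradientBound (u * f) (u * w + (K * ‖f‖) • 1) := fun y y' => by
  have huy : 0 ≤ u y := hu y
  calc |(u * f) y - (u * f) y'| = |u y * (f y - f y') + (u y - u y') * f y'| := by
        simp only [ContinuousMap.mul_apply]; ring_nf
    _ ≤ |u y * (f y - f y')| + |(u y - u y') * f y'| := abs_add_le _ _
    _ = u y * |f y - f y'| + |u y - u y'| * |f y'| := by rw [abs_mul, abs_mul, abs_of_nonneg huy]
    _ ≤ u y * (dist y y' * w y) + K * dist y y' * ‖f‖ := by
        gcongr
        · exact hf y y'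
        · exact hK.dist_le_mul y y'
        · exact f.norm_coe_le_norm y'
    _ = dist y y' * (u * w + (K * ‖f‖) • 1) y := by
        simp only [ContinuousMap.add_apply, ContinuousMap.mul_apply, ContinuousMap.smul_apply,
          ContinuousMap.one_apply, smul_eq_mul]
        ring

/-- A pointwise Lasota–Yorke inequality `|∇(L f)| ≤ q • L |∇f| + B ‖f‖`. -/
def LasotaYorke (L : C(X, ℝ) →L[ℝ] C(X, ℝ)) (q B : ℝ) : Prop :=
  ∀ f w : C(X, ℝ), 0 ≤ w → HasGradientBound f w →
    HasGradientBound (L f) (q • L w + (B * ‖f‖) • 1)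

variable {L : C(X, ℝ) →L[ℝ] C(X, ℝ)} {q B : ℝ}

theorem LasotaYorke.mul_comp (hL : LasotaYorke L q B) {v : C(X, ℝ)} (hv : 0 ≤ v)
    {K : ℝ≥0} (hK : LipschitzWith K v) (hB : 0 ≤ B) :
    LasotaYorke (ContinuousLinearMap.mul ℝ C(X, ℝ) v ∘L L) q (‖v‖ * B + K * ‖L‖) := by
  intro f w hw hf
  refine ((hL f w hw hf).mul hv hK).mono (ContinuousMap.le_def.2 fun x => ?_)
  have hvx : v x * (B * ‖f‖) ≤ ‖v‖ * (B * ‖f‖) := by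
    gcongr
    exact (le_abs_self _).trans (v.norm_coe_le_norm x)
  have hLf : K * ‖L f‖ ≤ K * (‖L‖ * ‖f‖) := by gcongr; exact L.le_opNorm f
  simp only [ContinuousMap.add_apply, ContinuousMap.mul_apply, ContinuousMap.smul_apply,
    ContinuousMap.one_apply, smul_eq_mul, ContinuousLinearMap.comp_apply,
    ContinuousLinearMap.mul_apply']
  linarith

theorem LasotaYorke.comp_mul (hL : LasotaYorke L q B) (hq : 0 ≤ q) (hB : 0 ≤ B)
    {u : C(X, ℝ)} (hu : 0 ≤ u) {K : ℝ≥0} (hK : LipschitzWith K u) :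
    LasotaYorke (L ∘L ContinuousLinearMap.mul ℝ C(X, ℝ) u) q (q * K * ‖L 1‖ + B * ‖u‖) := by
  intro f w hw hf
  have hw' : 0 ≤ u * w + (K * ‖f‖) • 1 :=
    add_nonneg (mul_nonneg hu hw) (smul_nonneg (by positivity) zero_le_one)
  refine (hL _ _ hw' (hf.mul hu hK)).mono (ContinuousMap.le_def.2 fun x => ?_)
  have hL1 : q * (K * ‖f‖) * L 1 x ≤ q * (K * ‖f‖) * ‖L 1‖ := by
    gcongr
    exact (le_abs_self _).trans ((L 1).norm_coe_le_norm x)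
  have huf : B * ‖u * f‖ ≤ B * (‖u‖ * ‖f‖) := by gcongr; exact norm_mul_le u f
  simp only [ContinuousMap.add_apply, ContinuousMap.smul_apply, map_add, map_smul,
    ContinuousMap.one_apply, smul_eq_mul, ContinuousLinearMap.comp_apply,
    ContinuousLinearMap.mul_apply']
  linarith

end LasotaYorke

section Regular

variable {X : Type*} [PseudoMetricSpace X] [CompactSpace X] {T : C(X, ℝ) →L[ℝ] C(X, ℝ)}

/-- Uniform irreducibility in functional form: `Lᴺ f` is bounded below, uniformly in the
position of the ball, as soon as `f ≥ 0` is bounded below on some `ε`-ball. -/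
def UniformlyIrreducible (L : C(X, ℝ) →L[ℝ] C(X, ℝ)) : Prop :=
  ∀ ε > 0, ∃ (N : ℕ) (p : ℝ), 0 < p ∧ ∀ f : C(X, ℝ), 0 ≤ f → ∀ a ≥ 0, ∀ y,
    (∀ z ∈ Metric.ball y ε, a ≤ f z) → ∀ x, p * a ≤ (L ^ N) f x

theorem UniformlyIrreducible.of_smul_le {L L' : C(X, ℝ) →L[ℝ] C(X, ℝ)}
    (hL : UniformlyIrreducible L) (hmono : Monotone L) (hmono' : Monotone L') {c : ℝ} (hc : 0 < c)
    (hle : ∀ f : C(X, ℝ), 0 ≤ f → c • L f ≤ L' f) : UniformlyIrreducible L' := by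
  have hpow : ∀ n, ∀ f : C(X, ℝ), 0 ≤ f → c ^ n • (L ^ n) f ≤ (L' ^ n) f := by
    intro n f hf
    induction n with
    | zero => simp
    | succ n ih =>
      calc c ^ (n + 1) • (L ^ (n + 1)) f = c • L (c ^ n • (L ^ n) f) := by
            rw [pow_succ_apply, map_smul, smul_smul, pow_succ']
        _ ≤ L' (c ^ n • (L ^ n) f) :=
            hle _ (smul_nonneg (by positivity) (map_nonneg_of_monotone (monotone_pow hmono n) hf))
        _ ≤ (L' ^ (n + 1)) f := by rw [pow_succ_apply]; exact hmono' ih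
  intro ε hε
  obtain ⟨N, p, hp, h⟩ := hL ε hε
  refine ⟨N, c ^ N * p, by positivity, fun f hf a ha y hfy x => ?_⟩
  calc c ^ N * p * a = c ^ N * (p * a) := mul_assoc _ _ _
    _ ≤ c ^ N * (L ^ N) f x := by gcongr; exact h f hf a ha y hfy x
    _ ≤ (L' ^ N) f x := hpow N f hf x

/-- The positive operators on `C(X, ℝ)` for which a Perron–Frobenius theorem holds. -/
structure IsRegularPositive (L : C(X, ℝ) →L[ℝ] C(X, ℝ)) : Prop where
  monotone : Monotone L
  apply_one_pos : ∀ x, 0 < L 1 x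
  lasotaYorke : ∃ q B, 0 < q ∧ q < 1 ∧ 0 ≤ B ∧ LasotaYorke L q B
  irreducible : UniformlyIrreducible L

/-- The operator `f ↦ exp U * T (exp V * f)`: the Feynman–Kac operators are of this form, and so
are their Doob transforms up to a scalar. -/
noncomputable def expWeighted (T : C(X, ℝ) →L[ℝ] C(X, ℝ)) (U V : C(X, ℝ)) :
    C(X, ℝ) →L[ℝ] C(X, ℝ) :=
  ContinuousLinearMap.mul ℝ C(X, ℝ) (NormedSpace.exp U) ∘L T ∘L
    ContinuousLinearMap.mul ℝ C(X, ℝ) (NormedSpace.exp V)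

theorem expWeighted_apply (T : C(X, ℝ) →L[ℝ] C(X, ℝ)) (U V f : C(X, ℝ)) (x : X) :
    expWeighted T U V f x = Real.exp (U x) * T (NormedSpace.exp V * f) x := by
  simp [expWeighted, exp_apply]

theorem exp_nonneg (V : C(X, ℝ)) : 0 ≤ NormedSpace.exp V :=
  ContinuousMap.le_def.2 fun x => (exp_apply V x).symm ▸ (Real.exp_pos _).le

theorem monotone_expWeighted (hT : Monotone T) (U V : C(X, ℝ)) : Monotone (expWeighted T U V) :=
  fun _ _ hfg => mul_le_mul_of_nonneg_left
    (hT (mul_le_mul_of_nonneg_left hfg (exp_nonneg V))) (exp_nonneg U)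

theorem exp_neg_norm_le_exp (V : C(X, ℝ)) (x : X) : Real.exp (-‖V‖) ≤ Real.exp (V x) :=
  Real.exp_le_exp.2 (neg_le_of_abs_le (V.norm_coe_le_norm x))

theorem smul_le_expWeighted (hT : Monotone T) (U V : C(X, ℝ)) {f : C(X, ℝ)} (hf : 0 ≤ f) :
    (Real.exp (-‖U‖) * Real.exp (-‖V‖)) • T f ≤ expWeighted T U V f := by
  have hVf : Real.exp (-‖V‖) • f ≤ NormedSpace.exp V * f := ContinuousMap.le_def.2 fun x => by
    rw [ContinuousMap.mul_apply, exp_apply]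
    exact mul_le_mul_of_nonneg_right (exp_neg_norm_le_exp V x) (hf x)
  have hTf : 0 ≤ T f := map_nonneg_of_monotone hT hf
  refine ContinuousMap.le_def.2 fun x => ?_
  have hTVf : Real.exp (-‖V‖) * T f x ≤ T (NormedSpace.exp V * f) x :=
    ContinuousMap.le_def.1 ((map_smul T _ f).symm.trans_le (hT hVf)) x
  rw [expWeighted_apply, ContinuousMap.smul_apply, smul_eq_mul, mul_assoc]
  exact mul_le_mul (exp_neg_norm_le_exp U x) hTVf
    (mul_nonneg (Real.exp_pos _).le (hTf x)) (Real.exp_pos _).le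

theorem isRegularPositive_expWeighted (hT : IsRegularPositive T) {U V : C(X, ℝ)}
    (hU : U ∈ lipschitzSubmodule X) (hV : V ∈ lipschitzSubmodule X) :
    IsRegularPositive (expWeighted T U V) := by
  obtain ⟨q, B, hq0, hq1, hB, hLY⟩ := hT.lasotaYorke
  obtain ⟨_, hexpU⟩ := exp_mem_lipschitzSubmodule hU
  obtain ⟨_, hexpV⟩ := exp_mem_lipschitzSubmodule hV
  have hc : 0 < Real.exp (-‖U‖) * Real.exp (-‖V‖) := by positivity
  have hmono := monotone_expWeighted hT.monotone U V
  exact {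
    monotone := hmono
    apply_one_pos := fun x => (mul_pos hc (hT.apply_one_pos x)).trans_le
      (smul_le_expWeighted hT.monotone U V zero_le_one x)
    lasotaYorke := ⟨q, _, hq0, hq1, by positivity,
      (hLY.comp_mul hq0.le hB (exp_nonneg V) hexpV).mul_comp (exp_nonneg U) hexpU (by positivity)⟩
    irreducible := hT.irreducible.of_smul_le hT.monotone hmono hc
      fun f hf => smul_le_expWeighted hT.monotone U V hf }

end Regular

section PerronEigenfunction

variable {X : Type*} [PseudoMetricSpace X] {L : C(X, ℝ) →L[ℝ] C(X, ℝ)}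

theorem isClosed_setOf_hasGradientBound (w : C(X, ℝ)) : IsClosed {f | HasGradientBound f w} := by
  simp only [HasGradientBound, Set.ofPred_forall]
  exact isClosed_iInter fun y => isClosed_iInter fun y' => isClosed_le (by fun_prop) (by fun_prop)

theorem hasGradientBound_resolventStep {f w : C(X, ℝ)} {θ : ℝ} (hθ : 0 < θ)
    (h : HasGradientBound (L f) (θ • w)) : HasGradientBound (resolventStep L θ f) w := by
  intro y y'
  have hdiff : resolventStep L θ f y - resolventStep L θ f y' =
      θ⁻¹ * (L f y - L f y') := by
    simp only [resolventStep, ContinuousMap.smul_apply, ContinuousMap.add_apply,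
      ContinuousMap.one_apply, smul_eq_mul]
    ring
  have hLf : |L f y - L f y'| ≤ dist y y' * (θ * w y) := h y y'
  rw [hdiff, abs_mul, abs_of_pos (inv_pos.2 hθ), inv_mul_le_iff₀ hθ]
  linarith

variable [CompactSpace X]

theorem isCompact_setOf_lipschitzWith_norm_le (K : ℝ≥0) {R : ℝ} (hR : 0 ≤ R) :
    IsCompact {f : C(X, ℝ) | LipschitzWith K f ∧ ‖f‖ ≤ R} := by
  apply ArzelaAscoli.isCompact_of_equicontinuous
  · have himage : ContinuousMap.toFun '' {f : C(X, ℝ) | LipschitzWith K f ∧ ‖f‖ ≤ R} =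
        (Set.univ.pi fun _ => Metric.closedBall (0 : ℝ) R) ∩ {f | LipschitzWith K f} := by
      ext f
      simp only [Set.mem_image, Set.mem_inter_iff, Set.mem_univ_pi, mem_closedBall_zero_iff]
      constructor
      · rintro ⟨g, ⟨hg, hgR⟩, rfl⟩
        exact ⟨(ContinuousMap.norm_le g hR).1 hgR, hg⟩
      · rintro ⟨hfR, hf⟩
        exact ⟨⟨f, hf.continuous⟩, ⟨hf, (ContinuousMap.norm_le _ hR).2 hfR⟩, rfl⟩
    rw [himage]
    exact (isCompact_univ_pi fun _ => isCompact_closedBall 0 _).inter_right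
      (isClosed_setOfPred_lipschitzWith K)
  · exact (LipschitzWith.uniformEquicontinuous _ K fun f => f.2.1).equicontinuous

theorem norm_le_norm_of_nonneg {f g : C(X, ℝ)} (hf : 0 ≤ f) (hfg : f ≤ g) : ‖f‖ ≤ ‖g‖ :=
  (ContinuousMap.norm_le _ (norm_nonneg g)).2 fun x => by
    have hfx : 0 ≤ f x := hf x
    rw [Real.norm_of_nonneg hfx]
    exact (hfg x).trans ((le_abs_self _).trans (g.norm_coe_le_norm x))

theorem UniformlyIrreducible.eigenfunction_pos (hL : UniformlyIrreducible L) {g : C(X, ℝ)} {θ : ℝ}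
    (hg0 : 0 ≤ g) (hg : g ≠ 0) (hθ : 0 ≤ θ) (hLg : L g = θ • g) (x : X) : 0 < g x := by
  obtain ⟨y, hy⟩ : ∃ y, g y ≠ 0 := by
    contrapose! hg
    exact ContinuousMap.ext hg
  have hy_pos : 0 < g y := (hg0 y).lt_of_ne' hy
  obtain ⟨ε, hε, hball⟩ := Metric.mem_nhds_iff.1
    (g.continuous.continuousAt.preimage_mem_nhds (Ici_mem_nhds (half_lt_self hy_pos)))
  obtain ⟨N, p, hp, h⟩ := hL ε hε
  have := h g hg0 (g y / 2) (by positivity) y (fun z hz => hball hz) x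
  rw [pow_apply_of_apply_eq_smul hLg] at this
  exact pos_of_mul_pos_right ((by positivity : 0 < p * (g y / 2)).trans_le this) (by positivity)

variable [Nonempty X]

/-- With `q L H + q = (perronRoot L) H`, the function `w = (B ‖G‖ / q) H` is a gradient bound for
every partial sum of the Neumann series of `G`. -/
theorem IsResolvent.hasGradientBound (hL : Monotone L) {q B θ : ℝ} (hq : 0 < q)
    (hB : 0 ≤ B) (hLY : LasotaYorke L q B) (hθ : perronRoot L ≤ θ) (hθ0 : 0 < θ) {G H : C(X, ℝ)}
    (hG : IsResolvent L θ G) (hH : IsResolvent L (perronRoot L / q) H) :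
    HasGradientBound G ((B * ‖G‖ / q) • H) := by
  set w := (B * ‖G‖ / q) • H with hw_def
  have hw : 0 ≤ w := smul_nonneg (by positivity) hH.nonneg
  have hLw : q • L w + (B * ‖G‖) • 1 ≤ θ • w :=
    calc q • L w + (B * ‖G‖) • 1 = (B * ‖G‖) • (1 + L H) := by
          rw [hw_def, map_smul, smul_smul, mul_div_cancel₀ _ hq.ne', smul_add, add_comm]
      _ = perronRoot L • w := by rw [← hH.smul_eq, smul_smul, hw_def, smul_smul]; ring_nf
      _ ≤ θ • w := smul_le_smul_of_nonneg_right hθ hw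
  have hstep : ∀ f ∈ Set.Icc 0 G, HasGradientBound f w →
      resolventStep L θ f ∈ Set.Icc 0 G ∧ HasGradientBound (resolventStep L θ f) w := by
    rintro f ⟨hf0, hfG⟩ hfw
    have hnorm : B * ‖f‖ ≤ B * ‖G‖ := by gcongr; exact norm_le_norm_of_nonneg hf0 hfG
    refine ⟨⟨?_, ?_⟩, ?_⟩
    · exact smul_nonneg (by positivity) (add_nonneg zero_le_one (map_nonneg_of_monotone hL hf0))
    · rw [resolventStep, inv_smul_le_iff_of_pos hθ0, hG.smul_eq]
      exact add_le_add_right (hL hfG) 1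
    · have hLf : HasGradientBound (L f) (θ • w) := (hLY f w hw hfw).mono
        ((add_le_add_right (smul_le_smul_of_nonneg_right hnorm zero_le_one) _).trans hLw)
      exact hasGradientBound_resolventStep hθ0 hLf
  have hiter : ∀ n, (resolventStep L θ)^[n] 0 ∈ Set.Icc 0 G ∧
      HasGradientBound ((resolventStep L θ)^[n] 0) w := by
    intro n
    induction n with
    | zero => exact ⟨⟨le_rfl, hG.nonneg⟩, fun y y' => by simpa using mul_nonneg dist_nonneg (hw y)⟩
    | succ n ih =>
      rw [Function.iterate_succ_apply']
      exact hstep _ ih.1 ih.2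
  exact (isClosed_setOf_hasGradientBound w).mem_of_tendsto hG.tendsto
    (Eventually.of_forall fun n => (hiter n).2)

/-- The normalized resolvents `G / ‖G‖`; their Lipschitz constant stays bounded as `θ` decreases to
the Perron root. -/
theorem exists_approx_eigenfunction (hL : IsRegularPositive L) :
    ∃ K : ℝ≥0, ∀ θ > perronRoot L, ∃ u : C(X, ℝ), 0 ≤ u ∧ ‖u‖ = 1 ∧ LipschitzWith K u ∧
      ‖L u - θ • u‖ ≤ θ - perronRoot L := by
  obtain ⟨q, B, hq0, hq1, hB, hLY⟩ := hL.lasotaYorke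
  have hroot := perronRoot_pos hL.monotone hL.apply_one_pos
  obtain ⟨H, hH⟩ := exists_isResolvent hL.monotone (div_pos hroot hq0)
    ((lt_div_iff₀ hq0).2 (mul_lt_of_lt_one_right hroot hq1))
  refine ⟨(B * ‖H‖ / q).toNNReal, fun θ hθ => ?_⟩
  have hθ0 := hroot.trans hθ
  obtain ⟨G, hG⟩ := exists_isResolvent hL.monotone hθ0 hθ
  have hgap := hG.inv_norm_le hL.monotone hθ0
  have hG_norm : 0 < ‖G‖ := norm_pos_iff.2 fun h => by
    simpa [h] using hG.pos hL.monotone hθ0 (Classical.arbitrary X)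
  have hgrad := hG.hasGradientBound hL.monotone hq0 hB hLY hθ.le hθ0 hH
  refine ⟨‖G‖⁻¹ • G, smul_nonneg (by positivity) hG.nonneg, ?_, ?_, ?_⟩
  · rw [norm_smul, norm_inv, norm_norm, inv_mul_cancel₀ hG_norm.ne']
  · have hbound : (B * ‖G‖ / q) • H ≤ (B * ‖H‖ / q * ‖G‖) • 1 :=
      (smul_le_smul_of_nonneg_left (le_norm_smul_one H) (by positivity)).trans_eq (by
        rw [smul_smul]; ring_nf)
    refine LipschitzWith.of_dist_le_mul fun y y' => ?_
    have hy : |G y - G y'| ≤ dist y y' * (B * ‖H‖ / q * ‖G‖) := by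
      simpa using hgrad.mono hbound y y'
    rw [Real.coe_toNNReal _ (by positivity), ContinuousMap.smul_apply, ContinuousMap.smul_apply,
      dist_smul₀, norm_inv, norm_norm, inv_mul_le_iff₀ hG_norm, Real.dist_eq]
    linarith
  · have h : L (‖G‖⁻¹ • G) - θ • ‖G‖⁻¹ • G = -(‖G‖⁻¹ • 1) := by
      rw [map_smul, smul_comm θ, hG.smul_eq, ← smul_sub, sub_add_cancel_right, smul_neg]
    rwa [h, norm_neg, norm_smul, norm_one, mul_one, norm_inv, norm_norm]

theorem exists_lipschitzWith_eigenfunction (hL : IsRegularPositive L) :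
    ∃ (K : ℝ≥0) (g : C(X, ℝ)), 0 ≤ g ∧ ‖g‖ = 1 ∧ LipschitzWith K g ∧ L g = perronRoot L • g := by
  obtain ⟨K, hK⟩ := exists_approx_eigenfunction hL
  obtain ⟨θ, -, hθ, hθ_lim⟩ := exists_seq_strictAnti_tendsto (perronRoot L)
  choose u hu0 hu1 huK hLu using fun n => hK (θ n) (hθ n)
  obtain ⟨g, ⟨hgK, -⟩, φ, hφ, hg⟩ :=
    (isCompact_setOf_lipschitzWith_norm_le K zero_le_one).tendsto_subseq
      fun n => ⟨huK n, (hu1 n).le⟩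
  have hdefect : Tendsto (fun n => ‖L (u (φ n)) - θ (φ n) • u (φ n)‖) atTop (𝓝 0) := by
    refine squeeze_zero (fun _ => norm_nonneg _) (fun n => hLu (φ n)) ?_
    simpa using ((hθ_lim.comp hφ.tendsto_atTop).sub_const (perronRoot L))
  have hlim : Tendsto (fun n => ‖L (u (φ n)) - θ (φ n) • u (φ n)‖) atTop
      (𝓝 ‖L g - perronRoot L • g‖) :=
    (((L.continuous.tendsto g).comp hg).sub ((hθ_lim.comp hφ.tendsto_atTop).smul hg)).norm
  refine ⟨K, g, ContinuousMap.le_def.2 fun x => ?_, ?_, hgK, ?_⟩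
  · exact ge_of_tendsto' ((ContinuousMap.evalCLM ℝ x).continuous.tendsto g |>.comp hg)
      fun n => hu0 (φ n) x
  · exact tendsto_nhds_unique hg.norm (by simp [hu1])
  · exact sub_eq_zero.1 (norm_eq_zero.1 (tendsto_nhds_unique hlim hdefect))

theorem exists_exp_eigenfunction (hL : IsRegularPositive L) :
    ∃ G ∈ lipschitzSubmodule X, L (NormedSpace.exp G) = perronRoot L • NormedSpace.exp G := by
  obtain ⟨K, g, hg0, hg1, hK, hLg⟩ := exists_lipschitzWith_eigenfunction hL
  have hroot := perronRoot_pos hL.monotone hL.apply_one_pos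
  have hg : g ≠ 0 := norm_ne_zero_iff.1 (hg1 ▸ one_ne_zero)
  obtain ⟨G, hG, rfl⟩ := exists_exp_eq ⟨K, hK⟩
    (hL.irreducible.eigenfunction_pos hg0 hg hroot.le hLg)
  exact ⟨G, hG, hLg⟩

end PerronEigenfunction

section MarkovOperator

variable {X : Type*} [PseudoMetricSpace X] [CompactSpace X] {Q : C(X, ℝ) →L[ℝ] C(X, ℝ)}

theorem pow_apply_one (hQ1 : Q 1 = 1) (n : ℕ) : (Q ^ n) 1 = 1 := by
  simpa using pow_apply_of_apply_eq_smul (θ := 1) (hQ1.trans (one_smul ℝ 1).symm) n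

theorem norm_apply_le_of_apply_one (hQ : Monotone Q) (hQ1 : Q 1 = 1) (f : C(X, ℝ)) :
    ‖Q f‖ ≤ ‖f‖ := by
  have hle : ∀ g : C(X, ℝ), ∀ x, Q g x ≤ ‖g‖ := fun g x => by
    simpa [hQ1] using ContinuousMap.le_def.1 (hQ (le_norm_smul_one g)) x
  refine (ContinuousMap.norm_le _ (norm_nonneg f)).2 fun x => abs_le.2 ⟨?_, hle f x⟩
  have h := hle (-f) x
  rw [map_neg, norm_neg, ContinuousMap.neg_apply] at h
  linarith

theorem LasotaYorke.exists_lipschitzWith_pow {q B : ℝ} (hLY : LasotaYorke Q q B) (hq : q < 1)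
    (hB : 0 ≤ B) (hQ : Monotone Q) (hQ1 : Q 1 = 1) {f : C(X, ℝ)} (hf : f ∈ lipschitzSubmodule X) :
    ∃ K : ℝ≥0, ∀ n, LipschitzWith K ((Q ^ n) f) := by
  obtain ⟨K₀, hK₀⟩ := hf
  have hq' : 0 < 1 - q := sub_pos.2 hq
  set K : ℝ := max K₀ (B * ‖f‖ / (1 - q))
  have hK : 0 ≤ K := K₀.2.trans (le_max_left _ _)
  have hBK : B * ‖f‖ ≤ K * (1 - q) := (div_le_iff₀ hq').1 (le_max_right _ _)
  have hnorm : ∀ n, ‖(Q ^ n) f‖ ≤ ‖f‖ := fun n =>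
    norm_apply_le_of_apply_one (monotone_pow hQ n) (pow_apply_one hQ1 n) f
  have hgrad : ∀ n, HasGradientBound ((Q ^ n) f) (K • 1) := by
    intro n
    induction n with
    | zero =>
      exact (hasGradientBound_of_lipschitzWith hK₀).mono
        (smul_le_smul_of_nonneg_right (le_max_left _ _) zero_le_one)
    | succ n ih =>
      have hBn : B * ‖(Q ^ n) f‖ ≤ B * ‖f‖ := by gcongr; exact hnorm n
      rw [pow_succ_apply]
      refine (hLY _ _ (smul_nonneg hK zero_le_one) ih).mono ?_
      rw [map_smul, hQ1, smul_smul, ← add_smul]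
      exact smul_le_smul_of_nonneg_right (by linarith) zero_le_one
  exact ⟨K.toNNReal, fun n => (hgrad n).lipschitzWith (by rw [Real.coe_toNNReal K hK])⟩

/-- Equilipschitz functions of large maximum are large on a ball of fixed radius, so irreducibility
raises their lower bound by a fixed amount. -/
theorem UniformlyIrreducible.exists_raise_le (hQ : UniformlyIrreducible Q) (K : ℝ≥0) {δ : ℝ}
    (hδ : 0 < δ) : ∃ N, ∃ r > (0 : ℝ), ∀ g : C(X, ℝ), 0 ≤ g → LipschitzWith K g → (∃ y, δ < g y) →
      r • 1 ≤ (Q ^ N) g := by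
  obtain ⟨N, p, hp, hN⟩ := hQ (δ / 2 / (K + 1)) (by positivity)
  refine ⟨N, p * (δ / 2), by positivity, fun g hg hK ⟨y, hy⟩ => ContinuousMap.le_def.2 fun x => ?_⟩
  have hball : ∀ z ∈ Metric.ball y (δ / 2 / (K + 1)), δ / 2 ≤ g z := fun z hz => by
    have hz' : dist z y * (K + 1) < δ / 2 := (lt_div_iff₀ (by positivity)).1 hz
    have hgz := (abs_le.1 (hK.dist_le_mul z y)).1
    nlinarith [dist_nonneg (x := z) (y := y)]
  simpa using hN g hg (δ / 2) (by positivity) y hball x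

variable [Nonempty X]

theorem IsRegularPositive.exists_norm_pow_apply_sub_le (hQ : IsRegularPositive Q) (hQ1 : Q 1 = 1)
    {f : C(X, ℝ)} (hf : f ∈ lipschitzSubmodule X) :
    ∃ e : ℝ, ∀ δ > 0, ∃ n, ‖(Q ^ n) f - e • 1‖ ≤ δ := by
  obtain ⟨q, B, -, hq1, hB, hLY⟩ := hQ.lasotaYorke
  obtain ⟨K, hK⟩ := hLY.exists_lipschitzWith_pow hq1 hB hQ.monotone hQ1 hf
  set A : Set ℝ := {a | ∃ n, a • 1 ≤ (Q ^ n) f}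
  have hA : BddAbove A := ⟨‖f‖, fun a ⟨n, ha⟩ => by
    have hx := (Q ^ n) f |>.norm_coe_le_norm (Classical.arbitrary X)
    have hnorm := norm_apply_le_of_apply_one (monotone_pow hQ.monotone n) (pow_apply_one hQ1 n) f
    have hax : a ≤ (Q ^ n) f (Classical.arbitrary X) := by simpa using ha (Classical.arbitrary X)
    exact hax.trans ((le_abs_self _).trans (hx.trans hnorm))⟩
  have hA' : A.Nonempty := ⟨-‖f‖, 0, ContinuousMap.le_def.2 fun x => by
    simpa using (abs_le.1 (f.norm_coe_le_norm x)).1⟩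
  refine ⟨sSup A, fun δ hδ => ?_⟩
  obtain ⟨N, r, hr, hraise⟩ := hQ.irreducible.exists_raise_le K (half_pos hδ)
  obtain ⟨a, ⟨n, han⟩, ha⟩ := exists_lt_of_lt_csSup hA'
    (sub_lt_self (sSup A) (lt_min hr (half_pos hδ)))
  have hasup : a ≤ sSup A := le_csSup hA ⟨n, han⟩
  have hosc : ∀ y, (Q ^ n) f y - a ≤ δ / 2 := by
    by_contra! ⟨y, hy⟩
    have hlip : LipschitzWith K ⇑((Q ^ n) f - a • (1 : C(X, ℝ))) :=
      LipschitzWith.of_dist_le_mul fun x x' => by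
        simpa only [ContinuousMap.sub_apply, ContinuousMap.smul_apply, ContinuousMap.one_apply,
          dist_sub_right] using (hK n).dist_le_mul x x'
    have hle : r • 1 ≤ (Q ^ N) ((Q ^ n) f - a • 1) :=
      hraise _ (sub_nonneg.2 han) hlip ⟨y, by simpa using hy⟩
    have hmem : a + r ∈ A := ⟨N + n, by
      rw [pow_add_apply]
      rw [map_sub, map_smul, pow_apply_one hQ1, le_sub_iff_add_le] at hle
      rwa [add_smul, add_comm]⟩
    linarith [le_csSup hA hmem, min_le_left r (δ / 2)]
  refine ⟨n, (ContinuousMap.norm_le _ hδ.le).2 fun x => abs_le.2 ?_⟩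
  have hax : a ≤ (Q ^ n) f x := by simpa using han x
  have hmin := min_le_right r (δ / 2)
  simp only [ContinuousMap.sub_apply, ContinuousMap.smul_apply, ContinuousMap.one_apply,
    smul_eq_mul, mul_one]
  constructor <;> linarith [hosc x]

theorem IsRegularPositive.exists_tendsto_pow_apply (hQ : IsRegularPositive Q) (hQ1 : Q 1 = 1)
    {f : C(X, ℝ)} (hf : f ∈ lipschitzSubmodule X) :
    ∃ e : ℝ, Tendsto (fun n => (Q ^ n) f) atTop (𝓝 (e • 1)) := by
  obtain ⟨e, he⟩ := hQ.exists_norm_pow_apply_sub_le hQ1 hf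
  have hanti : Antitone fun n => ‖(Q ^ n) f - e • 1‖ := antitone_nat_of_succ_le fun n => by
    have h : (Q ^ (n + 1)) f - e • 1 = Q ((Q ^ n) f - e • 1) := by
      rw [map_sub, map_smul, hQ1, pow_succ_apply]
    rw [h]
    exact norm_apply_le_of_apply_one hQ.monotone hQ1 _
  refine ⟨e, tendsto_iff_norm_sub_tendsto_zero.2 (Metric.tendsto_atTop.2 fun δ hδ => ?_)⟩
  obtain ⟨n, hn⟩ := he (δ / 2) (half_pos hδ)
  refine ⟨n, fun m hm => ?_⟩
  rw [dist_zero_right, norm_norm]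
  exact (hanti hm).trans_lt (hn.trans_lt (half_lt_self hδ))

end MarkovOperator

section Pressure

variable {X : Type*} [PseudoMetricSpace X] [CompactSpace X] {T Q : C(X, ℝ) →L[ℝ] C(X, ℝ)}

/-- The Feynman–Kac operator `f ↦ T (exp V * f)`. -/
noncomputable def feynmanKac (T : C(X, ℝ) →L[ℝ] C(X, ℝ)) (V : C(X, ℝ)) :
    C(X, ℝ) →L[ℝ] C(X, ℝ) :=
  expWeighted T 0 V

theorem feynmanKac_apply (T : C(X, ℝ) →L[ℝ] C(X, ℝ)) (V f : C(X, ℝ)) :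
    feynmanKac T V f = T (NormedSpace.exp V * f) :=
  ContinuousMap.ext fun x => by simp [feynmanKac, expWeighted_apply]

theorem monotone_feynmanKac (hT : Monotone T) (V : C(X, ℝ)) : Monotone (feynmanKac T V) :=
  monotone_expWeighted hT 0 V

theorem isRegularPositive_feynmanKac (hT : IsRegularPositive T) {V : C(X, ℝ)}
    (hV : V ∈ lipschitzSubmodule X) : IsRegularPositive (feynmanKac T V) :=
  isRegularPositive_expWeighted hT (zero_mem _) hV

/-- The pressure of `V`, the logarithm of the Perron root of the Feynman–Kac operator: the
exponential growth rate of the partition functions of `V`. -/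
noncomputable def pressure (T : C(X, ℝ) →L[ℝ] C(X, ℝ)) (V : C(X, ℝ)) : ℝ :=
  Real.log (perronRoot (feynmanKac T V))

theorem hasDerivAt_exp_smul_mul_apply_exp_smul (hQ1 : Q 1 = 1) (u Y : C(X, ℝ)) :
    HasDerivAt (fun t : ℝ => NormedSpace.exp (t • -u) * Q (NormedSpace.exp (t • Y)))
      (Q Y - u) 0 := by
  have hu := hasDerivAt_exp_smul_const (𝕂 := ℝ) (-u) 0
  have hY := Q.hasFDerivAt.comp_hasDerivAt (0 : ℝ) (hasDerivAt_exp_smul_const (𝕂 := ℝ) Y 0)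
  have h := hu.mul hY
  simp only [Function.comp_apply, zero_smul, NormedSpace.exp_zero, one_mul, mul_one, hQ1] at h
  exact h.congr_deriv (by abel)

theorem hasDerivAt_of_abs_sub_le {F : Type*} [NormedAddCommGroup F] [NormedSpace ℝ F] {f : ℝ → ℝ}
    {φ : ℕ → ℝ → F} {d : ℕ → F} {d₀ : F} {m C : ℝ} (hC : 0 < C)
    (hφ : ∀ n, HasDerivAt (φ n) (d n) 0) (hd : Tendsto d atTop (𝓝 d₀))
    (hle : ∀ n t, |f t - f 0 - t * m| ≤ C * ‖φ n t - φ n 0 - t • d₀‖) : HasDerivAt f m 0 := by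
  refine .of_isLittleO (Asymptotics.isLittleO_iff.2 fun c hc => ?_)
  obtain ⟨n, hn⟩ := ((tendsto_iff_norm_sub_tendsto_zero.1 hd).eventually
    (ge_mem_nhds (by positivity : 0 < c / (2 * C)))).exists
  filter_upwards [Asymptotics.isLittleO_iff.1 (hφ n).isLittleO (by positivity : 0 < c / (2 * C))]
    with t ht
  simp only [sub_zero, smul_eq_mul, Real.norm_eq_abs] at ht ⊢
  calc |f t - f 0 - t * m| ≤ C * ‖(φ n t - φ n 0 - t • d n) + t • (d n - d₀)‖ := by
        rw [smul_sub, sub_add_sub_cancel]; exact hle n t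
    _ ≤ C * (‖φ n t - φ n 0 - t • d n‖ + ‖t • (d n - d₀)‖) := by gcongr; exact norm_add_le _ _
    _ ≤ C * (c / (2 * C) * |t| + |t| * (c / (2 * C))) := by
        rw [norm_smul, Real.norm_eq_abs]; gcongr
    _ = c * |t| := by field_simp; ring

/-- The Doob transform of `feynmanKac T V` by its Perron eigenfunction `exp G`. -/
noncomputable def doobTransform (T : C(X, ℝ) →L[ℝ] C(X, ℝ)) (V G : C(X, ℝ)) :
    C(X, ℝ) →L[ℝ] C(X, ℝ) :=
  expWeighted T (-G - pressure T V • 1) (V + G)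

theorem apply_exp_add_mul (T : C(X, ℝ) →L[ℝ] C(X, ℝ)) (V G f : C(X, ℝ)) (x : X) :
    T (NormedSpace.exp (V + G) * f) x =
      Real.exp (pressure T V + G x) * doobTransform T V G f x := by
  rw [doobTransform, expWeighted_apply, ← mul_assoc, ← Real.exp_add]
  simp only [ContinuousMap.sub_apply, ContinuousMap.neg_apply, ContinuousMap.smul_apply,
    ContinuousMap.one_apply, smul_eq_mul, mul_one]
  rw [show pressure T V + G x + (-G x - pressure T V) = 0 by ring, Real.exp_zero, one_mul]

variable [Nonempty X]

theorem perronRoot_feynmanKac_pos (hT : Monotone T) (hT1 : ∀ x, 0 < T 1 x) (V : C(X, ℝ)) :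
    0 < perronRoot (feynmanKac T V) :=
  perronRoot_pos (monotone_feynmanKac hT V) fun x =>
    (mul_pos (by positivity) (hT1 x)).trans_le (smul_le_expWeighted hT 0 V zero_le_one x)

theorem pressure_zero (hT : Monotone T) (hT1 : T 1 = 1) : pressure T 0 = 0 := by
  have h : feynmanKac T 0 1 = (1 : ℝ) • 1 := by simp [feynmanKac_apply, hT1]
  rw [pressure, perronRoot_eq (monotone_feynmanKac hT 0) (fun _ => one_pos) h, Real.log_one]

theorem pressure_le_add_norm_sub (hT : Monotone T) (hT1 : ∀ x, 0 < T 1 x) (U V : C(X, ℝ)) :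
    pressure T U ≤ pressure T V + ‖U - V‖ := by
  have hle : perronRoot (feynmanKac T U) ≤
      Real.exp ‖U - V‖ * perronRoot (feynmanKac T V) := by
    refine perronRoot_le_mul (monotone_feynmanKac hT U) (Real.exp_pos _) fun f hf => ?_
    rw [feynmanKac_apply, feynmanKac_apply, ← map_smul]
    refine hT (ContinuousMap.le_def.2 fun x => ?_)
    have hUV : U x ≤ ‖U - V‖ + V x := by
      linarith [(abs_le.1 ((U - V).norm_coe_le_norm x)).2, ContinuousMap.sub_apply U V x]
    simp only [ContinuousMap.mul_apply, ContinuousMap.smul_apply, exp_apply, smul_eq_mul]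
    rw [← mul_assoc, ← Real.exp_add]
    exact mul_le_mul_of_nonneg_right (Real.exp_le_exp.2 hUV) (hf x)
  have hV := perronRoot_feynmanKac_pos hT hT1 V
  calc pressure T U ≤ Real.log (Real.exp ‖U - V‖ * perronRoot (feynmanKac T V)) :=
        Real.log_le_log (perronRoot_feynmanKac_pos hT hT1 U) hle
    _ = pressure T V + ‖U - V‖ := by
        rw [Real.log_mul (Real.exp_pos _).ne' hV.ne', Real.log_exp, add_comm, pressure]

theorem continuous_pressure (hT : Monotone T) (hT1 : ∀ x, 0 < T 1 x) : Continuous (pressure T) :=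
  (LipschitzWith.of_le_add fun U V => by
    rw [dist_eq_norm]; exact pressure_le_add_norm_sub hT hT1 U V).continuous

theorem doobTransform_one (hT : Monotone T) (hT1 : ∀ x, 0 < T 1 x) {V G : C(X, ℝ)}
    (hG : feynmanKac T V (NormedSpace.exp G) =
      perronRoot (feynmanKac T V) • NormedSpace.exp G) : doobTransform T V G 1 = 1 := by
  ext x
  have h := apply_exp_add_mul T V G 1 x
  rw [mul_one, NormedSpace.exp_add, ← feynmanKac_apply, hG, ContinuousMap.smul_apply, smul_eq_mul,
    exp_apply, Real.exp_add, pressure, Real.exp_log (perronRoot_feynmanKac_pos hT hT1 V)] at h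
  have hpos := mul_pos (perronRoot_feynmanKac_pos hT hT1 V) (Real.exp_pos (G x))
  exact mul_left_cancel₀ hpos.ne' (by rw [← h, ContinuousMap.one_apply, mul_one])

theorem abs_perronRoot_feynmanKac_add_sub_le (hT : Monotone T) (V G W u : C(X, ℝ)) (t b : ℝ) :
    |perronRoot (feynmanKac T (V + t • W)) - Real.exp (pressure T V) * b| ≤
      Real.exp (pressure T V) * ‖NormedSpace.exp (t • -u) *
        doobTransform T V G (NormedSpace.exp (t • (W + u))) - b • 1‖ := by
  refine abs_perronRoot_sub_le (monotone_feynmanKac hT _) (ψ := NormedSpace.exp (G + t • u))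
    (fun x => exp_apply (G + t • u) x ▸ Real.exp_pos _) fun x => ?_
  set φ := NormedSpace.exp (t • -u) * doobTransform T V G (NormedSpace.exp (t • (W + u)))
  have hφ : feynmanKac T (V + t • W) (NormedSpace.exp (G + t • u)) x =
      Real.exp (pressure T V) * (NormedSpace.exp (G + t • u) x * φ x) := by
    have h : V + t • W + (G + t • u) = V + G + t • (W + u) := by rw [smul_add]; abel
    rw [feynmanKac_apply, ← NormedSpace.exp_add, h, NormedSpace.exp_add, apply_exp_add_mul]
    simp only [φ, ContinuousMap.mul_apply, exp_apply, ContinuousMap.add_apply,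
      ContinuousMap.smul_apply, ContinuousMap.neg_apply, smul_eq_mul, Real.exp_add]
    rw [mul_neg, Real.exp_neg]
    field_simp
  have hbound : |φ x - b| ≤ ‖φ - b • 1‖ := by
    simpa using (φ - b • 1).norm_coe_le_norm x
  have hexp : 0 < NormedSpace.exp (G + t • u) x := exp_apply (G + t • u) x ▸ Real.exp_pos _
  calc |feynmanKac T (V + t • W) (NormedSpace.exp (G + t • u)) x -
        Real.exp (pressure T V) * b * NormedSpace.exp (G + t • u) x|
      = Real.exp (pressure T V) * NormedSpace.exp (G + t • u) x * |φ x - b| := by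
        rw [hφ, show ∀ r s : ℝ, r * (s * φ x) - r * b * s = r * s * (φ x - b) by intros; ring,
          abs_mul, abs_of_pos (by positivity)]
    _ ≤ Real.exp (pressure T V) * NormedSpace.exp (G + t • u) x * ‖φ - b • 1‖ := by gcongr
    _ = Real.exp (pressure T V) * ‖φ - b • 1‖ * NormedSpace.exp (G + t • u) x := by ring

/-- Testing with `exp (G + t u)`, where `u` is a partial sum of the series solving the Poisson
equation `(1 - Q) u = Q W - e` for the Doob transform `Q`, determines the Perron root up to
`o(t)`. -/
theorem IsRegularPositive.exists_hasDerivAt_perronRoot (hT : IsRegularPositive T) {V W : C(X, ℝ)}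
    (hV : V ∈ lipschitzSubmodule X) (hW : W ∈ lipschitzSubmodule X) :
    ∃ e, HasDerivAt (fun t : ℝ => perronRoot (feynmanKac T (V + t • W)))
      (Real.exp (pressure T V) * e) 0 := by
  obtain ⟨G, hG, hGeig⟩ := exists_exp_eigenfunction (isRegularPositive_feynmanKac hT hV)
  set Q := doobTransform T V G
  have hQ1 : Q 1 = 1 := doobTransform_one hT.monotone hT.apply_one_pos hGeig
  have hone : (1 : C(X, ℝ)) ∈ lipschitzSubmodule X := ⟨0, LipschitzWith.const 1⟩
  have hQ : IsRegularPositive Q :=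
    isRegularPositive_expWeighted hT (sub_mem (neg_mem hG) (Submodule.smul_mem _ _ hone))
      (add_mem hV hG)
  obtain ⟨e, he⟩ := hQ.exists_tendsto_pow_apply hQ1 hW
  set ρ := Real.exp (pressure T V)
  have hρ : 0 < ρ := Real.exp_pos _
  have hρ0 : perronRoot (feynmanKac T V) = ρ :=
    (Real.exp_log (perronRoot_feynmanKac_pos hT.monotone hT.apply_one_pos V)).symm
  have hpoisson : ∀ n, Q (W + ∑ k ∈ Finset.Icc 1 n, (Q ^ k) W) - ∑ k ∈ Finset.Icc 1 n, (Q ^ k) W =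
      (Q ^ (n + 1)) W := by
    intro n
    induction n with
    | zero => simp
    | succ n ih =>
      rw [Finset.sum_Icc_succ_top (by lia), ← add_assoc, map_add, ← pow_succ_apply, ← ih]
      abel
  refine ⟨e, hasDerivAt_of_abs_sub_le hρ (fun n => (hasDerivAt_exp_smul_mul_apply_exp_smul hQ1 _ _)
    |>.congr_deriv (hpoisson n)) (he.comp (tendsto_add_atTop_nat 1)) fun n t => ?_⟩
  have h := abs_perronRoot_feynmanKac_add_sub_le hT.monotone V G W
    (∑ k ∈ Finset.Icc 1 n, (Q ^ k) W) t (1 + t * e)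
  rw [add_smul, one_smul, mul_smul, ← sub_sub] at h
  simp only [zero_smul, add_zero, NormedSpace.exp_zero, one_mul, hQ1, hρ0]
  rwa [sub_sub, show ρ + t * (ρ * e) = ρ * (1 + t * e) by ring]

theorem IsRegularPositive.exists_hasDerivAt_pressure (hT : IsRegularPositive T) {V W : C(X, ℝ)}
    (hV : V ∈ lipschitzSubmodule X) (hW : W ∈ lipschitzSubmodule X) :
    ∃ e, HasDerivAt (fun t : ℝ => pressure T (V + t • W)) e 0 := by
  obtain ⟨e, he⟩ := hT.exists_hasDerivAt_perronRoot hV hW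
  exact ⟨_, he.log (by simpa using
    (perronRoot_feynmanKac_pos hT.monotone hT.apply_one_pos (V + (0 : ℝ) • W)).ne')⟩

theorem exists_feynmanKac_pow_apply_one_le (hT : Monotone T) (hT1 : ∀ x, 0 < T 1 x)
    {V : C(X, ℝ)} {a : ℝ} (ha : pressure T V < a) :
    ∃ M > (0 : ℝ), ∀ (n : ℕ) (x : X), (feynmanKac T V ^ n) 1 x ≤ M * Real.exp (n * a) := by
  have hL := monotone_feynmanKac hT V
  obtain ⟨ρ, hρ, ψ, hψ, hsup⟩ := exists_supersolution_of_perronRoot_lt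
    ((Real.log_lt_iff_lt_exp (perronRoot_feynmanKac_pos hT hT1 V)).1 ha)
  have hρ0 := supersolution_rate_nonneg hL hψ hsup
  obtain ⟨M, hM⟩ := exists_norm_pow_apply_one_le hL hψ hsup
  refine ⟨max M 1, by positivity, fun n x => ?_⟩
  calc (feynmanKac T V ^ n) 1 x ≤ M * ρ ^ n :=
        (le_abs_self _).trans ((ContinuousMap.norm_coe_le_norm _ x).trans (hM n))
    _ ≤ max M 1 * Real.exp a ^ n := by gcongr; exact le_max_left M 1
    _ = max M 1 * Real.exp (n * a) := by rw [← Real.exp_nat_mul]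

theorem IsRegularPositive.exists_le_feynmanKac_pow_apply_one (hT : IsRegularPositive T)
    {V : C(X, ℝ)} (hV : V ∈ lipschitzSubmodule X) :
    ∃ c > (0 : ℝ), ∀ (n : ℕ) (x : X),
      c * Real.exp (n * pressure T V) ≤ (feynmanKac T V ^ n) 1 x := by
  obtain ⟨G, -, hG⟩ := exists_exp_eigenfunction (isRegularPositive_feynmanKac hT hV)
  have hroot := perronRoot_feynmanKac_pos hT.monotone hT.apply_one_pos V
  have hG_le : NormedSpace.exp G ≤ Real.exp ‖G‖ • 1 := ContinuousMap.le_def.2 fun x => by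
    simpa [exp_apply] using (le_abs_self _).trans (G.norm_coe_le_norm x)
  refine ⟨Real.exp (-(2 * ‖G‖)), Real.exp_pos _, fun n x => ?_⟩
  have hpow : Real.exp (n * pressure T V) * Real.exp (G x) ≤
      Real.exp ‖G‖ * (feynmanKac T V ^ n) 1 x := by
    have h := monotone_pow (monotone_feynmanKac hT.monotone V) n hG_le x
    rw [pow_apply_of_apply_eq_smul hG, map_smul] at h
    rw [pressure, Real.exp_nat_mul, Real.exp_log hroot, ← exp_apply]
    exact h
  calc Real.exp (-(2 * ‖G‖)) * Real.exp (n * pressure T V)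
      = Real.exp (-‖G‖) * (Real.exp (n * pressure T V) * Real.exp (-‖G‖)) := by
        rw [two_mul, neg_add, Real.exp_add]
        ring
    _ ≤ Real.exp (-‖G‖) * (Real.exp (n * pressure T V) * Real.exp (G x)) := by
        gcongr
        exact neg_le_of_abs_le (G.norm_coe_le_norm x)
    _ ≤ Real.exp (-‖G‖) * (Real.exp ‖G‖ * (feynmanKac T V ^ n) 1 x) := by gcongr
    _ = (feynmanKac T V ^ n) 1 x := by
        rw [← mul_assoc, ← Real.exp_add, neg_add_cancel, Real.exp_zero, one_mul]

end Pressure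

section RateFunction

theorem integrable_continuousMap {X : Type*} [TopologicalSpace X] [CompactSpace X]
    [MeasurableSpace X] [OpensMeasurableSpace X] (V : C(X, ℝ)) (σ : Measure X)
    [IsFiniteMeasure σ] : Integrable V σ :=
  (BoundedContinuousFunction.mkOfCompact V).integrable σ

theorem continuous_integral_continuousMap {X : Type*} [TopologicalSpace X] [CompactSpace X]
    [MeasurableSpace X] [OpensMeasurableSpace X] (V : C(X, ℝ)) :
    Continuous fun σ : ProbabilityMeasure X => ∫ x, V x ∂(σ : Measure X) :=
  ProbabilityMeasure.continuous_integral_boundedContinuousFunction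
    (BoundedContinuousFunction.mkOfCompact V)

theorem integral_sum_smul_continuousMap {X : Type*} [TopologicalSpace X] [CompactSpace X]
    [MeasurableSpace X] [OpensMeasurableSpace X] {ι : Type*} [Fintype ι] (α : ι → ℝ)
    (V : ι → C(X, ℝ)) (σ : Measure X) [IsFiniteMeasure σ] :
    ∫ x, (∑ i, α i • V i) x ∂σ = ∑ i, α i * ∫ x, V i x ∂σ := by
  simp only [ContinuousMap.sum_apply, ContinuousMap.smul_apply, smul_eq_mul]
  rw [integral_finsetSum _ fun i _ => (integrable_continuousMap (V i) _).const_mul _]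
  simp only [integral_const_mul]

variable {X : Type*} [TopologicalSpace X] [MeasurableSpace X]

/-- The rate function with pressure `Λ`, that is, the Legendre transform of `Λ` with values in
`[0, ∞]`; the truncation at `0` is harmless when `Λ 0 = 0`. -/
noncomputable def rateFunction (Λ : C(X, ℝ) → ℝ) (σ : ProbabilityMeasure X) : ℝ≥0∞ :=
  ⨆ V : C(X, ℝ), ENNReal.ofReal (∫ x, V x ∂(σ : Measure X) - Λ V)

theorem integral_sub_le_toReal_rateFunction {Λ : C(X, ℝ) → ℝ} {σ : ProbabilityMeasure X}
    (hσ : rateFunction Λ σ ≠ ⊤) (V : C(X, ℝ)) :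
    ∫ x, V x ∂(σ : Measure X) - Λ V ≤ (rateFunction Λ σ).toReal :=
  (ENNReal.ofReal_le_iff_le_toReal hσ).1 (le_iSup (fun V : C(X, ℝ) =>
    ENNReal.ofReal (∫ x, V x ∂(σ : Measure X) - Λ V)) V)

theorem exists_lt_integral_sub_of_lt_rateFunction {Λ : C(X, ℝ) → ℝ} {σ : ProbabilityMeasure X}
    (hΛ : Λ 0 ≤ 0) {a : ℝ} (ha : a < (rateFunction Λ σ : EReal)) :
    ∃ V : C(X, ℝ), a < ∫ x, V x ∂(σ : Measure X) - Λ V := by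
  obtain hneg | hnonneg := lt_or_ge a 0
  · refine ⟨0, ?_⟩
    simp only [ContinuousMap.zero_apply, integral_zero]
    linarith
  rw [← max_eq_left hnonneg, ← EReal.coe_ennreal_ofReal, EReal.coe_ennreal_lt_coe_ennreal_iff] at ha
  obtain ⟨V, hV⟩ := lt_iSup_iff.1 ha
  exact ⟨V, (ENNReal.ofReal_lt_ofReal_iff'.1 hV).1⟩

variable [CompactSpace X] [OpensMeasurableSpace X]

theorem lowerSemicontinuous_rateFunction (Λ : C(X, ℝ) → ℝ) :
    LowerSemicontinuous (rateFunction Λ) :=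
  lowerSemicontinuous_iSup fun V => (ENNReal.continuous_ofReal.comp
    ((continuous_integral_continuousMap V).sub continuous_const)).lowerSemicontinuous

theorem rateFunction_convex_combination_le (Λ : C(X, ℝ) → ℝ) {t : ℝ≥0} (ht : t ≤ 1)
    {σ₁ σ₂ τ : ProbabilityMeasure X} (hτ : (τ : Measure X) = (t : ℝ≥0∞) • (σ₁ : Measure X) +
      ((1 - t : ℝ≥0) : ℝ≥0∞) • (σ₂ : Measure X)) :
    rateFunction Λ τ ≤ t • rateFunction Λ σ₁ + (1 - t) • rateFunction Λ σ₂ := by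
  refine iSup_le fun V => ?_
  have hle : ∀ (s : ℝ≥0) (σ : ProbabilityMeasure X),
      ENNReal.ofReal (s * (∫ x, V x ∂(σ : Measure X) - Λ V)) ≤ s • rateFunction Λ σ := fun s σ => by
    rw [ENNReal.ofReal_mul NNReal.zero_le_coe, ENNReal.ofReal_coe_nnreal]
    exact mul_le_mul_right (le_iSup (fun V : C(X, ℝ) =>
      ENNReal.ofReal (∫ x, V x ∂(σ : Measure X) - Λ V)) V) _
  have hint : ∫ x, V x ∂(τ : Measure X) - Λ V = t * (∫ x, V x ∂(σ₁ : Measure X) - Λ V) +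
      (1 - t : ℝ≥0) * (∫ x, V x ∂(σ₂ : Measure X) - Λ V) := by
    rw [hτ, integral_add_measure
      ((integrable_continuousMap V _).smul_measure ENNReal.coe_ne_top)
      ((integrable_continuousMap V _).smul_measure ENNReal.coe_ne_top), integral_smul_measure,
      integral_smul_measure]
    simp only [ENNReal.coe_toReal, NNReal.coe_sub ht, NNReal.coe_one, smul_eq_mul]
    ring
  rw [hint]
  exact ENNReal.ofReal_add_le.trans (add_le_add (hle t σ₁) (hle (1 - t) σ₂))

theorem isCompact_rateFunction_le {X : Type*} [MetricSpace X] [CompactSpace X]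
    [MeasurableSpace X] [BorelSpace X] (Λ : C(X, ℝ) → ℝ) (a : ℝ≥0∞) :
    IsCompact {σ | rateFunction Λ σ ≤ a} :=
  ((lowerSemicontinuous_rateFunction Λ).isClosed_preimage a).isCompact

end RateFunction

section LipschitzTestFunctions

theorem eq_of_forall_lipschitz_integral_eq {X : Type*} [PseudoMetricSpace X]
    [MeasurableSpace X] [BorelSpace X] {σ τ : ProbabilityMeasure X}
    (h : ∀ V ∈ lipschitzSubmodule X, ∫ x, V x ∂(σ : Measure X) = ∫ x, V x ∂(τ : Measure X)) :
    σ = τ := by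
  have hlim : Tendsto (fun _ : ℕ => σ) atTop (𝓝 τ) := by
    rw [tendsto_iff_forall_lipschitz_integral_tendsto]
    rintro f - ⟨K, hK⟩
    have hf : ∫ x, f x ∂(σ : Measure X) = ∫ x, f x ∂(τ : Measure X) :=
      h ⟨f, hK.continuous⟩ ⟨K, hK⟩
    rw [hf]
    exact tendsto_const_nhds
  exact tendsto_nhds_unique tendsto_const_nhds hlim

variable {X : Type*} [MetricSpace X] [CompactSpace X] [MeasurableSpace X] [BorelSpace X]

theorem exists_finset_lipschitz_forall_mem {U : Set (ProbabilityMeasure X)} (hU : IsOpen U)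
    {σ : ProbabilityMeasure X} (hσ : σ ∈ U) :
    ∃ s : Finset (lipschitzSubmodule X), ∀ τ : ProbabilityMeasure X,
      (∀ V ∈ s, |∫ x, V.1 x ∂(τ : Measure X) - ∫ x, V.1 x ∂(σ : Measure X)| ≤ 1) → τ ∈ U := by
  have hopen : ∀ V : lipschitzSubmodule X, IsOpen {τ : ProbabilityMeasure X |
      1 < |∫ x, V.1 x ∂(τ : Measure X) - ∫ x, V.1 x ∂(σ : Measure X)|} := fun V =>
    isOpen_lt continuous_const ((continuous_integral_continuousMap V.1).sub continuous_const).abs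
  have hcover : Uᶜ ⊆ ⋃ V : lipschitzSubmodule X, {τ : ProbabilityMeasure X |
      1 < |∫ x, V.1 x ∂(τ : Measure X) - ∫ x, V.1 x ∂(σ : Measure X)|} := by
    intro τ hτ
    obtain ⟨V, hV, hne⟩ : ∃ V ∈ lipschitzSubmodule X,
        ∫ x, V x ∂(τ : Measure X) ≠ ∫ x, V x ∂(σ : Measure X) := by
      contrapose! hτ
      rwa [Set.mem_compl_iff, not_not, eq_of_forall_lipschitz_integral_eq hτ]
    have hd := sub_ne_zero.2 hne
    set d := ∫ x, V x ∂(τ : Measure X) - ∫ x, V x ∂(σ : Measure X)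
    refine Set.mem_iUnion.2 ⟨⟨(2 / d) • V, Submodule.smul_mem _ _ hV⟩, ?_⟩
    simp only [ContinuousMap.smul_apply, smul_eq_mul, integral_const_mul, Set.mem_ofPred_eq]
    rw [← mul_sub, div_mul_cancel₀ _ hd]
    norm_num
  obtain ⟨s, hs⟩ := hU.isClosed_compl.isCompact.elim_finite_subcover _ hopen hcover
  refine ⟨s, fun τ hτ => by_contra fun hτU => ?_⟩
  obtain ⟨V, hV, hlt⟩ := Set.mem_iUnion₂.1 (hs hτU)
  exact (hτ V hV).not_gt hlt

end LipschitzTestFunctions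

section Tilting

theorem exists_forall_sub_inner_add_sq_le {E : Type*} [NormedAddCommGroup E]
    [InnerProductSpace ℝ E] [ProperSpace E] {F : E → ℝ} (hF : Continuous F) (hF0 : F 0 ≤ 0)
    {s : E} {I : ℝ} (hI : ∀ α, inner ℝ α s - F α ≤ I) {η : ℝ} (hη : 0 < η) :
    ∃ α, (∀ β, F α - inner ℝ α s + η * ‖α‖ ^ 2 ≤ F β - inner ℝ β s + η * ‖β‖ ^ 2) ∧
      η * ‖α‖ ^ 2 ≤ I := by
  set J : E → ℝ := fun α => F α - inner ℝ α s + η * ‖α‖ ^ 2 with hJ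
  have hnorm : ∀ α, J α ≤ J 0 → η * ‖α‖ ^ 2 ≤ I := fun α hα => by
    have hα0 : F α - inner ℝ α s + η * ‖α‖ ^ 2 ≤ 0 := hα.trans (by simpa [hJ] using hF0)
    linarith [hI α]
  have hbdd : Bornology.IsBounded {α | J α ≤ J 0} :=
    isBounded_iff_forall_norm_le.2 ⟨√(I / η), fun α hα => Real.le_sqrt_of_sq_le
      ((le_div_iff₀' hη).2 (hnorm α hα))⟩
  have hJc : Continuous J := by fun_prop
  obtain ⟨α, hα⟩ := hJc.exists_forall_le_of_isBounded 0 hbdd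
  exact ⟨α, hα, hnorm α (hα 0)⟩

theorem hasLineDerivAt_eq_inner_of_forall_sub_inner_add_sq_le {E : Type*} [NormedAddCommGroup E]
    [InnerProductSpace ℝ E] {F : E → ℝ} {s α : E} {η : ℝ}
    (hα : ∀ β, F α - inner ℝ α s + η * ‖α‖ ^ 2 ≤ F β - inner ℝ β s + η * ‖β‖ ^ 2) {v : E} {e : ℝ}
    (he : HasLineDerivAt ℝ F e α v) : e = inner ℝ (s - (2 * η) • α) v := by
  have hJv : HasLineDerivAt ℝ (fun β => F β - inner ℝ β s + η * ‖β‖ ^ 2)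
      (e - inner ℝ s v + η * (2 * inner ℝ α v)) α v := by
    have hline : HasDerivAt (fun t : ℝ => α + t • v) v 0 := by
      simpa using ((hasDerivAt_id (0 : ℝ)).smul_const v).const_add α
    have hinner := hline.inner ℝ (hasDerivAt_const (0 : ℝ) s)
    refine ((he.sub hinner).add (hline.norm_sq.const_mul η)).congr_deriv ?_
    simp [real_inner_comm]
  have hcrit := IsLocalMin.hasLineDerivAt_eq_zero (Eventually.of_forall hα) hJv
  rw [inner_sub_left, inner_smul_left, conj_trivial]
  linarith

/-- The approximate gradient comes from a minimizer of the functional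
`F α - ⟪α, s⟫ + η * ‖α‖ ^ 2`. -/
theorem exists_approx_exposing {E : Type*} [NormedAddCommGroup E] [InnerProductSpace ℝ E]
    [ProperSpace E] {F : E → ℝ} (hF : Continuous F) (hF0 : F 0 ≤ 0) {s : E} {I : ℝ}
    (hI : ∀ α, inner ℝ α s - F α ≤ I) {δ : ℝ} (hδ : 0 < δ) :
    ∃ α s' : E, ‖s' - s‖ ≤ δ ∧ inner ℝ α s' - F α ≤ I ∧
      ∀ v e, HasLineDerivAt ℝ F e α v → e = inner ℝ s' v := by
  have hI0 : 0 ≤ I := (neg_nonneg.2 hF0).trans (by simpa using hI 0)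
  set η := δ ^ 2 / (4 * (I + 1)) with hη_def
  have hη : 0 < η := by positivity
  have hηI : 4 * η * I ≤ δ ^ 2 := by
    rw [hη_def]
    field_simp
    linarith [sq_nonneg δ]
  obtain ⟨α, hα, hα_norm⟩ := exists_forall_sub_inner_add_sq_le hF hF0 hI hη
  refine ⟨α, s - (2 * η) • α, ?_, ?_,
    fun v e he => hasLineDerivAt_eq_inner_of_forall_sub_inner_add_sq_le hα he⟩
  · rw [sub_sub_cancel_left, norm_neg, norm_smul, Real.norm_of_nonneg (by positivity)]
    refine (abs_le_of_sq_le_sq' ?_ hδ.le).2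
    calc (2 * η * ‖α‖) ^ 2 = 4 * η * (η * ‖α‖ ^ 2) := by ring
      _ ≤ 4 * η * I := by gcongr
      _ ≤ δ ^ 2 := hηI
  · rw [inner_sub_right, inner_smul_right, real_inner_self_eq_norm_sq]
    linarith [hI α, mul_nonneg hη.le (sq_nonneg ‖α‖)]

variable {X : Type*} [MetricSpace X] [CompactSpace X] [MeasurableSpace X] [BorelSpace X]
  [Nonempty X] {T : C(X, ℝ) →L[ℝ] C(X, ℝ)}

theorem IsRegularPositive.exists_tilting (hT : IsRegularPositive T) (hT1 : T 1 = 1) {ι : Type*}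
    [Fintype ι] {V : ι → C(X, ℝ)} (hV : ∀ i, V i ∈ lipschitzSubmodule X)
    {σ : ProbabilityMeasure X} (hσ : rateFunction (pressure T) σ ≠ ⊤) {δ : ℝ} (hδ : 0 < δ) :
    ∃ α e : ι → ℝ, (∀ i, |e i - ∫ x, V i x ∂(σ : Measure X)| ≤ δ) ∧
      ∑ i, α i * e i - pressure T (∑ i, α i • V i) ≤ (rateFunction (pressure T) σ).toReal ∧
      ∀ i, HasDerivAt (fun t : ℝ => pressure T (∑ i, α i • V i + t • V i)) (e i) 0 := by
  classical
  set F : EuclideanSpace ℝ ι → ℝ := fun α => pressure T (∑ i, α i • V i)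
  have hF : Continuous F := (continuous_pressure hT.monotone hT.apply_one_pos).comp (by fun_prop)
  have hF0 : F 0 ≤ 0 := by simp [F, pressure_zero hT.monotone hT1]
  set s : EuclideanSpace ℝ ι := WithLp.toLp 2 fun i => ∫ x, V i x ∂(σ : Measure X)
  have hinner : ∀ α β : EuclideanSpace ℝ ι, inner ℝ α β = ∑ i, α i * β i := fun α β => by
    simp [PiLp.inner_apply, mul_comm]
  have hI : ∀ α, inner ℝ α s - F α ≤ (rateFunction (pressure T) σ).toReal := fun α => by
    have h := integral_sub_le_toReal_rateFunction hσ (∑ i, α i • V i)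
    rwa [integral_sum_smul_continuousMap, ← hinner α s] at h
  obtain ⟨α, e, he, hle, hderiv⟩ := exists_approx_exposing hF hF0 hI hδ
  refine ⟨α, e, fun i => (PiLp.norm_apply_le (e - s) i).trans he, hinner α e ▸ hle, fun i => ?_⟩
  have hVα : ∑ i, α i • V i ∈ lipschitzSubmodule X :=
    Submodule.sum_mem _ fun i _ => Submodule.smul_mem _ _ (hV i)
  obtain ⟨e', he'⟩ := hT.exists_hasDerivAt_pressure hVα (hV i)
  have hline : HasLineDerivAt ℝ F e' α (EuclideanSpace.single i 1) := by
    refine he'.congr_of_eventuallyEq (Eventually.of_forall fun t => ?_)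
    simp [F, add_smul, Finset.sum_add_distrib, ite_smul]
  have he_i : e' = e i := by simpa [hinner, PiLp.single_apply] using hderiv _ _ hline
  exact he_i ▸ he'

end Tilting

section Trajectory

open ProbabilityTheory

variable {X E : Type*} [MeasurableSpace X] [MeasurableSpace E] {ℓ : Measure E}
  [IsProbabilityMeasure ℓ] {S : X × E → X}

theorem eq_infinitePi_of_map_fin_eq_pi {P : Measure (ℕ → E)}
    (hP : ∀ n : ℕ, P.map (fun ω (i : Fin n) => ω i) = Measure.pi fun _ : Fin n => ℓ) :
    P = Measure.infinitePi fun _ : ℕ => ℓ := by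
  refine Measure.eq_infinitePi _ fun s t ht => ?_
  obtain ⟨n, hn⟩ := s.exists_nat_subset_range
  set u : ℕ → Set E := fun i => if i ∈ s then t i else Set.univ with hu
  have hum : ∀ i, MeasurableSet (u i) := fun i => by
    by_cases hi : i ∈ s <;> simp [hu, hi, ht]
  have hpre : Set.pi s t = (fun ω (i : Fin n) => ω i) ⁻¹' Set.univ.pi fun i : Fin n => u i := by
    ext ω
    simp only [Set.mem_pi, Finset.mem_coe, Set.mem_preimage, Set.mem_univ, true_imp_iff, hu]
    refine ⟨fun h i => by split_ifs with hi <;> simp [h, hi], fun h i hi => ?_⟩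
    simpa [hi] using h ⟨i, Finset.mem_range.1 (hn hi)⟩
  rw [hpre, ← Measure.map_apply (by fun_prop) (.univ_pi fun i : Fin n => hum i), hP, Measure.pi_pi,
    Fin.prod_univ_eq_prod_range (fun i => ℓ (u i)), ← Finset.prod_subset hn fun i _ hi => by
      simp [hu, hi]]
  exact Finset.prod_congr rfl fun i hi => by simp [hu, hi]

theorem measurable_traj (hS : Measurable S) : ∀ n, Measurable (traj S n)
  | 0 => measurable_fst
  | n + 1 => hS.comp ((measurable_traj hS n).prodMk ((measurable_pi_apply n).comp measurable_snd))

theorem measurable_comap_restrict_traj (hS : Measurable S) (x : X) {k n : ℕ} (hkn : k ≤ n) :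
    Measurable[.comap (Finset.range n).restrict MeasurableSpace.pi]
      fun ω : ℕ → E => traj S k (x, ω) := by
  induction k with
  | zero => exact measurable_const
  | succ k ih =>
    have hω : Measurable[.comap (Finset.range n).restrict MeasurableSpace.pi]
        fun ω : ℕ → E => ω k :=
      (measurable_pi_apply (⟨k, Finset.mem_range.2 hkn⟩ : Finset.range n)).comp
        (comap_measurable (Finset.range n).restrict)
    exact hS.comp ((ih (Nat.le_of_succ_le hkn)).prodMk hω)

theorem indepFun_eval_of_measurable_comap_restrict {Y : Type*} [MeasurableSpace Y] {n : ℕ}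
    {f : (ℕ → E) → Y} (hf : Measurable[.comap (Finset.range n).restrict MeasurableSpace.pi] f) :
    IndepFun f (fun ω => ω n) (Measure.infinitePi fun _ : ℕ => ℓ) := by
  have hcoord : iIndepFun (fun i (ω : ℕ → E) => ω i) (Measure.infinitePi fun _ : ℕ => ℓ) :=
    iIndepFun_infinitePi (X := fun _ => id) fun _ => measurable_id
  have h := hcoord.indepFun_finset (Finset.range n) {n} (by simp) measurable_pi_apply
  have hn := h.comp measurable_id
    (measurable_pi_apply (⟨n, Finset.mem_singleton_self n⟩ : ({n} : Finset ℕ)))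
  exact indep_of_indep_of_le_left hn hf.comap_le

theorem lintegral_mul_traj_succ (hS : Measurable S) (x : X) (n : ℕ) {F : (ℕ → E) → ℝ≥0∞}
    (hF : Measurable[.comap (Finset.range n).restrict MeasurableSpace.pi] F) {g : X → ℝ≥0∞}
    (hg : Measurable g) :
    ∫⁻ ω, F ω * g (traj S (n + 1) (x, ω)) ∂(Measure.infinitePi fun _ : ℕ => ℓ) =
      ∫⁻ ω, F ω * ∫⁻ ζ, g (S (traj S n (x, ω), ζ)) ∂ℓ ∂(Measure.infinitePi fun _ : ℕ => ℓ) := by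
  have hY := hF.prodMk (measurable_comap_restrict_traj hS x le_rfl)
  have hYm := hY.mono (Measurable.comap_le (Finset.measurable_restrict _)) le_rfl
  have hΦ : Measurable fun z : (ℝ≥0∞ × X) × E => z.1.1 * g (S (z.1.2, z.2)) := by fun_prop
  have hlaw := (indepFun_eval_of_measurable_comap_restrict (ℓ := ℓ) hY).map_prod_eq_prod_map_map
    hYm.aemeasurable (measurable_pi_apply n).aemeasurable
  rw [Measure.infinitePi_map_eval] at hlaw
  calc ∫⁻ ω, F ω * g (traj S (n + 1) (x, ω)) ∂(Measure.infinitePi fun _ : ℕ => ℓ)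
      = ∫⁻ z, z.1.1 * g (S (z.1.2, z.2)) ∂((Measure.infinitePi fun _ : ℕ => ℓ).map
          fun ω => ((F ω, traj S n (x, ω)), ω n)) :=
        (lintegral_map hΦ (hYm.prodMk (measurable_pi_apply n))).symm
    _ = ∫⁻ ω, F ω * ∫⁻ ζ, g (S (traj S n (x, ω), ζ)) ∂ℓ ∂(Measure.infinitePi fun _ : ℕ => ℓ) := by
      rw [hlaw, lintegral_prod _ hΦ.aemeasurable, lintegral_map hΦ.lintegral_prod_right' hYm]
      exact lintegral_congr fun ω => lintegral_const_mul _ (by fun_prop)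

end Trajectory

section EmpiricalMeasure

variable {X E : Type*} [TopologicalSpace X] [MeasurableSpace X] [BorelSpace X] {S : X × E → X}

theorem natCast_mul_integral_empDist (V : C(X, ℝ)) (n : ℕ) (p : X × (ℕ → E)) :
    n * ∫ x, V x ∂(empDist S n p : Measure X) = ∑ k ∈ Finset.Icc 1 n, V (traj S k p) := by
  obtain rfl | hn := eq_or_ne n 0
  · simp
  have hn' : (n : ℝ) ≠ 0 := Nat.cast_ne_zero.2 hn
  have hdirac : ∀ x, ∫ y, V y ∂Measure.dirac x = V x := fun x =>
    integral_dirac' V x V.continuous.stronglyMeasurable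
  have hcoe : (empDist S n p : Measure X) = empMeas S n p :=
    congrArg ProbabilityMeasure.toMeasure (dif_neg hn)
  rw [hcoe, empMeas, integral_smul_measure,
    integral_finsetSum_measure fun k _ =>
      integrable_dirac' V.continuous.stronglyMeasurable ENNReal.coe_lt_top]
  simp only [hdirac, ENNReal.toReal_inv, ENNReal.toReal_natCast, smul_eq_mul]
  exact mul_inv_cancel_left₀ hn' _

end EmpiricalMeasure

section FeynmanKacMeasure

variable {X E : Type*} [TopologicalSpace X] [MeasurableSpace X] [MeasurableSpace E]
  {ℓ : Measure E} [IsProbabilityMeasure ℓ] {S : X × E → X}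

/-- The law of the trajectories started from `μ`, reweighted by the Feynman–Kac density
`exp (∑ V (x_k))` of their first `n` steps. -/
noncomputable def feynmanKacMeasure (ℓ : Measure E) [IsProbabilityMeasure ℓ] (S : X × E → X)
    (V : C(X, ℝ)) (n : ℕ) (μ : Measure X) : Measure (X × (ℕ → E)) :=
  (μ.prod (Measure.infinitePi fun _ : ℕ => ℓ)).withDensity fun p =>
    ENNReal.ofReal (Real.exp (∑ k ∈ Finset.Icc 1 n, V (traj S k p)))

theorem feynmanKacMeasure_zero (n : ℕ) (μ : Measure X) :
    feynmanKacMeasure ℓ S 0 n μ = μ.prod (Measure.infinitePi fun _ : ℕ => ℓ) := by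
  simp [feynmanKacMeasure, ← Pi.one_def]

variable [BorelSpace X]

theorem measurable_exp_sum_traj (hS : Measurable S) (V : C(X, ℝ)) (n : ℕ) :
    Measurable fun p : X × (ℕ → E) =>
      ENNReal.ofReal (Real.exp (∑ k ∈ Finset.Icc 1 n, V (traj S k p))) :=
  (Finset.measurable_fun_sum _ fun k _ =>
    V.continuous.measurable.comp (measurable_traj hS k)).exp.ennreal_ofReal

theorem feynmanKacMeasure_le (hS : Measurable S) (μ : Measure X) [SFinite μ] {U V : C(X, ℝ)}
    {n : ℕ} {b : ℝ} {A : Set (X × (ℕ → E))}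
    (hA : ∀ p ∈ A, ∫ x, V x ∂(empDist S n p : Measure X) ≤
      ∫ x, U x ∂(empDist S n p : Measure X) + b) :
    feynmanKacMeasure ℓ S V n μ A ≤
      ENNReal.ofReal (Real.exp (n * b)) * feynmanKacMeasure ℓ S U n μ A := by
  have hm := measurable_exp_sum_traj (E := E) hS U n
  rw [feynmanKacMeasure, feynmanKacMeasure, withDensity_apply', withDensity_apply',
    ← lintegral_const_mul _ hm]
  refine setLIntegral_mono (hm.const_mul _) fun p hp => ?_
  rw [← ENNReal.ofReal_mul (Real.exp_pos _).le, ← Real.exp_add, ← natCast_mul_integral_empDist,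
    ← natCast_mul_integral_empDist, ← mul_add]
  gcongr
  linarith [hA p hp]

end FeynmanKacMeasure

section TransitionOperator

variable {X E : Type*} [TopologicalSpace X] [MeasurableSpace X] [MeasurableSpace E]
  {ℓ : Measure E} {S : X × E → X} {T : C(X, ℝ) →L[ℝ] C(X, ℝ)}

/-- `T` is the transition operator of the random dynamical system `S` driven by the noise `ℓ`. -/
def IsTransitionOperator (ℓ : Measure E) (S : X × E → X) (T : C(X, ℝ) →L[ℝ] C(X, ℝ)) : Prop :=
  ∀ f x, T f x = ∫ y, f y ∂(ℓ.map fun ζ => S (x, ζ))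

theorem IsTransitionOperator.apply_one [IsProbabilityMeasure ℓ] (hT : IsTransitionOperator ℓ S T)
    (hS : Measurable S) : T 1 = 1 := by
  ext x
  have hSx : Measurable fun ζ => S (x, ζ) := hS.comp measurable_prodMk_left
  have := Measure.isProbabilityMeasure_map (μ := ℓ) hSx.aemeasurable
  simp [hT 1 x]

theorem IsTransitionOperator.monotone [CompactSpace X] [OpensMeasurableSpace X] [IsFiniteMeasure ℓ]
    (hT : IsTransitionOperator ℓ S T) : Monotone T :=
  fun f g hfg => ContinuousMap.le_def.2 fun x => by
    rw [hT, hT]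
    exact integral_mono (integrable_continuousMap f _) (integrable_continuousMap g _) hfg

end TransitionOperator

section PathEstimates

variable {X E : Type*} [PseudoMetricSpace X] [CompactSpace X] [MeasurableSpace X] [BorelSpace X]
  [MeasurableSpace E] {ℓ : Measure E} [IsProbabilityMeasure ℓ] {S : X × E → X}
  {T : C(X, ℝ) →L[ℝ] C(X, ℝ)}

theorem lintegral_exp_sum_traj (hS : Measurable S) (hT : IsTransitionOperator ℓ S T)
    (V : C(X, ℝ)) (n : ℕ) {f : C(X, ℝ)} (hf : 0 ≤ f) (x : X) :
    ∫⁻ ω, ENNReal.ofReal (Real.exp (∑ k ∈ Finset.Icc 1 n, V (traj S k (x, ω)))) *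
        ENNReal.ofReal (f (traj S n (x, ω))) ∂(Measure.infinitePi fun _ : ℕ => ℓ) =
      ENNReal.ofReal ((feynmanKac T V ^ n) f x) := by
  induction n generalizing f with
  | zero => simp [traj]
  | succ n ih =>
    have hweight : Measurable[.comap (Finset.range n).restrict MeasurableSpace.pi] fun ω =>
        ENNReal.ofReal (Real.exp (∑ k ∈ Finset.Icc 1 n, V (traj S k (x, ω)))) :=
      (Finset.measurable_fun_sum _ fun k hk => V.continuous.measurable.comp
        (measurable_comap_restrict_traj hS x (Finset.mem_Icc.1 hk).2)).exp.ennreal_ofReal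
    have hVf : 0 ≤ NormedSpace.exp V * f := mul_nonneg (exp_nonneg V) hf
    have hstep : ∀ y, ∫⁻ ζ, ENNReal.ofReal ((NormedSpace.exp V * f) (S (y, ζ))) ∂ℓ =
        ENNReal.ofReal (feynmanKac T V f y) := fun y => by
      have hSy : Measurable fun ζ => S (y, ζ) := hS.comp measurable_prodMk_left
      have := Measure.isProbabilityMeasure_map (μ := ℓ) hSy.aemeasurable
      rw [feynmanKac_apply, hT, ofReal_integral_eq_lintegral_ofReal
        (integrable_continuousMap _ _) (Eventually.of_forall hVf),
        lintegral_map (by fun_prop) hSy]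
    have hTf : 0 ≤ feynmanKac T V f :=
      map_nonneg_of_monotone (monotone_feynmanKac hT.monotone V) hf
    rw [pow_add_apply _ n 1, pow_one, ← ih hTf]
    simp only [← hstep]
    rw [← lintegral_mul_traj_succ hS x n hweight
      (g := fun z => ENNReal.ofReal ((NormedSpace.exp V * f) z)) (by fun_prop)]
    refine lintegral_congr fun ω => ?_
    rw [Finset.sum_Icc_succ_top (Nat.le_add_left 1 n), Real.exp_add,
      ENNReal.ofReal_mul (Real.exp_pos _).le, mul_assoc, ContinuousMap.mul_apply, exp_apply,
      ENNReal.ofReal_mul (Real.exp_pos _).le]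

theorem feynmanKacMeasure_univ (hS : Measurable S) (hT : IsTransitionOperator ℓ S T)
    (V : C(X, ℝ)) (n : ℕ) (μ : Measure X) :
    feynmanKacMeasure ℓ S V n μ Set.univ = ∫⁻ x, ENNReal.ofReal ((feynmanKac T V ^ n) 1 x) ∂μ := by
  rw [feynmanKacMeasure, withDensity_apply _ .univ, setLIntegral_univ,
    lintegral_prod _ (measurable_exp_sum_traj hS V n).aemeasurable]
  refine lintegral_congr fun x => ?_
  simpa using lintegral_exp_sum_traj hS hT V n zero_le_one x

variable [Nonempty X]

theorem exists_feynmanKacMeasure_univ_le (hS : Measurable S)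
    (hT : IsTransitionOperator ℓ S T) {V : C(X, ℝ)} {a : ℝ} (ha : pressure T V < a) :
    ∃ M > (0 : ℝ), ∀ (n : ℕ) (μ : ProbabilityMeasure X),
      feynmanKacMeasure ℓ S V n μ Set.univ ≤ ENNReal.ofReal (M * Real.exp (n * a)) := by
  obtain ⟨M, hM, hle⟩ := exists_feynmanKac_pow_apply_one_le hT.monotone
    (fun x => by simp [hT.apply_one hS]) ha
  refine ⟨M, hM, fun n μ => ?_⟩
  rw [feynmanKacMeasure_univ hS hT]
  calc ∫⁻ x, ENNReal.ofReal ((feynmanKac T V ^ n) 1 x) ∂(μ : Measure X)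
      ≤ ∫⁻ _, ENNReal.ofReal (M * Real.exp (n * a)) ∂(μ : Measure X) :=
        lintegral_mono fun x => ENNReal.ofReal_le_ofReal (hle n x)
    _ = ENNReal.ofReal (M * Real.exp (n * a)) := by simp

theorem IsRegularPositive.exists_le_feynmanKacMeasure_univ (hreg : IsRegularPositive T)
    (hS : Measurable S) (hT : IsTransitionOperator ℓ S T) {V : C(X, ℝ)}
    (hV : V ∈ lipschitzSubmodule X) :
    ∃ c > (0 : ℝ), ∀ (n : ℕ) (μ : ProbabilityMeasure X),
      ENNReal.ofReal (c * Real.exp (n * pressure T V)) ≤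
        feynmanKacMeasure ℓ S V n μ Set.univ := by
  obtain ⟨c, hc, hle⟩ := hreg.exists_le_feynmanKac_pow_apply_one hV
  refine ⟨c, hc, fun n μ => ?_⟩
  rw [feynmanKacMeasure_univ hS hT]
  calc ENNReal.ofReal (c * Real.exp (n * pressure T V))
      = ∫⁻ _, ENNReal.ofReal (c * Real.exp (n * pressure T V)) ∂(μ : Measure X) := by simp
    _ ≤ ∫⁻ x, ENNReal.ofReal ((feynmanKac T V ^ n) 1 x) ∂(μ : Measure X) :=
        lintegral_mono fun x => ENNReal.ofReal_le_ofReal (hle n x)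

theorem exists_feynmanKacMeasure_le_integral_empDist_le (hS : Measurable S)
    (hT : IsTransitionOperator ℓ S T) (U : C(X, ℝ)) {V : C(X, ℝ)} {a b : ℝ}
    (ha : pressure T V < a + b) :
    ∃ M > (0 : ℝ), ∀ (n : ℕ) (μ : ProbabilityMeasure X),
      feynmanKacMeasure ℓ S U n μ {p | ∫ x, U x ∂(empDist S n p : Measure X) + b ≤
        ∫ x, V x ∂(empDist S n p : Measure X)} ≤ ENNReal.ofReal (M * Real.exp (n * a)) := by
  obtain ⟨M, hM, hle⟩ := exists_feynmanKacMeasure_univ_le hS hT ha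
  refine ⟨M, hM, fun n μ => ?_⟩
  calc feynmanKacMeasure ℓ S U n μ {p | ∫ x, U x ∂(empDist S n p : Measure X) + b ≤
          ∫ x, V x ∂(empDist S n p : Measure X)}
      ≤ ENNReal.ofReal (Real.exp (n * -b)) * feynmanKacMeasure ℓ S V n μ Set.univ := by
        refine (feynmanKacMeasure_le hS _ fun p hp => ?_).trans
          (mul_le_mul_right (measure_mono (Set.subset_univ _)) _)
        have hp' : ∫ x, U x ∂(empDist S n p : Measure X) + b ≤
          ∫ x, V x ∂(empDist S n p : Measure X) := hp
        linarith
    _ ≤ ENNReal.ofReal (Real.exp (n * -b)) * ENNReal.ofReal (M * Real.exp (n * (a + b))) := by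
        gcongr
        exact hle n μ
    _ = ENNReal.ofReal (M * Real.exp (n * a)) := by
        rw [← ENNReal.ofReal_mul (Real.exp_pos _).le, mul_left_comm, ← Real.exp_add,
          ← mul_add, neg_add_cancel_comm_assoc]

/-- Exponential Chebyshev inequality: at slope `b > e` in the direction `W`, the pressure drops
strictly below its linear upper bound. -/
theorem eventually_feynmanKacMeasure_le_integral_empDist_le (hS : Measurable S)
    (hT : IsTransitionOperator ℓ S T) {V W : C(X, ℝ)} {e b : ℝ}
    (he : HasDerivAt (fun t : ℝ => pressure T (V + t • W)) e 0) (heb : e < b) {ε : ℝ}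
    (hε : 0 < ε) :
    ∀ᶠ n : ℕ in atTop, ∀ μ : ProbabilityMeasure X,
      feynmanKacMeasure ℓ S V n μ {p | b ≤ ∫ x, W x ∂(empDist S n p : Measure X)} ≤
        ENNReal.ofReal (ε * Real.exp (n * pressure T V)) := by
  obtain ⟨t, ht, hlt⟩ : ∃ t > 0, pressure T (V + t • W) < pressure T V + t * b := by
    have hslope := (hasDerivAt_iff_tendsto_slope.1 he).mono_left (nhdsGT_le_nhdsNE 0)
    obtain ⟨t, hslope, ht⟩ :=
      ((hslope.eventually_lt_const heb).and self_mem_nhdsWithin).exists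
    refine ⟨t, ht, ?_⟩
    rw [slope_def_field, sub_zero, div_lt_iff₀ ht, zero_smul, add_zero] at hslope
    linarith
  obtain ⟨a, ha, haV⟩ := exists_between (sub_lt_iff_lt_add.2 hlt)
  obtain ⟨M, -, hle⟩ := exists_feynmanKacMeasure_le_integral_empDist_le hS hT V
    (sub_lt_iff_lt_add.1 ha)
  have hlim : Tendsto (fun n : ℕ => M * Real.exp (n * (a - pressure T V))) atTop (𝓝 0) := by
    have := Real.tendsto_exp_atBot.comp
      (tendsto_natCast_atTop_atTop.atTop_mul_const_of_neg (sub_neg.2 haV))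
    simpa using this.const_mul M
  filter_upwards [hlim.eventually_le_const hε] with n hn μ
  have hexp : M * Real.exp (n * a) ≤ ε * Real.exp (n * pressure T V) := by
    calc M * Real.exp (n * a)
        = M * Real.exp (n * (a - pressure T V)) * Real.exp (n * pressure T V) := by
          rw [mul_assoc, ← Real.exp_add]
          ring_nf
      _ ≤ ε * Real.exp (n * pressure T V) := by gcongr
  refine (measure_mono fun p hp => ?_).trans ((hle n μ).trans (ENNReal.ofReal_le_ofReal hexp))
  have hadd : ∫ x, (V + t • W) x ∂(empDist S n p : Measure X) =
      ∫ x, V x ∂(empDist S n p : Measure X) + t * ∫ x, W x ∂(empDist S n p : Measure X) := by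
    rw [← integral_const_mul]
    exact integral_add (integrable_continuousMap V _) ((integrable_continuousMap W _).const_mul t)
  exact (add_le_add_right (mul_le_mul_of_nonneg_left hp ht.le) _).trans_eq hadd.symm

theorem eventually_feynmanKacMeasure_le_abs_integral_empDist_sub_le (hS : Measurable S)
    (hT : IsTransitionOperator ℓ S T) {V W : C(X, ℝ)} {e r : ℝ}
    (he : HasDerivAt (fun t : ℝ => pressure T (V + t • W)) e 0) (hr : 0 < r) {ε : ℝ}
    (hε : 0 < ε) :
    ∀ᶠ n : ℕ in atTop, ∀ μ : ProbabilityMeasure X,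
      feynmanKacMeasure ℓ S V n μ {p | r ≤ |∫ x, W x ∂(empDist S n p : Measure X) - e|} ≤
        ENNReal.ofReal (ε * Real.exp (n * pressure T V)) := by
  have he' : HasDerivAt (fun t : ℝ => pressure T (V + t • -W)) (-e) 0 := by
    have hneg := (neg_zero (G := ℝ).symm ▸ he).comp (0 : ℝ) (hasDerivAt_neg 0)
    simpa [Function.comp_def] using hneg
  filter_upwards [eventually_feynmanKacMeasure_le_integral_empDist_le (b := e + r) hS hT
      he (by linarith) (half_pos hε),
    eventually_feynmanKacMeasure_le_integral_empDist_le (b := -e + r) hS hT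
      he' (by linarith) (half_pos hε)] with n hupper hlower μ
  calc feynmanKacMeasure ℓ S V n μ {p | r ≤ |∫ x, W x ∂(empDist S n p : Measure X) - e|}
      ≤ feynmanKacMeasure ℓ S V n μ ({p | e + r ≤ ∫ x, W x ∂(empDist S n p : Measure X)} ∪
          {p | -e + r ≤ ∫ x, (-W) x ∂(empDist S n p : Measure X)}) := by
        refine measure_mono fun p (hp : r ≤ |_|) => (le_abs.1 hp).imp (fun h => ?_) fun h => ?_
        · exact le_sub_iff_add_le'.1 h
        · simp only [Set.mem_ofPred_eq, ContinuousMap.neg_apply, integral_neg]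
          linarith
    _ ≤ ENNReal.ofReal (ε / 2 * Real.exp (n * pressure T V)) +
          ENNReal.ofReal (ε / 2 * Real.exp (n * pressure T V)) :=
        (measure_union_le _ _).trans (add_le_add (hupper μ) (hlower μ))
    _ = ENNReal.ofReal (ε * Real.exp (n * pressure T V)) := by
        rw [← ENNReal.ofReal_add (by positivity) (by positivity), ← add_mul, add_halves]

theorem eventually_feynmanKacMeasure_exists_le_abs_integral_empDist_sub_le {ι : Type*} [Finite ι]
    (hS : Measurable S) (hT : IsTransitionOperator ℓ S T) {V : C(X, ℝ)} {W : ι → C(X, ℝ)}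
    {e : ι → ℝ} (he : ∀ i, HasDerivAt (fun t : ℝ => pressure T (V + t • W i)) (e i) 0) {r : ℝ}
    (hr : 0 < r) {ε : ℝ} (hε : 0 < ε) :
    ∀ᶠ n : ℕ in atTop, ∀ μ : ProbabilityMeasure X,
      feynmanKacMeasure ℓ S V n μ
          {p | ∃ i, r ≤ |∫ x, W i x ∂(empDist S n p : Measure X) - e i|} ≤
        ENNReal.ofReal (ε * Real.exp (n * pressure T V)) := by
  cases nonempty_fintype ι
  have hcard : Fintype.card ι * (ε / (Fintype.card ι + 1)) ≤ ε := by
    rw [mul_div_left_comm]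
    exact mul_le_of_le_one_right hε.le (div_le_one_of_le₀ (by linarith) (by positivity))
  filter_upwards [eventually_all.2 fun i =>
    eventually_feynmanKacMeasure_le_abs_integral_empDist_sub_le hS hT (he i) hr
      (show 0 < ε / (Fintype.card ι + 1) by positivity)] with n hn μ
  set ν := feynmanKacMeasure ℓ S V n μ
  set z := Real.exp (n * pressure T V)
  calc ν {p | ∃ i, r ≤ |∫ x, W i x ∂(empDist S n p : Measure X) - e i|}
      ≤ ∑ i, ν {p | r ≤ |∫ x, W i x ∂(empDist S n p : Measure X) - e i|} := by
        rw [Set.ofPred_exists]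
        exact measure_iUnion_fintype_le _ _
    _ ≤ ∑ _ : ι, ENNReal.ofReal (ε / (Fintype.card ι + 1) * z) :=
        Finset.sum_le_sum fun i _ => hn i μ
    _ = ENNReal.ofReal (Fintype.card ι * (ε / (Fintype.card ι + 1)) * z) := by
        rw [Finset.sum_const, Finset.card_univ, nsmul_eq_mul, mul_assoc,
          ENNReal.ofReal_mul (Nat.cast_nonneg _), ENNReal.ofReal_natCast]
    _ ≤ ENNReal.ofReal (ε * z) := by gcongr

theorem IsRegularPositive.exists_eventually_le_feynmanKacMeasure {ι : Type*} [Finite ι]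
    (hreg : IsRegularPositive T) (hS : Measurable S) (hT : IsTransitionOperator ℓ S T)
    {V : C(X, ℝ)} (hV : V ∈ lipschitzSubmodule X) {W : ι → C(X, ℝ)} {e : ι → ℝ}
    (he : ∀ i, HasDerivAt (fun t : ℝ => pressure T (V + t • W i)) (e i) 0) {r : ℝ} (hr : 0 < r) :
    ∃ c > (0 : ℝ), ∀ᶠ n : ℕ in atTop, ∀ μ : ProbabilityMeasure X,
      ENNReal.ofReal (c * Real.exp (n * pressure T V)) ≤ feynmanKacMeasure ℓ S V n μ
        {p | ∀ i, |∫ x, W i x ∂(empDist S n p : Measure X) - e i| < r} := by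
  obtain ⟨c, hc, hle⟩ := hreg.exists_le_feynmanKacMeasure_univ hS hT hV
  refine ⟨c / 2, half_pos hc, ?_⟩
  filter_upwards [eventually_feynmanKacMeasure_exists_le_abs_integral_empDist_sub_le hS hT he hr
    (half_pos hc)] with n hbad μ
  set ν := feynmanKacMeasure ℓ S V n μ
  set z := Real.exp (n * pressure T V)
  set G := {p | ∀ i, |∫ x, W i x ∂(empDist S n p : Measure X) - e i| < r}
  have hcompl : ν Gᶜ ≤ ENNReal.ofReal (c / 2 * z) :=
    (measure_mono fun p hp => by simpa [G] using hp).trans (hbad μ)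
  have hsplit : ENNReal.ofReal (c * z) ≤ ν G + ENNReal.ofReal (c / 2 * z) :=
    calc ENNReal.ofReal (c * z) ≤ ν Set.univ := hle n μ
      _ ≤ ν G + ν Gᶜ := Set.union_compl_self G ▸ measure_union_le G Gᶜ
      _ ≤ ν G + ENNReal.ofReal (c / 2 * z) := by gcongr
  calc ENNReal.ofReal (c / 2 * z) = ENNReal.ofReal (c * z) - ENNReal.ofReal (c / 2 * z) := by
        rw [← ENNReal.ofReal_sub _ (by positivity)]
        ring_nf
    _ ≤ ν G := tsub_le_iff_right.2 hsplit

end PathEstimates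

section ExponentialRate

variable {ι : Type*} {u : ℕ → ι → ℝ≥0∞} {M b : ℝ}

theorem tendsto_inv_mul_log_ofReal_mul_exp (hM : 0 < M) (b : ℝ) :
    Tendsto (fun n : ℕ => ((n : ℝ)⁻¹ : EReal) * ENNReal.log (ENNReal.ofReal (M * Real.exp (n * b))))
      atTop (𝓝 b) := by
  have hlim : Tendsto (fun n : ℕ => Real.log M / n + b) atTop (𝓝 b) := by
    simpa using (tendsto_const_div_atTop_nhds_zero_nat (Real.log M)).add_const b
  refine (EReal.tendsto_coe.2 hlim).congr' ?_
  filter_upwards [eventually_ne_atTop 0] with n hn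
  have hn' : (n : ℝ) ≠ 0 := Nat.cast_ne_zero.2 hn
  rw [ENNReal.log_ofReal_of_pos (by positivity), Real.log_mul hM.ne' (Real.exp_pos _).ne',
    Real.log_exp, ← EReal.coe_inv, ← EReal.coe_mul]
  congr 1
  field_simp

theorem inv_mul_log_le_inv_mul_log (n : ℕ) {x y : ℝ≥0∞} (hxy : x ≤ y) :
    ((n : ℝ)⁻¹ : EReal) * ENNReal.log x ≤ ((n : ℝ)⁻¹ : EReal) * ENNReal.log y :=
  mul_le_mul_of_nonneg_left (ENNReal.log_le_log hxy)
    (EReal.inv_nonneg_of_nonneg (EReal.coe_nonneg.2 n.cast_nonneg))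

theorem limsup_iSup_inv_mul_log_le (hM : 0 < M)
    (hu : ∀ᶠ n : ℕ in atTop, ∀ i, u n i ≤ ENNReal.ofReal (M * Real.exp (n * b))) :
    limsup (fun n : ℕ => ⨆ i, ((n : ℝ)⁻¹ : EReal) * ENNReal.log (u n i)) atTop ≤ b := by
  rw [← (tendsto_inv_mul_log_ofReal_mul_exp hM b).limsup_eq]
  refine limsup_le_limsup ?_
  filter_upwards [hu] with n hn
  exact iSup_le fun i => inv_mul_log_le_inv_mul_log n (hn i)

theorem le_liminf_iInf_inv_mul_log (hM : 0 < M)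
    (hu : ∀ᶠ n : ℕ in atTop, ∀ i, ENNReal.ofReal (M * Real.exp (n * b)) ≤ u n i) :
    b ≤ liminf (fun n : ℕ => ⨅ i, ((n : ℝ)⁻¹ : EReal) * ENNReal.log (u n i)) atTop := by
  rw [← (tendsto_inv_mul_log_ofReal_mul_exp hM b).liminf_eq]
  refine liminf_le_liminf ?_
  filter_upwards [hu] with n hn
  exact le_iInf fun i => inv_mul_log_le_inv_mul_log n (hn i)

end ExponentialRate

section LargeDeviations

variable {X E : Type*} [MetricSpace X] [CompactSpace X] [Nonempty X] [MeasurableSpace X]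
  [BorelSpace X] [MeasurableSpace E] {ℓ : Measure E} [IsProbabilityMeasure ℓ] {S : X × E → X}
  {T : C(X, ℝ) →L[ℝ] C(X, ℝ)}

theorem exists_measure_empDist_mem_le_of_isCompact (hS : Measurable S)
    (hT : IsTransitionOperator ℓ S T) {K : Set (ProbabilityMeasure X)} (hK : IsCompact K) {a : ℝ}
    (ha : ∀ σ ∈ K, ∃ V : C(X, ℝ), a < ∫ x, V x ∂(σ : Measure X) - pressure T V) :
    ∃ M > (0 : ℝ), ∀ (n : ℕ) (μ : ProbabilityMeasure X),
      ((μ : Measure X).prod (Measure.infinitePi fun _ : ℕ => ℓ)) {p | empDist S n p ∈ K} ≤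
        ENNReal.ofReal (M * Real.exp (n * -a)) := by
  refine hK.induction_on ⟨1, one_pos, by simp⟩ ?_ ?_ fun σ hσ => ?_
  · rintro K K' hKK' ⟨M, hM, hle⟩
    exact ⟨M, hM, fun n μ => (measure_mono (Set.preimage_mono hKK')).trans (hle n μ)⟩
  · rintro K K' ⟨M, hM, hle⟩ ⟨M', hM', hle'⟩
    refine ⟨M + M', add_pos hM hM', fun n μ => ?_⟩
    rw [add_mul, ENNReal.ofReal_add (by positivity) (by positivity)]
    exact (measure_union_le _ _).trans (add_le_add (hle n μ) (hle' n μ))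
  · obtain ⟨V, hV⟩ := ha σ hσ
    obtain ⟨b, hab, hbσ⟩ := exists_between (lt_sub_iff_add_lt.1 hV)
    obtain ⟨M, hM, hle⟩ := exists_feynmanKacMeasure_le_integral_empDist_le hS hT 0
      (lt_neg_add_iff_add_lt.2 hab)
    refine ⟨{τ | b < ∫ x, V x ∂(τ : Measure X)}, mem_nhdsWithin_of_mem_nhds
      ((isOpen_lt continuous_const (continuous_integral_continuousMap V)).mem_nhds hbσ), M, hM,
      fun n μ => ?_⟩
    rw [← feynmanKacMeasure_zero n]
    refine (measure_mono fun p (hp : b < _) => ?_).trans (hle n μ)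
    simpa using hp.le

theorem IsRegularPositive.exists_eventually_le_measure_abs_integral_empDist_sub_lt {ι : Type*}
    [Fintype ι] (hreg : IsRegularPositive T) (hS : Measurable S) (hT : IsTransitionOperator ℓ S T)
    {W : ι → C(X, ℝ)} (hW : ∀ i, W i ∈ lipschitzSubmodule X) {α e : ι → ℝ}
    (he : ∀ i, HasDerivAt (fun t : ℝ => pressure T (∑ i, α i • W i + t • W i)) (e i) 0) {r b : ℝ}
    (hr : 0 < r) (hb : ∑ i, (α i * e i + |α i| * r) - pressure T (∑ i, α i • W i) ≤ b) :
    ∃ c > (0 : ℝ), ∀ᶠ n : ℕ in atTop, ∀ μ : ProbabilityMeasure X,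
      ENNReal.ofReal (c * Real.exp (n * -b)) ≤
        ((μ : Measure X).prod (Measure.infinitePi fun _ : ℕ => ℓ))
          {p | ∀ i, |∫ x, W i x ∂(empDist S n p : Measure X) - e i| < r} := by
  set V : C(X, ℝ) := ∑ i, α i • W i
  have hV : V ∈ lipschitzSubmodule X := sum_mem fun i _ => Submodule.smul_mem _ (α i) (hW i)
  obtain ⟨c, hc, hev⟩ := hreg.exists_eventually_le_feynmanKacMeasure hS hT hV he hr
  refine ⟨c, hc, ?_⟩
  filter_upwards [hev] with n hn μ
  set G : Set (X × (ℕ → E)) := {p | ∀ i, |∫ x, W i x ∂(empDist S n p : Measure X) - e i| < r}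
  have hGV : ∀ p ∈ G, ∫ x, V x ∂(empDist S n p : Measure X) ≤
      ∫ x, (0 : C(X, ℝ)) x ∂(empDist S n p : Measure X) + (pressure T V + b) := fun p hp => by
    have hdev : ∑ i, α i * ∫ x, W i x ∂(empDist S n p : Measure X) ≤
        ∑ i, (α i * e i + |α i| * r) := by
      refine Finset.sum_le_sum fun i _ => ?_
      have := (le_abs_self _).trans_eq (abs_mul (α i) _) |>.trans
        (mul_le_mul_of_nonneg_left (hp i).le (abs_nonneg (α i)))
      linarith
    rw [integral_sum_smul_continuousMap]
    simp only [ContinuousMap.zero_apply, integral_zero]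
    linarith
  have hGle := (hn μ).trans (feynmanKacMeasure_le hS (μ : Measure X) hGV)
  rw [feynmanKacMeasure_zero] at hGle
  calc ENNReal.ofReal (c * Real.exp (n * -b))
      = ENNReal.ofReal (Real.exp (-(n * (pressure T V + b)))) *
          ENNReal.ofReal (c * Real.exp (n * pressure T V)) := by
        rw [← ENNReal.ofReal_mul (Real.exp_pos _).le, mul_left_comm, ← Real.exp_add]
        ring_nf
    _ ≤ ENNReal.ofReal (Real.exp (-(n * (pressure T V + b)))) *
          (ENNReal.ofReal (Real.exp (n * (pressure T V + b))) *
            ((μ : Measure X).prod (Measure.infinitePi fun _ : ℕ => ℓ)) G) := by gcongr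
    _ = ((μ : Measure X).prod (Measure.infinitePi fun _ : ℕ => ℓ)) G := by
        rw [← mul_assoc, ← ENNReal.ofReal_mul (Real.exp_pos _).le, ← Real.exp_add,
          neg_add_cancel, Real.exp_zero, ENNReal.ofReal_one, one_mul]

theorem IsRegularPositive.exists_eventually_le_measure_empDist_mem (hreg : IsRegularPositive T)
    (hS : Measurable S) (hT : IsTransitionOperator ℓ S T) {U : Set (ProbabilityMeasure X)}
    (hU : IsOpen U) {σ : ProbabilityMeasure X} (hσU : σ ∈ U)
    (hσ : rateFunction (pressure T) σ ≠ ⊤) {b : ℝ} (hb : (rateFunction (pressure T) σ).toReal < b) :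
    ∃ c > (0 : ℝ), ∀ᶠ n : ℕ in atTop, ∀ μ : ProbabilityMeasure X,
      ENNReal.ofReal (c * Real.exp (n * -b)) ≤
        ((μ : Measure X).prod (Measure.infinitePi fun _ : ℕ => ℓ)) {p | empDist S n p ∈ U} := by
  obtain ⟨s, hs⟩ := exists_finset_lipschitz_forall_mem hU hσU
  obtain ⟨α, e, he, hle, hderiv⟩ := hreg.exists_tilting (hT.apply_one hS)
    (V := fun V : s => V.1.1) (fun V => V.1.2) hσ one_half_pos
  obtain ⟨r, hr, hr_half, hrα⟩ : ∃ r > 0, r ≤ 1 / 2 ∧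
      ∑ i, |α i| * r ≤ b - (rateFunction (pressure T) σ).toReal := by
    have hlim : Tendsto (fun r => ∑ i, |α i| * r) (𝓝[>] 0) (𝓝 0) := by
      have hcont : Continuous fun r => ∑ i, |α i| * r := by fun_prop
      simpa using (hcont.tendsto 0).mono_left nhdsWithin_le_nhds
    obtain ⟨r, hrα, hr, hr_half⟩ := ((hlim.eventually_le_const (sub_pos.2 hb)).and
      (Ioc_mem_nhdsGT one_half_pos)).exists
    exact ⟨r, hr, hr_half, hrα⟩
  obtain ⟨c, hc, hev⟩ := hreg.exists_eventually_le_measure_abs_integral_empDist_sub_lt hS hT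
    (fun V : s => V.1.2) hderiv hr (b := b) (by rw [Finset.sum_add_distrib]; linarith)
  refine ⟨c, hc, ?_⟩
  filter_upwards [hev] with n hn μ
  refine (hn μ).trans (measure_mono fun p hp => hs _ fun W hW => ?_)
  calc _ ≤ _ := abs_sub_le _ (e ⟨W, hW⟩) _
    _ ≤ 1 := by linarith [hp ⟨W, hW⟩, he ⟨W, hW⟩]

theorem limsup_iSup_inv_mul_log_measure_empDist_mem_le (hS : Measurable S)
    (hT : IsTransitionOperator ℓ S T) (B : Set (ProbabilityMeasure X)) :
    limsup (fun n : ℕ => ⨆ μ : ProbabilityMeasure X, ((n : ℝ)⁻¹ : EReal) * ENNReal.log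
        (((μ : Measure X).prod (Measure.infinitePi fun _ : ℕ => ℓ)) {p | empDist S n p ∈ B}))
      atTop ≤ -⨅ σ ∈ closure B, (rateFunction (pressure T) σ : EReal) := by
  refine EReal.le_neg_of_le_neg (EReal.ge_of_forall_gt_iff_ge.1 fun a ha => ?_)
  obtain ⟨M, hM, hle⟩ := exists_measure_empDist_mem_le_of_isCompact hS hT
    (isClosed_closure (s := B)).isCompact (a := a) fun σ hσ =>
      exists_lt_integral_sub_of_lt_rateFunction (pressure_zero hT.monotone (hT.apply_one hS)).le
        (ha.trans_le (iInf₂_le σ hσ))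
  rw [EReal.le_neg, ← EReal.coe_neg]
  exact limsup_iSup_inv_mul_log_le hM (Eventually.of_forall fun n μ =>
    (measure_mono (Set.preimage_mono subset_closure)).trans (hle n μ))

theorem IsRegularPositive.le_liminf_iInf_inv_mul_log_measure_empDist_mem
    (hreg : IsRegularPositive T) (hS : Measurable S) (hT : IsTransitionOperator ℓ S T)
    (B : Set (ProbabilityMeasure X)) :
    -⨅ σ ∈ interior B, (rateFunction (pressure T) σ : EReal) ≤
      liminf (fun n : ℕ => ⨅ μ : ProbabilityMeasure X, ((n : ℝ)⁻¹ : EReal) * ENNReal.log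
        (((μ : Measure X).prod (Measure.infinitePi fun _ : ℕ => ℓ)) {p | empDist S n p ∈ B}))
      atTop := by
  refine EReal.neg_le_of_neg_le (le_iInf₂ fun σ hσ => EReal.le_of_forall_lt_iff_le.1 fun b hb => ?_)
  have htop : rateFunction (pressure T) σ ≠ ⊤ := by
    rintro h
    simp [h] at hb
  rw [← EReal.coe_ennreal_toReal htop, EReal.coe_lt_coe_iff] at hb
  obtain ⟨c, hc, hev⟩ := hreg.exists_eventually_le_measure_empDist_mem hS hT isOpen_interior hσ
    htop hb
  rw [EReal.neg_le, ← EReal.coe_neg]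
  refine le_liminf_iInf_inv_mul_log hc ?_
  filter_upwards [hev] with n hn μ
  exact (hn μ).trans (measure_mono (Set.preimage_mono interior_subset))

end LargeDeviations

section Coupling

variable {X Ω : Type*} [PseudoMetricSpace X] [CompactSpace X] [MeasurableSpace X] [BorelSpace X]
  [MeasurableSpace Ω] {P : Measure Ω} [IsFiniteMeasure P]

theorem abs_integral_map_sub_integral_map_le {R R' : Ω → X} {f w : C(X, ℝ)} (hw : 0 ≤ w)
    (hf : HasGradientBound f w) (hR : AEMeasurable R P) (hR' : AEMeasurable R' P) {δ η : ℝ}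
    (hδ : 0 ≤ δ) (hη : 0 ≤ η) (hP : P {ω | δ < dist (R ω) (R' ω)} ≤ ENNReal.ofReal η) :
    |∫ y, f y ∂P.map R - ∫ y, f y ∂P.map R'| ≤ δ * ∫ y, w y ∂P.map R + 2 * ‖f‖ * η := by
  set A := toMeasurable P {ω | δ < dist (R ω) (R' ω)}
  have hA : MeasurableSet A := measurableSet_toMeasurable _ _
  have hint : ∀ (u : C(X, ℝ)) {r : Ω → X}, AEMeasurable r P → Integrable (fun ω => u (r ω)) P :=
    fun u r hr => (integrable_continuousMap u (P.map r)).comp_aemeasurable hr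
  have hpoint : ∀ ω, |f (R ω) - f (R' ω)| ≤ δ * w (R ω) + 2 * ‖f‖ * A.indicator 1 ω := fun ω => by
    have hδw : 0 ≤ δ * w (R ω) := mul_nonneg hδ (hw _)
    by_cases hω : ω ∈ A
    · have := (abs_sub (f (R ω)) (f (R' ω))).trans
        (add_le_add (f.norm_coe_le_norm _) (f.norm_coe_le_norm _))
      rw [Set.indicator_of_mem hω, Pi.one_apply]
      linarith
    · have hclose : dist (R ω) (R' ω) ≤ δ := not_lt.1 fun h => hω (subset_toMeasurable _ _ h)
      rw [Set.indicator_of_notMem hω, mul_zero, add_zero]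
      exact (hf _ _).trans (mul_le_mul_of_nonneg_right hclose (hw _))
  have hPA : P.real A ≤ η :=
    ENNReal.toReal_le_of_le_ofReal hη ((measure_toMeasurable _).trans_le hP)
  rw [integral_map hR f.continuous.aestronglyMeasurable,
    integral_map hR' f.continuous.aestronglyMeasurable,
    integral_map hR w.continuous.aestronglyMeasurable, ← integral_sub (hint f hR) (hint f hR')]
  have hA1 : Integrable (A.indicator (1 : Ω → ℝ)) P := (integrable_const (1 : ℝ)).indicator hA
  calc |∫ ω, (f (R ω) - f (R' ω)) ∂P| ≤ ∫ ω, |f (R ω) - f (R' ω)| ∂P :=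
        abs_integral_le_integral_abs
    _ ≤ ∫ ω, (δ * w (R ω) + 2 * ‖f‖ * A.indicator 1 ω) ∂P :=
        integral_mono ((hint f hR).sub (hint f hR')).abs
          (((hint w hR).const_mul δ).add (hA1.const_mul _)) hpoint
    _ = δ * ∫ ω, w (R ω) ∂P + 2 * ‖f‖ * P.real A := by
        rw [integral_add ((hint w hR).const_mul δ) (hA1.const_mul _), integral_const_mul,
          integral_const_mul, integral_indicator_one hA]
    _ ≤ δ * ∫ ω, w (R ω) ∂P + 2 * ‖f‖ * η := by gcongr

/-- The kernel form of the Lasota–Yorke inequality `LasotaYorke`. -/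
def KernelLasotaYorke (κ : X → Measure X) (q B : ℝ) : Prop :=
  ∀ f w : C(X, ℝ), 0 ≤ w → HasGradientBound f w → ∀ x x',
    |∫ y, f y ∂κ x - ∫ y, f y ∂κ x'| ≤ dist x x' * (q * ∫ y, w y ∂κ x + B * ‖f‖)

theorem KernelLasotaYorke.continuous {κ : X → ProbabilityMeasure X} {q B : ℝ}
    (hκ : KernelLasotaYorke (fun x => (κ x : Measure X)) q B) : Continuous κ := by
  refine continuous_iff_continuousAt.2 fun x =>
    tendsto_iff_forall_lipschitz_integral_tendsto.2 fun f _ ⟨K, hK⟩ => ?_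
  have hle : ∀ y, dist (∫ z, f z ∂(κ y : Measure X)) (∫ z, f z ∂(κ x : Measure X)) ≤
      dist y x * (q * K + B * ‖(⟨f, hK.continuous⟩ : C(X, ℝ))‖) := fun y => by
    rw [Real.dist_eq]
    simpa using hκ ⟨f, hK.continuous⟩ ((K : ℝ) • 1) (smul_nonneg K.2 zero_le_one)
      (hasGradientBound_of_lipschitzWith hK) y x
  refine tendsto_iff_dist_tendsto_zero.2 (squeeze_zero (fun _ => dist_nonneg) hle ?_)
  have hdist : Tendsto (fun y => dist y x) (𝓝 x) (𝓝 0) :=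
    tendsto_iff_dist_tendsto_zero.1 tendsto_id
  simpa using hdist.mul_const (q * K + B * ‖(⟨f, hK.continuous⟩ : C(X, ℝ))‖)

theorem exists_kernelLasotaYorke_of_coupling {κ : X → Measure X} [∀ x, NeZero (κ x)] {q C : ℝ}
    (hq : q < 1) {R R' : X → X → Ω → X} (hR : ∀ x x', P.map (R x x') = κ x)
    (hR' : ∀ x x', P.map (R' x x') = κ x')
    (hRR' : ∀ x x', P {ω | q * dist x x' < dist (R x x' ω) (R' x x' ω)} ≤
      ENNReal.ofReal (C * dist x x')) :
    ∃ q' B, 0 < q' ∧ q' < 1 ∧ 0 ≤ B ∧ KernelLasotaYorke κ q' B := by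
  have hRm : ∀ x x', AEMeasurable (R x x') P := fun x x' =>
    AEMeasurable.of_map_ne_zero (hR x x' ▸ NeZero.ne (κ x))
  have hR'm : ∀ x x', AEMeasurable (R' x x') P := fun x x' =>
    AEMeasurable.of_map_ne_zero (hR' x x' ▸ NeZero.ne (κ x'))
  refine ⟨max q (1 / 2), 2 * |C|, lt_max_of_lt_right one_half_pos, max_lt hq one_half_lt_one,
    by positivity, fun f w hw hf x x' => ?_⟩
  have hfar : P {ω | max q (1 / 2) * dist x x' < dist (R x x' ω) (R' x x' ω)} ≤
      ENNReal.ofReal (|C| * dist x x') := by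
    refine (measure_mono fun ω (hω : max q (1 / 2) * dist x x' < _) => ?_).trans
      ((hRR' x x').trans ?_)
    · exact (mul_le_mul_of_nonneg_right (le_max_left q _) dist_nonneg).trans_lt hω
    · gcongr
      exact le_abs_self C
  have h := abs_integral_map_sub_integral_map_le hw hf (hRm x x') (hR'm x x') (by positivity)
    (by positivity) hfar
  rw [hR, hR'] at h
  linarith

end Coupling

section MarkovOperator

/-- The operator `f ↦ ∫ f dκ(x)` on continuous functions of a Feller kernel `κ`. -/
noncomputable def markovOperator {X : Type*} [TopologicalSpace X] [CompactSpace X]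
    [MeasurableSpace X] [OpensMeasurableSpace X] (κ : C(X, ProbabilityMeasure X)) :
    C(X, ℝ) →L[ℝ] C(X, ℝ) :=
  LinearMap.mkContinuous
    { toFun f := ⟨fun x => ∫ y, f y ∂(κ x : Measure X),
        (continuous_integral_continuousMap f).comp κ.continuous⟩
      map_add' f g := by
        ext x
        exact integral_add (integrable_continuousMap f _) (integrable_continuousMap g _)
      map_smul' c f := by
        ext x
        exact integral_const_mul c _ } 1 fun f => by
    refine (ContinuousMap.norm_le _ (by positivity)).2 fun x => ?_
    simpa using norm_integral_le_of_norm_le_const (μ := (κ x : Measure X))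
      (Eventually.of_forall f.norm_coe_le_norm)

end MarkovOperator

section RandomDynamicalSystem

variable {X E : Type*} [PseudoMetricSpace X] [CompactSpace X] [MeasurableSpace X]
  [MeasurableSpace E] {ℓ : Measure E} {S : X × E → X} {T : C(X, ℝ) →L[ℝ] C(X, ℝ)}

theorem KernelLasotaYorke.lasotaYorke {q B : ℝ}
    (hκ : KernelLasotaYorke (fun x => ℓ.map fun ζ => S (x, ζ)) q B)
    (hT : IsTransitionOperator ℓ S T) : LasotaYorke T q B := fun f w hw hf x x' => by
  simpa [hT f, hT w] using hκ f w hw hf x x'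

variable [BorelSpace X] [IsProbabilityMeasure ℓ]

theorem KernelLasotaYorke.exists_isTransitionOperator (hS : Measurable S) {q B : ℝ}
    (hκ : KernelLasotaYorke (fun x => ℓ.map fun ζ => S (x, ζ)) q B) :
    ∃ T : C(X, ℝ) →L[ℝ] C(X, ℝ), IsTransitionOperator ℓ S T := by
  have hSx : ∀ x, Measurable fun ζ => S (x, ζ) := fun x => hS.comp measurable_prodMk_left
  let κ : X → ProbabilityMeasure X := fun x =>
    ⟨ℓ.map fun ζ => S (x, ζ), Measure.isProbabilityMeasure_map (hSx x).aemeasurable⟩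
  exact ⟨markovOperator ⟨κ, KernelLasotaYorke.continuous (κ := κ) hκ⟩, fun _ _ => rfl⟩

theorem IsTransitionOperator.ofReal_pow_apply (hT : IsTransitionOperator ℓ S T) (hS : Measurable S)
    (n : ℕ) {f : C(X, ℝ)} (hf : 0 ≤ f) (x : X) :
    ENNReal.ofReal ((T ^ n) f x) =
      ∫⁻ y, ENNReal.ofReal (f y) ∂kIter (fun x => ℓ.map fun ζ => S (x, ζ)) n x := by
  have hSx : ∀ x, Measurable fun ζ => S (x, ζ) := fun x => hS.comp measurable_prodMk_left
  have hκ : Measurable fun x => ℓ.map fun ζ => S (x, ζ) :=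
    Measure.measurable_of_measurable_coe _ fun s hs => by
      simp only [Measure.map_apply (hSx _) hs]
      exact measurable_measure_prodMk_left (hS hs)
  induction n generalizing f with
  | zero => simp [kIter, lintegral_dirac' _ f.continuous.measurable.ennreal_ofReal]
  | succ n ih =>
    rw [pow_add_apply _ n 1, pow_one, ih (map_nonneg_of_monotone hT.monotone hf), kIter,
      Measure.lintegral_bind hκ.aemeasurable (by fun_prop)]
    refine lintegral_congr fun y => ?_
    rw [hT, ofReal_integral_eq_lintegral_ofReal (integrable_continuousMap f _)
      (Eventually.of_forall hf)]

theorem IsTransitionOperator.uniformlyIrreducible [Nonempty X] (hT : IsTransitionOperator ℓ S T)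
    (hS : Measurable S) (hI : ∀ ε : ℝ, 0 < ε → ∃ (N : ℕ) (p : ℝ≥0∞), 0 < p ∧
      ∀ x y : X, p < kIter (fun x => ℓ.map fun ζ => S (x, ζ)) N x (Metric.ball y ε)) :
    UniformlyIrreducible T := by
  intro ε hε
  obtain ⟨N, p, hp, h⟩ := hI ε hε
  have hp_top : p ≠ ⊤ := (h (Classical.arbitrary X) (Classical.arbitrary X)).ne_top
  refine ⟨N, p.toReal, ENNReal.toReal_pos hp.ne' hp_top, fun f hf a ha y hfa x => ?_⟩
  have hnonneg : 0 ≤ (T ^ N) f x := map_nonneg_of_monotone (monotone_pow hT.monotone N) hf x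
  refine (ENNReal.ofReal_le_ofReal_iff hnonneg).1 ?_
  rw [hT.ofReal_pow_apply hS N hf]
  set ν := kIter (fun x => ℓ.map fun ζ => S (x, ζ)) N x
  calc ENNReal.ofReal (p.toReal * a) = ENNReal.ofReal a * p := by
        rw [mul_comm, ENNReal.ofReal_mul ha, ENNReal.ofReal_toReal hp_top]
    _ ≤ ENNReal.ofReal a * ν (Metric.ball y ε) := by gcongr; exact (h x y).le
    _ = ∫⁻ _ in Metric.ball y ε, ENNReal.ofReal a ∂ν := by rw [setLIntegral_const]
    _ ≤ ∫⁻ z in Metric.ball y ε, ENNReal.ofReal (f z) ∂ν :=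
        setLIntegral_mono' Metric.isOpen_ball.measurableSet
          fun z hz => ENNReal.ofReal_le_ofReal (hfa z hz)
    _ ≤ ∫⁻ z, ENNReal.ofReal (f z) ∂ν := setLIntegral_le_lintegral _ _

theorem exists_isTransitionOperator_isRegularPositive [Nonempty X] (hS : Measurable S)
    (hI : ∀ ε : ℝ, 0 < ε → ∃ (N : ℕ) (p : ℝ≥0∞), 0 < p ∧
      ∀ x y : X, p < kIter (fun x => ℓ.map fun ζ => S (x, ζ)) N x (Metric.ball y ε))
    {Ω : Type*} [MeasurableSpace Ω] {P : Measure Ω} [IsFiniteMeasure P] {q C : ℝ} (hq : q < 1)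
    {R R' : X → X → Ω → X} (hR : ∀ x x', P.map (R x x') = ℓ.map fun ζ => S (x, ζ))
    (hR' : ∀ x x', P.map (R' x x') = ℓ.map fun ζ => S (x', ζ))
    (hRR' : ∀ x x', P {ω | q * dist x x' < dist (R x x' ω) (R' x x' ω)} ≤
      ENNReal.ofReal (C * dist x x')) :
    ∃ T : C(X, ℝ) →L[ℝ] C(X, ℝ), IsTransitionOperator ℓ S T ∧ IsRegularPositive T := by
  have : ∀ x, IsProbabilityMeasure (ℓ.map fun ζ => S (x, ζ)) := fun x =>
    Measure.isProbabilityMeasure_map (hS.comp measurable_prodMk_left).aemeasurable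
  obtain ⟨q', B, hq'0, hq'1, hB, hκ⟩ := exists_kernelLasotaYorke_of_coupling hq hR hR' hRR'
  obtain ⟨T, hT⟩ := hκ.exists_isTransitionOperator hS
  exact ⟨T, hT, hT.monotone, fun x => by simp [hT.apply_one hS],
    ⟨q', B, hq'0, hq'1, hB, hκ.lasotaYorke hT⟩, hT.uniformlyIrreducible hS hI⟩

end RandomDynamicalSystem

theorem uniform_LDP_for_RDS_general
    {X E : Type*} [MetricSpace X] [CompactSpace X] [Nonempty X]
    [MeasurableSpace X] [BorelSpace X] [MeasurableSpace E]
    (ℓ : Measure E) [IsProbabilityMeasure ℓ]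
    (S : X × E → X) (hS : Measurable S)
    (κ : X → Measure X) (hκdef : κ = fun x => Measure.map (fun ζ => S (x, ζ)) ℓ)
    (hI : ∀ ε : ℝ, 0 < ε → ∃ (N : ℕ) (p : ℝ≥0∞), 0 < p ∧
      ∀ x y : X, p < kIter κ N x (Metric.ball y ε))
    {Ω₀ : Type*} [MeasurableSpace Ω₀] (P₀ : Measure Ω₀) [IsFiniteMeasure P₀]
    (q : ℝ) (hq1 : q < 1) (C : ℝ) (R R' : X → X → Ω₀ → X)
    (hRlaw : ∀ x x' : X, Measure.map (R x x') P₀ = κ x)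
    (hR'law : ∀ x x' : X, Measure.map (R' x x') P₀ = κ x')
    (hcouple : ∀ x x' : X,
      P₀ {ω | q * dist x x' < dist (R x x' ω) (R' x x' ω)} ≤ ENNReal.ofReal (C * dist x x'))
    (P : Measure (ℕ → E))
    (hP : ∀ n : ℕ, Measure.map (fun ω (i : Fin n) => ω i) P = Measure.pi fun _ : Fin n => ℓ) :
    ∃ I : ProbabilityMeasure X → ℝ≥0∞,
      (∀ (t : ℝ≥0), t ≤ 1 → ∀ σ₁ σ₂ τ : ProbabilityMeasure X,
        (τ : Measure X) = (t : ℝ≥0∞) • (σ₁ : Measure X)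
            + (((1 - t : ℝ≥0)) : ℝ≥0∞) • (σ₂ : Measure X) →
        I τ ≤ t • I σ₁ + (1 - t) • I σ₂) ∧
      LowerSemicontinuous I ∧
      (∀ a : ℝ≥0∞, a < ⊤ → IsCompact {σ : ProbabilityMeasure X | I σ ≤ a}) ∧
      ∀ B : Set (ProbabilityMeasure X),
        (-(⨅ σ ∈ interior B, (I σ : EReal))
            ≤ liminf (fun n : ℕ => ⨅ μ : ProbabilityMeasure X, ((n : ℝ)⁻¹ : EReal)
                * ENNReal.log (((μ : Measure X).prod P) {p | empDist S n p ∈ B})) atTop) ∧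
        (liminf (fun n : ℕ => ⨅ μ : ProbabilityMeasure X, ((n : ℝ)⁻¹ : EReal)
                * ENNReal.log (((μ : Measure X).prod P) {p | empDist S n p ∈ B})) atTop
            ≤ limsup (fun n : ℕ => ⨆ μ : ProbabilityMeasure X, ((n : ℝ)⁻¹ : EReal)
                * ENNReal.log (((μ : Measure X).prod P) {p | empDist S n p ∈ B})) atTop) ∧
        (limsup (fun n : ℕ => ⨆ μ : ProbabilityMeasure X, ((n : ℝ)⁻¹ : EReal)
                * ENNReal.log (((μ : Measure X).prod P) {p | empDist S n p ∈ B})) atTop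
            ≤ -(⨅ σ ∈ closure B, (I σ : EReal))) := by
  obtain rfl := hκdef
  obtain rfl := eq_infinitePi_of_map_fin_eq_pi hP
  obtain ⟨T, hT, hreg⟩ :=
    exists_isTransitionOperator_isRegularPositive hS hI hq1 hRlaw hR'law hcouple
  have : Nonempty (ProbabilityMeasure X) := ⟨⟨Measure.dirac (Classical.arbitrary X), inferInstance⟩⟩
  refine ⟨rateFunction (pressure T),
    fun t ht σ₁ σ₂ τ hτ => rateFunction_convex_combination_le _ ht hτ,
    lowerSemicontinuous_rateFunction _, fun a _ => isCompact_rateFunction_le _ a,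
    fun B => ⟨hreg.le_liminf_iInf_inv_mul_log_measure_empDist_mem hS hT B, ?_,
      limsup_iSup_inv_mul_log_measure_empDist_mem_le hS hT B⟩⟩
  exact (liminf_le_liminf (Eventually.of_forall fun _ => iInf_le_iSup)).trans liminf_le_limsup

/-- Uniform large deviation principle for the empirical distributions of a
random dynamical system, under hypotheses (I) and (C): there exists a convex, lower
semicontinuous rate function `I : P(X) → [0,∞]` with compact sublevel sets such that the
uniform-in-initial-distribution LDP bounds hold for every Borel set `B ⊆ P(X)`. -/
theorem uniform_LDP_for_RDS
    {X E : Type*} [MetricSpace X] [CompactSpace X] [Nonempty X]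
    [MeasurableSpace X] [BorelSpace X]
    [MetricSpace E] [CompactSpace E] [MeasurableSpace E] [BorelSpace E]
    (ℓ : Measure E) [IsProbabilityMeasure ℓ]
    (S : X × E → X) (hS : Continuous S)
    (C₀ : ℝ) (hC₀ : 0 < C₀)
    (hSLip : ∀ (x x' : X) (ζ : E), dist (S (x, ζ)) (S (x', ζ)) ≤ C₀ * dist x x')
    (κ : X → Measure X) (hκdef : κ = fun x => Measure.map (fun ζ => S (x, ζ)) ℓ)
    -- hypothesis (I): uniform irreducibility
    (hI : ∀ ε : ℝ, 0 < ε → ∃ (N : ℕ) (p : ℝ≥0∞), 0 < p ∧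
      ∀ x y : X, p < kIter κ N x (Metric.ball y ε))
    -- hypothesis (C): coupling
    {Ω₀ : Type*} [MeasurableSpace Ω₀] (P₀ : Measure Ω₀) [IsProbabilityMeasure P₀]
    (q : ℝ) (hq0 : 0 ≤ q) (hq1 : q < 1) (C : ℝ) (hC : 0 < C)
    (R R' : X → X → Ω₀ → X)
    (hRmeas : Measurable fun p : (X × X) × Ω₀ => R p.1.1 p.1.2 p.2)
    (hR'meas : Measurable fun p : (X × X) × Ω₀ => R' p.1.1 p.1.2 p.2)
    (hRlaw : ∀ x x' : X, Measure.map (R x x') P₀ = κ x)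
    (hR'law : ∀ x x' : X, Measure.map (R' x x') P₀ = κ x')
    (hcouple : ∀ x x' : X,
      P₀ {ω | q * dist x x' < dist (R x x' ω) (R' x x' ω)} ≤ ENNReal.ofReal (C * dist x x'))
    -- `P` is the countable product measure `ℓ^{⊗ℕ}` on `E^ℕ`
    (P : Measure (ℕ → E)) [IsProbabilityMeasure P]
    (hP : ∀ n : ℕ, Measure.map (fun ω (i : Fin n) => ω i) P = Measure.pi fun _ : Fin n => ℓ) :
    ∃ I : ProbabilityMeasure X → ℝ≥0∞,
      -- `I` is convex
      (∀ (t : ℝ≥0), t ≤ 1 → ∀ σ₁ σ₂ τ : ProbabilityMeasure X,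
        (τ : Measure X) = (t : ℝ≥0∞) • (σ₁ : Measure X)
            + (((1 - t : ℝ≥0)) : ℝ≥0∞) • (σ₂ : Measure X) →
        I τ ≤ t • I σ₁ + (1 - t) • I σ₂) ∧
      -- `I` is lower semicontinuous for the topology of weak convergence
      LowerSemicontinuous I ∧
      -- `I` has compact sublevel sets
      (∀ a : ℝ≥0∞, a < ⊤ → IsCompact {σ : ProbabilityMeasure X | I σ ≤ a}) ∧
      -- the uniform LDP bounds
      ∀ B : Set (ProbabilityMeasure X),
        (-(⨅ σ ∈ interior B, (I σ : EReal))
            ≤ liminf (fun n : ℕ => ⨅ μ : ProbabilityMeasure X, ((n : ℝ)⁻¹ : EReal)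
                * ENNReal.log (((μ : Measure X).prod P) {p | empDist S n p ∈ B})) atTop) ∧
        (liminf (fun n : ℕ => ⨅ μ : ProbabilityMeasure X, ((n : ℝ)⁻¹ : EReal)
                * ENNReal.log (((μ : Measure X).prod P) {p | empDist S n p ∈ B})) atTop
            ≤ limsup (fun n : ℕ => ⨆ μ : ProbabilityMeasure X, ((n : ℝ)⁻¹ : EReal)
                * ENNReal.log (((μ : Measure X).prod P) {p | empDist S n p ∈ B})) atTop) ∧
        (limsup (fun n : ℕ => ⨆ μ : ProbabilityMeasure X, ((n : ℝ)⁻¹ : EReal)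
                * ENNReal.log (((μ : Measure X).prod P) {p | empDist S n p ∈ B})) atTop
            ≤ -(⨅ σ ∈ closure B, (I σ : EReal))) := by
  exact uniform_LDP_for_RDS_general ℓ S hS.measurable κ hκdef hI P₀ q hq1 C R R' hRlaw hR'law
    hcouple P hP
end

section
/- Existence of the pressure function: Assume hypotheses (I) and (C). Then for every continuous V : X → ℝ there exists a real number Λ(V) such that sup_{x∈X} |(1/n)·log(Q_n^V 1(x)) − Λ(V)| → 0 as n → ∞; that is, the functions x ↦ (1/n)·log E_x[exp(V(x_1)+⋯+V(x_n))] converge uniformly on X to a constant Λ(V) independent of the initial point. -/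
open MeasureTheory Filter Topology
open scoped ENNReal NNReal

noncomputable def FK {X : Type*} [MeasurableSpace X] (κ : X → Measure X) (V f : X → ℝ) (x : X) : ℝ :=
  ∫ y, Real.exp (V y) * f y ∂(κ x)

noncomputable def FKiter {X : Type*} [MeasurableSpace X] (κ : X → Measure X) (V : X → ℝ) :
    ℕ → (X → ℝ) → X → ℝ
  | 0 => fun f => f
  | n + 1 => fun f => FK κ V (FKiter κ V n f)

/-!
The maximum and the minimum over `x` of `Q_n^V 1(x)` are sub- and supermultiplicative in `n`, so
both have exponential growth rates, and it suffices to show that the two rates agree.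

Let `e^V` be Lipschitz and write `M_n` for the maximum. Iterating the coupling bounds
`|Q_n^V 1(x) - Q_n^V 1(x')|` by a constant times `(∑_{k<n} q^k M_{n-1-k} M_k) d(x, x')`. If `a` is
slightly smaller than `lim M_n^{1/n}`, then `M_n / a^n` tends to infinity, and at its record times
the sum is at most a constant times `M_n`. At such `n` the function `Q_n^V 1` is therefore at least
`M_n / 2` on a ball of radius independent of `n`. By irreducibility, a fixed number `N` of further
steps spreads this mass: `Q_{n+N}^V 1 ≥ c M_n` everywhere, which forces the growth rates to agree.

Both rates are 1-Lipschitz in `V` for the uniform norm and locally Lipschitz potentials are dense,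
so the equality extends to every continuous `V`.
-/

section GrowthRates

theorem div_pow_eq_exp_mul_log_div_sub_log {s a : ℝ} (hs : 0 < s) (ha : 0 < a) {n : ℕ}
    (hn : n ≠ 0) : s / a ^ n = Real.exp (n * (Real.log s / n - Real.log a)) := by
  have hn' : (n : ℝ) ≠ 0 := Nat.cast_ne_zero.2 hn
  rw [mul_sub, mul_div_cancel₀ _ hn', Real.exp_sub, Real.exp_log hs, Real.exp_nat_mul,
    Real.exp_log ha]

theorem tendsto_div_pow_atTop_of_log_lt {s : ℕ → ℝ} {L a : ℝ} (hs : ∀ n, 0 < s n)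
    (hL : Tendsto (fun n : ℕ => Real.log (s n) / n) atTop (𝓝 L)) (ha : 0 < a)
    (haL : Real.log a < L) : Tendsto (fun n => s n / a ^ n) atTop atTop := by
  have hexp := Real.tendsto_exp_atTop.comp <|
    tendsto_natCast_atTop_atTop.atTop_mul_pos (sub_pos.2 haL) (hL.sub_const _)
  refine hexp.congr' ?_
  filter_upwards [eventually_ne_atTop 0] with n hn
  exact (div_pow_eq_exp_mul_log_div_sub_log (hs n) ha hn).symm

theorem tendsto_div_pow_zero_of_lt_log {s : ℕ → ℝ} {L a : ℝ} (hs : ∀ n, 0 < s n)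
    (hL : Tendsto (fun n : ℕ => Real.log (s n) / n) atTop (𝓝 L)) (ha : 0 < a)
    (haL : L < Real.log a) : Tendsto (fun n => s n / a ^ n) atTop (𝓝 0) := by
  have hexp := Real.tendsto_exp_atBot.comp <|
    tendsto_natCast_atTop_atTop.atTop_mul_neg (sub_neg.2 haL) (hL.sub_const _)
  refine hexp.congr' ?_
  filter_upwards [eventually_ne_atTop 0] with n hn
  exact (div_pow_eq_exp_mul_log_div_sub_log (hs n) ha hn).symm

theorem exists_tendsto_log_div_of_submultiplicative {s : ℕ → ℝ} {v : ℝ}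
    (hs : ∀ n : ℕ, Real.exp (-(n * v)) ≤ s n) (hmul : ∀ m n, s (m + n) ≤ s m * s n) :
    ∃ L, Tendsto (fun n : ℕ => Real.log (s n) / n) atTop (𝓝 L) := by
  have hpos (n) : 0 < s n := (Real.exp_pos _).trans_le (hs n)
  have hsub : Subadditive fun n => Real.log (s n) := fun m n => by
    rw [← Real.log_mul (hpos m).ne' (hpos n).ne']
    exact Real.log_le_log (hpos _) (hmul m n)
  refine ⟨hsub.lim, hsub.tendsto_lim ⟨-|v|, ?_⟩⟩
  rintro _ ⟨n, rfl⟩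
  rcases n.eq_zero_or_pos with rfl | hn
  · simp
  · have hlog : -(n * v) ≤ Real.log (s n) := (Real.le_log_iff_exp_le (hpos n)).2 (hs n)
    rw [le_div_iff₀ (Nat.cast_pos.2 hn)]
    nlinarith [le_abs_self v, (Nat.cast_nonneg n : (0 : ℝ) ≤ n)]

theorem le_add_of_le_exp_mul {s t : ℕ → ℝ} {L l e : ℝ} (hs : ∀ n, 0 < s n) (ht : ∀ n, 0 < t n)
    (hL : Tendsto (fun n : ℕ => Real.log (s n) / n) atTop (𝓝 L))
    (hl : Tendsto (fun n : ℕ => Real.log (t n) / n) atTop (𝓝 l))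
    (hst : ∀ n : ℕ, s n ≤ Real.exp (n * e) * t n) : L ≤ l + e := by
  refine le_of_tendsto_of_tendsto hL (hl.add_const e) ?_
  filter_upwards [eventually_gt_atTop 0] with n hn
  have hlog := Real.log_le_log (hs n) (hst n)
  rw [Real.log_mul (Real.exp_pos _).ne' (ht n).ne', Real.log_exp] at hlog
  have hn' : (0 : ℝ) < n := Nat.cast_pos.2 hn
  rw [div_add' _ _ _ hn'.ne']
  gcongr
  linarith

theorem le_of_frequently_mul_le_shift {s t : ℕ → ℝ} {L l c : ℝ} {N : ℕ} (hs : ∀ n, 0 < s n)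
    (hL : Tendsto (fun n : ℕ => Real.log (s n) / n) atTop (𝓝 L))
    (hl : Tendsto (fun n : ℕ => Real.log (t n) / n) atTop (𝓝 l)) (hc : 0 < c)
    (hst : ∃ᶠ n in atTop, c * s n ≤ t (n + N)) : L ≤ l := by
  have hleft : Tendsto (fun n : ℕ => Real.log c / n + Real.log (s n) / n) atTop (𝓝 L) := by
    simpa only [zero_add] using (tendsto_const_div_atTop_nhds_zero_nat (Real.log c)).add hL
  have hright : Tendsto (fun n : ℕ => Real.log (t (n + N)) / (n + N : ℕ) * (1 + N / n)) atTop
      (𝓝 l) := by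
    simpa only [add_zero, mul_one] using ((tendsto_add_atTop_iff_nat N).2 hl).mul
      ((tendsto_const_div_atTop_nhds_zero_nat (N : ℝ)).const_add 1)
  refine le_of_tendsto_of_tendsto_of_frequently hleft hright ?_
  refine (hst.and_eventually (eventually_gt_atTop 0)).mono fun n ⟨hn, hn0⟩ => ?_
  have hlog := Real.log_le_log (mul_pos hc (hs n)) hn
  rw [Real.log_mul hc.ne' (hs n).ne'] at hlog
  have : (0 : ℝ) < n := Nat.cast_pos.2 hn0
  calc Real.log c / n + Real.log (s n) / n
      = (Real.log c + Real.log (s n)) / n := (add_div _ _ _).symm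
    _ ≤ Real.log (t (n + N)) / n := by gcongr
    _ = Real.log (t (n + N)) / (n + N : ℕ) * (1 + N / n) := by
      push_cast
      field_simp

theorem sum_pow_mul_le_of_forall_div_pow_lt {s : ℕ → ℝ} {a t q K : ℝ} (hs : ∀ n, 0 < s n)
    (ha : 0 < a) (ht : 0 < t) (hq0 : 0 ≤ q) (hqt : q < t) (hsK : ∀ k, s k ≤ K * (a / t) ^ k)
    {n : ℕ} (hn : ∀ m < n, s m / a ^ m < s n / a ^ n) :
    ∑ k ∈ Finset.range n, q ^ k * (s (n - 1 - k) * s k) ≤ K / a * (1 - q / t)⁻¹ * s n := by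
  have hK0 : 0 ≤ K := by simpa using (hs 0).le.trans (hsK 0)
  have hgeom : ∑ k ∈ Finset.range n, (q / t) ^ k ≤ (1 - q / t)⁻¹ :=
    sum_le_hasSum _ (fun k _ => by positivity)
      (hasSum_geometric_of_lt_one (by positivity) ((div_lt_one ht).2 hqt))
  have hterm : ∀ k ∈ Finset.range n,
      q ^ k * (s (n - 1 - k) * s k) ≤ K / a * s n * (q / t) ^ k := fun k hk => by
    have hkn : k < n := Finset.mem_range.1 hk
    have hpow : a ^ n = a ^ (n - 1 - k) * a ^ (k + 1) := by
      rw [← pow_add]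
      congr 1
      omega
    have hsn : s (n - 1 - k) ≤ s n / a ^ (k + 1) :=
      calc s (n - 1 - k)
          ≤ s n / a ^ n * a ^ (n - 1 - k) :=
            ((div_lt_iff₀ (by positivity)).1 (hn (n - 1 - k) (by omega))).le
        _ = s n / a ^ (k + 1) := by
            rw [hpow]
            field_simp
    calc q ^ k * (s (n - 1 - k) * s k)
        ≤ q ^ k * (s n / a ^ (k + 1) * (K * (a / t) ^ k)) := by
          gcongr
          exacts [(hs k).le, div_nonneg (hs n).le (by positivity), hsK k]
      _ = K / a * s n * (q / t) ^ k := by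
          rw [div_pow, div_pow, pow_succ]
          field_simp
  calc ∑ k ∈ Finset.range n, q ^ k * (s (n - 1 - k) * s k)
      ≤ K / a * s n * ∑ k ∈ Finset.range n, (q / t) ^ k :=
        (Finset.sum_le_sum hterm).trans_eq (Finset.mul_sum _ _ _).symm
    _ ≤ K / a * s n * (1 - q / t)⁻¹ :=
        mul_le_mul_of_nonneg_left hgeom (mul_nonneg (by positivity) (hs n).le)
    _ = K / a * (1 - q / t)⁻¹ * s n := by ring

-- With `q < t < 1` and `t * exp L < a < exp L`, the quotients `s n / a ^ n` tend to infinity and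
-- so set records infinitely often, while `s k = O((a / t) ^ k)`.
theorem exists_frequently_sum_pow_mul_le {s : ℕ → ℝ} {L q : ℝ} (hs : ∀ n, 0 < s n)
    (hL : Tendsto (fun n : ℕ => Real.log (s n) / n) atTop (𝓝 L)) (hq0 : 0 ≤ q) (hq1 : q < 1) :
    ∃ A, 0 ≤ A ∧ ∃ᶠ n in atTop,
      ∑ k ∈ Finset.range n, q ^ k * (s (n - 1 - k) * s k) ≤ A * s n := by
  obtain ⟨t, hqt, ht1⟩ := exists_between hq1
  have ht : 0 < t := hq0.trans_lt hqt
  obtain ⟨a, hta, haL⟩ := exists_between (mul_lt_of_lt_one_left (Real.exp_pos L) ht1)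
  have ha : 0 < a := (mul_pos ht (Real.exp_pos L)).trans hta
  have hrecord := frequently_high_scores <|
    tendsto_div_pow_atTop_of_log_lt hs hL ha ((Real.log_lt_iff_lt_exp ha).2 haL)
  have hat : L < Real.log (a / t) :=
    (Real.lt_log_iff_exp_lt (by positivity)).2 ((lt_div_iff₀' ht).2 hta)
  obtain ⟨K, hK⟩ := (tendsto_div_pow_zero_of_lt_log hs hL (by positivity) hat).bddAbove_range
  have hsK (k) : s k ≤ K * (a / t) ^ k :=
    (div_le_iff₀ (by positivity)).1 (hK (Set.mem_range_self k))
  have hK0 : 0 ≤ K := by simpa using (hs 0).le.trans (hsK 0)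
  have hqt1 : 0 ≤ 1 - q / t := sub_nonneg.2 ((div_lt_one ht).2 hqt).le
  exact ⟨K / a * (1 - q / t)⁻¹, by positivity, hrecord.mono fun n hn =>
    sum_pow_mul_le_of_forall_div_pow_lt hs ha ht hq0 hqt hsK hn⟩

theorem tendsto_iSup_abs_sub_of_le_of_le {X : Type*} {f : ℕ → X → ℝ} {s t : ℕ → ℝ} {L : ℝ}
    (hs : Tendsto s atTop (𝓝 L)) (ht : Tendsto t atTop (𝓝 L)) (hsf : ∀ n x, s n ≤ f n x)
    (hft : ∀ n x, f n x ≤ t n) : Tendsto (fun n => ⨆ x, |f n x - L|) atTop (𝓝 0) := by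
  have hmax : Tendsto (fun n => max |s n - L| |t n - L|) atTop (𝓝 0) := by
    simpa using (hs.sub_const L).abs.max (ht.sub_const L).abs
  refine squeeze_zero (fun n => Real.iSup_nonneg fun x => abs_nonneg _) (fun n => ?_) hmax
  exact Real.iSup_le (fun x => abs_le_max_abs_abs (sub_le_sub_right (hsf n x) L)
    (sub_le_sub_right (hft n x) L)) (le_max_of_le_left (abs_nonneg _))

end GrowthRates

section LipschitzApproximation

/-- The algebra of locally Lipschitz real functions, to which Stone–Weierstrass is applied. -/
def locallyLipschitzSubalgebra (X : Type*) [PseudoMetricSpace X] : Subalgebra ℝ C(X, ℝ) where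
  carrier := {f | LocallyLipschitz f}
  mul_mem' hf hg := (contDiff_mul (𝕜 := ℝ) (n := 1)).locallyLipschitz.comp (hf.prodMk hg)
  add_mem' hf hg := hf.add hg
  algebraMap_mem' c := LocallyLipschitz.const c

theorem separatesPoints_locallyLipschitzSubalgebra (X : Type*) [MetricSpace X] :
    (locallyLipschitzSubalgebra X).SeparatesPoints := fun x y hxy =>
  ⟨_, ⟨⟨fun z => dist z y, by fun_prop⟩, (LipschitzWith.dist_left y).locallyLipschitz, rfl⟩,
    by simpa using hxy⟩

theorem exists_locallyLipschitz_abs_sub_lt {X : Type*} [MetricSpace X] [CompactSpace X]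
    {V : X → ℝ} (hV : Continuous V) {e : ℝ} (he : 0 < e) :
    ∃ W : X → ℝ, LocallyLipschitz W ∧ ∀ x, |W x - V x| < e := by
  obtain ⟨W, hW⟩ := ContinuousMap.exists_mem_subalgebra_near_continuous_of_separatesPoints _
    (separatesPoints_locallyLipschitzSubalgebra X) V hV e he
  exact ⟨W, W.2, hW⟩

theorem exists_lipschitzWith_exp_comp {X : Type*} [PseudoMetricSpace X] [CompactSpace X]
    {V : X → ℝ} (hV : LocallyLipschitz V) :
    ∃ K, LipschitzWith K fun x => Real.exp (V x) := by
  have hexp := (Real.contDiff_exp.locallyLipschitz.comp hV).locallyLipschitzOn (s := Set.univ)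
  obtain ⟨K, hK⟩ := hexp.exists_lipschitzOnWith_of_compact isCompact_univ
  exact ⟨K, lipschitzOnWith_univ.1 hK⟩

theorem exists_forall_abs_le {X : Type*} [TopologicalSpace X] [CompactSpace X] {V : X → ℝ}
    (hV : Continuous V) : ∃ v, ∀ x, |V x| ≤ v := by
  obtain ⟨v, hv⟩ := isCompact_univ.exists_bound_of_continuousOn hV.continuousOn
  exact ⟨v, fun x => hv x trivial⟩

end LipschitzApproximation

section FeynmanKac

variable {X : Type*} [MeasurableSpace X] {κ : X → Measure X} {V W f g : X → ℝ}

theorem FK_const_mul (c : ℝ) (f : X → ℝ) :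
    FK κ V (fun y => c * f y) = fun x => c * FK κ V f x := by
  ext x
  simp only [FK, ← integral_const_mul, mul_left_comm]

theorem FKiter_const_mul (c : ℝ) (f : X → ℝ) (n : ℕ) :
    FKiter κ V n (fun y => c * f y) = fun x => c * FKiter κ V n f x := by
  induction n with
  | zero => rfl
  | succ n ih => simp only [FKiter, ih, FK_const_mul]

theorem FKiter_add (f : X → ℝ) (m n : ℕ) :
    FKiter κ V (m + n) f = FKiter κ V m (FKiter κ V n f) := by
  induction m with
  | zero => rw [Nat.zero_add]; rfl
  | succ m ih =>
    rw [Nat.add_right_comm]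
    simp only [FKiter, ih]

theorem FK_nonneg (hf : ∀ y, 0 ≤ f y) (x : X) : 0 ≤ FK κ V f x :=
  integral_nonneg fun y => mul_nonneg (Real.exp_pos _).le (hf y)

theorem FKiter_nonneg (hf : ∀ y, 0 ≤ f y) (n : ℕ) (x : X) : 0 ≤ FKiter κ V n f x := by
  induction n generalizing x with
  | zero => exact hf x
  | succ n ih => exact FK_nonneg ih x

theorem FKiter_one_nonneg (n : ℕ) (x : X) : 0 ≤ FKiter κ V n 1 x :=
  FKiter_nonneg (fun _ => zero_le_one) n x

theorem FKiter_zero_one (hκ : ∀ x, IsProbabilityMeasure (κ x)) (n : ℕ) (x : X) :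
    FKiter κ 0 n 1 x = 1 := by
  induction n generalizing x with
  | zero => rfl
  | succ n ih => simp [FKiter, FK, ih]

/-- A Markov kernel, given as a measure-valued map, that sends continuous functions to
continuous functions. -/
structure IsFellerKernel {X : Type*} [TopologicalSpace X] [MeasurableSpace X]
    (κ : X → Measure X) : Prop where
  measurable : Measurable κ
  isProbabilityMeasure : ∀ x, IsProbabilityMeasure (κ x)
  continuous_integral : ∀ f : X → ℝ, Continuous f → Continuous fun x => ∫ y, f y ∂(κ x)

namespace IsFellerKernel

variable [TopologicalSpace X]

theorem continuous_FK (hκ : IsFellerKernel κ) (hV : Continuous V) (hf : Continuous f) :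
    Continuous (FK κ V f) :=
  hκ.continuous_integral (fun y => Real.exp (V y) * f y) (by fun_prop)

theorem continuous_FKiter (hκ : IsFellerKernel κ) (hV : Continuous V) (hf : Continuous f)
    (n : ℕ) : Continuous (FKiter κ V n f) := by
  induction n with
  | zero => exact hf
  | succ n ih => exact hκ.continuous_FK hV ih

theorem continuous_FKiter_one (hκ : IsFellerKernel κ) (hV : Continuous V) (n : ℕ) :
    Continuous (FKiter κ V n 1) :=
  hκ.continuous_FKiter hV continuous_one n

variable [CompactSpace X] [OpensMeasurableSpace X]

theorem integrable (hκ : IsFellerKernel κ) (hf : Continuous f) (x : X) : Integrable f (κ x) := by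
  have := hκ.isProbabilityMeasure x
  exact hf.integrable_of_hasCompactSupport (HasCompactSupport.of_compactSpace f)

theorem FK_sum_const_mul (hκ : IsFellerKernel κ) (hV : Continuous V) {ι : Type*} (s : Finset ι)
    (c : ι → ℝ) {F : ι → X → ℝ} (hF : ∀ i, Continuous (F i)) (x : X) :
    FK κ V (fun y => ∑ i ∈ s, c i * F i y) x = ∑ i ∈ s, c i * FK κ V (F i) x := by
  have hint : ∀ i ∈ s, Integrable (fun y => Real.exp (V y) * (c i * F i y)) (κ x) :=
    fun i _ => hκ.integrable (by have := hF i; fun_prop) x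
  simp only [FK, Finset.mul_sum]
  rw [integral_finsetSum _ hint]
  exact Finset.sum_congr rfl fun i _ => congrFun (FK_const_mul (c i) (F i)) x

theorem FKiter_le_exp_mul (hκ : IsFellerKernel κ) (hW : Continuous W) {e : ℝ}
    (hVW : ∀ x, V x ≤ W x + e) (hf : ∀ y, 0 ≤ f y) (hg : Continuous g) (hfg : ∀ y, f y ≤ g y)
    (n : ℕ) (x : X) : FKiter κ V n f x ≤ Real.exp (n * e) * FKiter κ W n g x := by
  induction n generalizing x with
  | zero => simpa [FKiter] using hfg x
  | succ n ih =>
    have hcont := hκ.continuous_FKiter hW hg n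
    have hpt (y : X) : Real.exp (V y) * FKiter κ V n f y ≤
        Real.exp (W y) * (Real.exp ((n + 1 : ℕ) * e) * FKiter κ W n g y) :=
      calc Real.exp (V y) * FKiter κ V n f y
          ≤ Real.exp (W y + e) * (Real.exp (n * e) * FKiter κ W n g y) :=
            mul_le_mul (Real.exp_le_exp.2 (hVW y)) (ih y) (FKiter_nonneg hf n y)
              (Real.exp_pos _).le
        _ = Real.exp (W y) * (Real.exp ((n + 1 : ℕ) * e) * FKiter κ W n g y) := by
            rw [Nat.cast_add_one, add_one_mul, Real.exp_add, Real.exp_add]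
            ring
    calc FKiter κ V (n + 1) f x
        ≤ FK κ W (fun y => Real.exp ((n + 1 : ℕ) * e) * FKiter κ W n g y) x :=
          integral_mono_of_nonneg
            (ae_of_all _ fun y => mul_nonneg (Real.exp_pos _).le (FKiter_nonneg hf n y))
            (hκ.integrable (by fun_prop) x) (ae_of_all _ hpt)
      _ = Real.exp ((n + 1 : ℕ) * e) * FKiter κ W (n + 1) g x := by rw [FK_const_mul, FKiter]

theorem FKiter_mono (hκ : IsFellerKernel κ) (hV : Continuous V) (hf : ∀ y, 0 ≤ f y)
    (hg : Continuous g) (hfg : ∀ y, f y ≤ g y) (n : ℕ) (x : X) :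
    FKiter κ V n f x ≤ FKiter κ V n g x := by
  simpa using hκ.FKiter_le_exp_mul (V := V) (e := 0) hV (fun y => (add_zero _).ge) hf hg hfg n x

theorem FKiter_one_le_exp_mul (hκ : IsFellerKernel κ) (hW : Continuous W) {e : ℝ}
    (hVW : ∀ x, V x ≤ W x + e) (n : ℕ) (x : X) :
    FKiter κ V n 1 x ≤ Real.exp (n * e) * FKiter κ W n 1 x :=
  hκ.FKiter_le_exp_mul hW hVW (fun _ => zero_le_one) continuous_one (fun _ => le_rfl) n x

theorem FKiter_one_le_exp (hκ : IsFellerKernel κ) {v : ℝ} (hv : ∀ x, |V x| ≤ v) (n : ℕ) (x : X) :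
    FKiter κ V n 1 x ≤ Real.exp (n * v) := by
  have hv0 (y : X) : V y ≤ (0 : X → ℝ) y + v := by simpa using le_of_abs_le (hv y)
  simpa only [FKiter_zero_one hκ.isProbabilityMeasure, mul_one] using
    hκ.FKiter_one_le_exp_mul continuous_zero hv0 n x

theorem exp_neg_mul_FKiter_zero_le (hκ : IsFellerKernel κ) (hV : Continuous V) {v : ℝ}
    (hv : ∀ x, |V x| ≤ v) (hf : Continuous f) (hf0 : ∀ y, 0 ≤ f y) (n : ℕ) (x : X) :
    Real.exp (-(n * v)) * FKiter κ 0 n f x ≤ FKiter κ V n f x := by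
  rw [Real.exp_neg, inv_mul_le_iff₀ (Real.exp_pos _)]
  exact hκ.FKiter_le_exp_mul hV (fun y => neg_le_iff_add_nonneg.1 (neg_le_of_abs_le (hv y)))
    hf0 hf (fun _ => le_rfl) n x

theorem exp_neg_le_FKiter_one (hκ : IsFellerKernel κ) (hV : Continuous V) {v : ℝ}
    (hv : ∀ x, |V x| ≤ v) (n : ℕ) (x : X) : Real.exp (-(n * v)) ≤ FKiter κ V n 1 x := by
  simpa [FKiter_zero_one hκ.isProbabilityMeasure] using
    hκ.exp_neg_mul_FKiter_zero_le (f := 1) hV hv continuous_one (fun _ => zero_le_one) n x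

theorem lintegral_kIter (hκ : IsFellerKernel κ) (hf : Continuous f) (hf0 : ∀ y, 0 ≤ f y) (n : ℕ)
    (x : X) : ∫⁻ y, ENNReal.ofReal (f y) ∂(kIter κ n x) = ENNReal.ofReal (FKiter κ 0 n f x) := by
  induction n generalizing f with
  | zero => exact lintegral_dirac' x (by fun_prop)
  | succ n ih =>
    have hstep (y : X) : ∫⁻ z, ENNReal.ofReal (f z) ∂(κ y) = ENNReal.ofReal (FK κ 0 f y) := by
      rw [← ofReal_integral_eq_lintegral_ofReal (hκ.integrable hf y) (ae_of_all _ hf0)]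
      simp [FK]
    rw [kIter, Measure.lintegral_bind hκ.measurable.aemeasurable (by fun_prop)]
    simp only [hstep]
    rw [ih (hκ.continuous_FK continuous_zero hf) (FK_nonneg hf0), FKiter_add f n 1]
    rfl

theorem ofReal_mul_kIter_le (hκ : IsFellerKernel κ) (hf : Continuous f) (hf0 : ∀ y, 0 ≤ f y)
    {a : ℝ} {s : Set X} (has : ∀ y ∈ s, a ≤ f y) (n : ℕ) (x : X) :
    ENNReal.ofReal a * kIter κ n x s ≤ ENNReal.ofReal (FKiter κ 0 n f x) := by
  rw [← hκ.lintegral_kIter hf hf0]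
  calc ENNReal.ofReal a * kIter κ n x s
      ≤ ENNReal.ofReal a * kIter κ n x {y | ENNReal.ofReal a ≤ ENNReal.ofReal (f y)} := by
        gcongr
        exact fun y hy => ENNReal.ofReal_le_ofReal (has y hy)
    _ ≤ ∫⁻ y, ENNReal.ofReal (f y) ∂(kIter κ n x) :=
        mul_meas_ge_le_lintegral (by fun_prop) _

end IsFellerKernel

end FeynmanKac

section Irreducibility

variable {X : Type*} [PseudoMetricSpace X] [MeasurableSpace X] {κ : X → Measure X} {V : X → ℝ}

/-- Hypothesis (I): at each scale `ε` some iterate of the kernel charges every `ε`-ball,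
uniformly in the starting point and the centre. -/
def IsUniformlyIrreducible (κ : X → Measure X) : Prop :=
  ∀ ε : ℝ, 0 < ε → ∃ (N : ℕ) (p : ℝ≥0∞), 0 < p ∧ ∀ x y : X, p < kIter κ N x (Metric.ball y ε)

theorem IsUniformlyIrreducible.exists_mul_le_FKiter [CompactSpace X] [OpensMeasurableSpace X]
    [Nonempty X] (hI : IsUniformlyIrreducible κ) (hκ : IsFellerKernel κ) (hV : Continuous V)
    {D : ℝ} (hD : 0 ≤ D) :
    ∃ (N : ℕ) (c : ℝ), 0 < c ∧ ∀ f : X → ℝ, Continuous f → (∀ y, 0 ≤ f y) →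
      ∀ y, (∀ z, |f y - f z| ≤ D * f y * dist y z) → ∀ x, c * f y ≤ FKiter κ V N f x := by
  obtain ⟨v, hv⟩ := exists_forall_abs_le hV
  obtain ⟨r, hr, hDr⟩ := exists_pos_mul_lt one_half_pos D
  obtain ⟨N, p, hp, hball⟩ := hI r hr
  have hp_top : p ≠ ⊤ := (hball (Classical.arbitrary X) (Classical.arbitrary X)).ne_top
  have hp_pos : 0 < p.toReal := ENNReal.toReal_pos hp.ne' hp_top
  refine ⟨N, Real.exp (-(N * v)) * (p.toReal / 2), by positivity, fun f hf hf0 y hlip x => ?_⟩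
  have hhalf : ∀ z ∈ Metric.ball y r, f y / 2 ≤ f z := fun z hz => by
    have hyz : dist y z ≤ r := (Metric.mem_ball'.1 hz).le
    have hdrop : D * f y * dist y z ≤ f y / 2 := by
      nlinarith [hf0 y, mul_le_mul_of_nonneg_left hyz hD]
    linarith [le_of_abs_le (hlip z)]
  have hmass : ENNReal.ofReal (f y / 2) * p ≤ ENNReal.ofReal (FKiter κ 0 N f x) :=
    (mul_le_mul_right (hball x y).le _).trans (hκ.ofReal_mul_kIter_le hf hf0 hhalf N x)
  rw [← ENNReal.ofReal_toReal hp_top, ← ENNReal.ofReal_mul (by linarith [hf0 y]),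
    ENNReal.ofReal_le_ofReal_iff (FKiter_nonneg hf0 N x)] at hmass
  calc Real.exp (-(N * v)) * (p.toReal / 2) * f y
      = Real.exp (-(N * v)) * (f y / 2 * p.toReal) := by ring
    _ ≤ Real.exp (-(N * v)) * FKiter κ 0 N f x := by gcongr
    _ ≤ FKiter κ V N f x := hκ.exp_neg_mul_FKiter_zero_le hV hv hf hf0 N x

end Irreducibility

section ExtremalMasses

variable {X : Type*} [MeasurableSpace X] {κ : X → Measure X} {V W : X → ℝ}

/-- The largest value over the starting point of the total mass `Q_n^V 1`. -/
noncomputable def supMass (κ : X → Measure X) (V : X → ℝ) (n : ℕ) : ℝ :=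
  ⨆ x, FKiter κ V n 1 x

/-- The smallest value over the starting point of the total mass `Q_n^V 1`. -/
noncomputable def infMass (κ : X → Measure X) (V : X → ℝ) (n : ℕ) : ℝ :=
  ⨅ x, FKiter κ V n 1 x

/-- The exponential growth rate of `supMass`, a limit by
`IsFellerKernel.tendsto_upperPressure`. -/
noncomputable def upperPressure (κ : X → Measure X) (V : X → ℝ) : ℝ :=
  limUnder atTop fun n : ℕ => Real.log (supMass κ V n) / n

/-- The exponential growth rate of `infMass`, a limit by
`IsFellerKernel.tendsto_lowerPressure`. -/
noncomputable def lowerPressure (κ : X → Measure X) (V : X → ℝ) : ℝ :=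
  limUnder atTop fun n : ℕ => Real.log (infMass κ V n) / n

namespace IsFellerKernel

variable [TopologicalSpace X] [CompactSpace X]

theorem FKiter_one_le_supMass (hκ : IsFellerKernel κ) (hV : Continuous V) (n : ℕ) (x : X) :
    FKiter κ V n 1 x ≤ supMass κ V n :=
  le_ciSup (isCompact_range (hκ.continuous_FKiter_one hV n)).bddAbove x

theorem infMass_le_FKiter_one (hκ : IsFellerKernel κ) (hV : Continuous V) (n : ℕ) (x : X) :
    infMass κ V n ≤ FKiter κ V n 1 x :=
  ciInf_le (isCompact_range (hκ.continuous_FKiter_one hV n)).bddBelow x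

theorem exists_FKiter_one_eq_supMass [Nonempty X] (hκ : IsFellerKernel κ) (hV : Continuous V)
    (n : ℕ) : ∃ y, FKiter κ V n 1 y = supMass κ V n :=
  (isCompact_range (hκ.continuous_FKiter_one hV n)).sSup_mem (Set.range_nonempty _)

variable [Nonempty X]

theorem infMass_le_supMass (hκ : IsFellerKernel κ) (hV : Continuous V) (n : ℕ) :
    infMass κ V n ≤ supMass κ V n :=
  (hκ.infMass_le_FKiter_one hV n (Classical.arbitrary X)).trans
    (hκ.FKiter_one_le_supMass hV n _)

variable [OpensMeasurableSpace X]

theorem exp_neg_le_infMass (hκ : IsFellerKernel κ) (hV : Continuous V) {v : ℝ}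
    (hv : ∀ x, |V x| ≤ v) (n : ℕ) : Real.exp (-(n * v)) ≤ infMass κ V n :=
  le_ciInf (hκ.exp_neg_le_FKiter_one hV hv n)

theorem supMass_le_exp (hκ : IsFellerKernel κ) {v : ℝ} (hv : ∀ x, |V x| ≤ v) (n : ℕ) :
    supMass κ V n ≤ Real.exp (n * v) :=
  ciSup_le (hκ.FKiter_one_le_exp hv n)

theorem infMass_pos (hκ : IsFellerKernel κ) (hV : Continuous V) (n : ℕ) : 0 < infMass κ V n :=
  have ⟨_, hv⟩ := exists_forall_abs_le hV
  (Real.exp_pos _).trans_le (hκ.exp_neg_le_infMass hV hv n)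

theorem supMass_pos (hκ : IsFellerKernel κ) (hV : Continuous V) (n : ℕ) : 0 < supMass κ V n :=
  (hκ.infMass_pos hV n).trans_le (hκ.infMass_le_supMass hV n)

theorem supMass_add_le (hκ : IsFellerKernel κ) (hV : Continuous V) (m n : ℕ) :
    supMass κ V (m + n) ≤ supMass κ V m * supMass κ V n := ciSup_le fun x =>
  calc FKiter κ V (m + n) 1 x
      = FKiter κ V m (FKiter κ V n 1) x := by rw [FKiter_add]
    _ ≤ FKiter κ V m (fun y => supMass κ V n * (1 : X → ℝ) y) x :=
        hκ.FKiter_mono hV (FKiter_one_nonneg n)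
          (continuous_const.mul continuous_one)
          (fun y => by simpa using hκ.FKiter_one_le_supMass hV n y) m x
    _ = supMass κ V n * FKiter κ V m 1 x := by rw [FKiter_const_mul]
    _ ≤ supMass κ V n * supMass κ V m :=
        mul_le_mul_of_nonneg_left (hκ.FKiter_one_le_supMass hV m x) (hκ.supMass_pos hV n).le
    _ = supMass κ V m * supMass κ V n := mul_comm _ _

theorem infMass_mul_le (hκ : IsFellerKernel κ) (hV : Continuous V) (m n : ℕ) :
    infMass κ V m * infMass κ V n ≤ infMass κ V (m + n) := le_ciInf fun x =>
  calc infMass κ V m * infMass κ V n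
      = infMass κ V n * infMass κ V m := mul_comm _ _
    _ ≤ infMass κ V n * FKiter κ V m 1 x :=
        mul_le_mul_of_nonneg_left (hκ.infMass_le_FKiter_one hV m x) (hκ.infMass_pos hV n).le
    _ = FKiter κ V m (fun y => infMass κ V n * (1 : X → ℝ) y) x := by rw [FKiter_const_mul]
    _ ≤ FKiter κ V m (FKiter κ V n 1) x :=
        hκ.FKiter_mono hV (fun y => by simpa using (hκ.infMass_pos hV n).le)
          (hκ.continuous_FKiter_one hV n)
          (fun y => by simpa using hκ.infMass_le_FKiter_one hV n y) m x
    _ = FKiter κ V (m + n) 1 x := by rw [FKiter_add]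

theorem tendsto_upperPressure (hκ : IsFellerKernel κ) (hV : Continuous V) :
    Tendsto (fun n : ℕ => Real.log (supMass κ V n) / n) atTop (𝓝 (upperPressure κ V)) := by
  obtain ⟨v, hv⟩ := exists_forall_abs_le hV
  exact tendsto_nhds_limUnder <| exists_tendsto_log_div_of_submultiplicative
    (fun n => (hκ.exp_neg_le_infMass hV hv n).trans (hκ.infMass_le_supMass hV n))
    (hκ.supMass_add_le hV)

theorem tendsto_lowerPressure (hκ : IsFellerKernel κ) (hV : Continuous V) :
    Tendsto (fun n : ℕ => Real.log (infMass κ V n) / n) atTop (𝓝 (lowerPressure κ V)) := by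
  obtain ⟨v, hv⟩ := exists_forall_abs_le hV
  have hbound (n : ℕ) : Real.exp (-(n * v)) ≤ (infMass κ V n)⁻¹ := by
    rw [Real.exp_neg]
    exact inv_anti₀ (hκ.infMass_pos hV n)
      ((hκ.infMass_le_supMass hV n).trans (hκ.supMass_le_exp hv n))
  have hmul (m n : ℕ) : (infMass κ V (m + n))⁻¹ ≤ (infMass κ V m)⁻¹ * (infMass κ V n)⁻¹ := by
    rw [← mul_inv]
    exact inv_anti₀ (mul_pos (hκ.infMass_pos hV m) (hκ.infMass_pos hV n))
      (hκ.infMass_mul_le hV m n)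
  obtain ⟨L, hL⟩ := exists_tendsto_log_div_of_submultiplicative hbound hmul
  exact tendsto_nhds_limUnder ⟨-L, by simpa [neg_div] using hL.neg⟩

theorem upperPressure_le_add (hκ : IsFellerKernel κ) (hV : Continuous V) (hW : Continuous W)
    {e : ℝ} (hVW : ∀ x, V x ≤ W x + e) : upperPressure κ V ≤ upperPressure κ W + e :=
  le_add_of_le_exp_mul (hκ.supMass_pos hV) (hκ.supMass_pos hW) (hκ.tendsto_upperPressure hV)
    (hκ.tendsto_upperPressure hW) fun n => ciSup_le fun x =>
      (hκ.FKiter_one_le_exp_mul hW hVW n x).trans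
        (mul_le_mul_of_nonneg_left (hκ.FKiter_one_le_supMass hW n x) (Real.exp_pos _).le)

theorem lowerPressure_le_add (hκ : IsFellerKernel κ) (hV : Continuous V) (hW : Continuous W)
    {e : ℝ} (hVW : ∀ x, V x ≤ W x + e) : lowerPressure κ V ≤ lowerPressure κ W + e := by
  refine le_add_of_le_exp_mul (hκ.infMass_pos hV) (hκ.infMass_pos hW)
    (hκ.tendsto_lowerPressure hV) (hκ.tendsto_lowerPressure hW) fun n => ?_
  rw [← inv_mul_le_iff₀ (Real.exp_pos _)]
  refine le_ciInf fun x => (inv_mul_le_iff₀ (Real.exp_pos _)).2 ?_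
  exact (hκ.infMass_le_FKiter_one hV n x).trans (hκ.FKiter_one_le_exp_mul hW hVW n x)

theorem tendsto_iSup_abs_log_FKiter_sub (hκ : IsFellerKernel κ) (hV : Continuous V)
    (hle : upperPressure κ V ≤ lowerPressure κ V) :
    Tendsto (fun n : ℕ => ⨆ x, |(n : ℝ)⁻¹ * Real.log (FKiter κ V n 1 x) - upperPressure κ V|)
      atTop (𝓝 0) := by
  have hup := hκ.tendsto_upperPressure hV
  have hlow := hκ.tendsto_lowerPressure hV
  have hlog (n : ℕ) := Real.log_le_log (hκ.infMass_pos hV n) (hκ.infMass_le_supMass hV n)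
  have hge : lowerPressure κ V ≤ upperPressure κ V :=
    le_of_tendsto_of_tendsto' hlow hup fun n => div_le_div_of_nonneg_right (hlog n) n.cast_nonneg
  rw [le_antisymm hge hle] at hlow
  simp only [div_eq_inv_mul] at hlow hup
  refine tendsto_iSup_abs_sub_of_le_of_le hlow hup (fun n x => ?_) fun n x => ?_
  · gcongr
    exacts [hκ.infMass_pos hV n, hκ.infMass_le_FKiter_one hV n x]
  · gcongr
    exacts [(hκ.infMass_pos hV n).trans_le (hκ.infMass_le_FKiter_one hV n x),
      hκ.FKiter_one_le_supMass hV n x]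

end IsFellerKernel

end ExtremalMasses

section Coupling

theorem abs_mul_sub_mul_le {a b u w : ℝ} (ha : 0 ≤ a) (hw : 0 ≤ w) :
    |a * u - b * w| ≤ a * |u - w| + |a - b| * w :=
  calc |a * u - b * w|
      = |a * (u - w) + (a - b) * w| := by ring_nf
    _ ≤ |a * (u - w)| + |(a - b) * w| := abs_add_le _ _
    _ = a * |u - w| + |a - b| * w := by rw [abs_mul, abs_mul, abs_of_nonneg ha, abs_of_nonneg hw]

theorem abs_integral_le_integral_add_mul_measureReal {Ω : Type*} [MeasurableSpace Ω]
    {μ : Measure Ω} [IsFiniteMeasure μ] {f g : Ω → ℝ} {M : ℝ} {s : Set Ω} (hg : Integrable g μ)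
    (hg0 : ∀ ω, 0 ≤ g ω) (hM0 : 0 ≤ M) (hM : ∀ ω, |f ω| ≤ M) (hfg : ∀ ω, ω ∉ s → |f ω| ≤ g ω) :
    |∫ ω, f ω ∂μ| ≤ ∫ ω, g ω ∂μ + M * μ.real s := by
  have hs : MeasurableSet (toMeasurable μ s) := measurableSet_toMeasurable _ _
  have hind : Integrable ((toMeasurable μ s).indicator fun _ => M) μ :=
    (integrable_const M).indicator hs
  have hpt (ω : Ω) : |f ω| ≤ g ω + (toMeasurable μ s).indicator (fun _ => M) ω := by
    by_cases hω : ω ∈ s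
    · rw [Set.indicator_of_mem (subset_toMeasurable _ _ hω)]
      exact (hM ω).trans (le_add_of_nonneg_left (hg0 ω))
    · exact (hfg ω hω).trans (le_add_of_nonneg_right (Set.indicator_nonneg (fun _ _ => hM0) ω))
  calc |∫ ω, f ω ∂μ|
      ≤ ∫ ω, |f ω| ∂μ := abs_integral_le_integral_abs
    _ ≤ ∫ ω, (g ω + (toMeasurable μ s).indicator (fun _ => M) ω) ∂μ :=
        integral_mono_of_nonneg (ae_of_all _ fun _ => abs_nonneg _) (hg.add hind)
          (ae_of_all _ hpt)
    _ = ∫ ω, g ω ∂μ + M * μ.real s := by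
        rw [integral_add hg hind, integral_indicator_const _ hs, smul_eq_mul, mul_comm,
          Measure.real, measure_toMeasurable, Measure.real]

variable {X : Type*} [PseudoMetricSpace X] [MeasurableSpace X] {κ : X → Measure X}
  {V f g u G : X → ℝ} {Ω₀ : Type*} [MeasurableSpace Ω₀] {P₀ : Measure Ω₀} {q C : ℝ≥0}
  {R R' : X → X → Ω₀ → X}

/-- Hypothesis (C): `R x x'` and `R' x x'` couple `κ x` with `κ x'` so that the distance
contracts by the factor `q` outside an event of probability at most `C * dist x x'`. -/
structure IsContractiveCoupling (κ : X → Measure X) (P₀ : Measure Ω₀) (q C : ℝ≥0)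
    (R R' : X → X → Ω₀ → X) : Prop where
  measurable_left : ∀ x x', Measurable (R x x')
  measurable_right : ∀ x x', Measurable (R' x x')
  map_left : ∀ x x', Measure.map (R x x') P₀ = κ x
  map_right : ∀ x x', Measure.map (R' x x') P₀ = κ x'
  measure_lt_dist_le : ∀ x x',
    P₀ {ω | q * dist x x' < dist (R x x' ω) (R' x x' ω)} ≤ ENNReal.ofReal (C * dist x x')

namespace IsContractiveCoupling

theorem abs_integral_sub_le [IsFiniteMeasure P₀] (hR : IsContractiveCoupling κ P₀ q C R R')
    {x x' : X} (hf : Integrable f (κ x)) (hf' : Integrable f (κ x')) (hg : Integrable g (κ x))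
    (hg0 : ∀ y, 0 ≤ g y) {M : ℝ} (hM : ∀ y z, |f y - f z| ≤ M)
    (hfg : ∀ y z, |f y - f z| ≤ g y * dist y z) :
    |∫ y, f y ∂(κ x) - ∫ y, f y ∂(κ x')| ≤ (q * ∫ y, g y ∂(κ x) + C * M) * dist x x' := by
  have hRm := (hR.measurable_left x x').aemeasurable (μ := P₀)
  have hRm' := (hR.measurable_right x x').aemeasurable (μ := P₀)
  have hM0 : 0 ≤ M := (abs_nonneg _).trans (hM x x)
  rw [← hR.map_left x x'] at hf hg ⊢
  rw [← hR.map_right x x'] at hf' ⊢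
  have hfR : Integrable (fun ω => f (R x x' ω)) P₀ := hf.comp_aemeasurable hRm
  have hfR' : Integrable (fun ω => f (R' x x' ω)) P₀ := hf'.comp_aemeasurable hRm'
  rw [integral_map hRm hf.1, integral_map hRm' hf'.1, integral_map hRm hg.1,
    ← integral_sub hfR hfR']
  set bad : Set Ω₀ := {ω | q * dist x x' < dist (R x x' ω) (R' x x' ω)}
  have hbad : P₀.real bad ≤ C * dist x x' :=
    ENNReal.toReal_le_of_le_ofReal (by positivity) (hR.measure_lt_dist_le x x')
  calc |∫ ω, (f (R x x' ω) - f (R' x x' ω)) ∂P₀|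
      ≤ ∫ ω, g (R x x' ω) * (q * dist x x') ∂P₀ + M * P₀.real bad :=
        abs_integral_le_integral_add_mul_measureReal ((hg.comp_aemeasurable hRm).mul_const _)
          (fun ω => mul_nonneg (hg0 _) (by positivity)) hM0 (fun ω => hM _ _) fun ω hω =>
            (hfg _ _).trans (mul_le_mul_of_nonneg_left (not_lt.1 hω) (hg0 _))
    _ ≤ (∫ ω, g (R x x' ω) ∂P₀) * (q * dist x x') + M * (C * dist x x') := by
        rw [integral_mul_const]
        gcongr
    _ = (q * ∫ ω, g (R x x' ω) ∂P₀ + C * M) * dist x x' := by ring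

theorem abs_FK_sub_le [CompactSpace X] [OpensMeasurableSpace X] [IsFiniteMeasure P₀]
    (hR : IsContractiveCoupling κ P₀ q C R R') (hκ : IsFellerKernel κ) {v : ℝ}
    (hv : ∀ x, |V x| ≤ v) {K : ℝ≥0} (hK : LipschitzWith K fun x => Real.exp (V x))
    (hV : Continuous V) (hu : Continuous u) (hG : Continuous G) (hu0 : ∀ y, 0 ≤ u y)
    (hG0 : ∀ y, 0 ≤ G y) {M : ℝ} (huM : ∀ y, u y ≤ M)
    (huG : ∀ y z, |u y - u z| ≤ G y * dist y z) (x x' : X) :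
    |FK κ V u x - FK κ V u x'| ≤ (q * FK κ V G x + (q * K + C * Real.exp v) * M) * dist x x' := by
  have := hκ.isProbabilityMeasure x
  have hM0 : 0 ≤ M := (hu0 x).trans (huM x)
  have hosc (y z : X) : |Real.exp (V y) * u y - Real.exp (V z) * u z| ≤ Real.exp v * M := by
    have hpos (w : X) : 0 ≤ Real.exp (V w) * u w := mul_nonneg (Real.exp_pos _).le (hu0 w)
    have hle (w : X) : Real.exp (V w) * u w ≤ Real.exp v * M :=
      mul_le_mul (Real.exp_le_exp.2 (le_of_abs_le (hv w))) (huM w) (hu0 w) (Real.exp_pos _).le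
    exact abs_sub_le_of_nonneg_of_le (hpos y) (hle y) (hpos z) (hle z)
  have hslope (y z : X) : |Real.exp (V y) * u y - Real.exp (V z) * u z| ≤
      (Real.exp (V y) * G y + K * M) * dist y z := by
    have hexp : |Real.exp (V y) - Real.exp (V z)| ≤ K * dist y z := hK.dist_le_mul y z
    calc |Real.exp (V y) * u y - Real.exp (V z) * u z|
        ≤ Real.exp (V y) * |u y - u z| + |Real.exp (V y) - Real.exp (V z)| * u z :=
          abs_mul_sub_mul_le (Real.exp_pos _).le (hu0 z)
      _ ≤ Real.exp (V y) * (G y * dist y z) + K * dist y z * M := by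
          gcongr
          exacts [huG y z, hu0 z, huM z]
      _ = (Real.exp (V y) * G y + K * M) * dist y z := by ring
  have hGint : Integrable (fun y => Real.exp (V y) * G y) (κ x) := hκ.integrable (by fun_prop) x
  have hslope_integral : ∫ y, (Real.exp (V y) * G y + K * M) ∂(κ x) = FK κ V G x + K * M := by
    rw [integral_add hGint (integrable_const _)]
    simp [FK]
  refine (hR.abs_integral_sub_le (g := fun y => Real.exp (V y) * G y + K * M)
    (hκ.integrable (by fun_prop) x) (hκ.integrable (by fun_prop) x')
    (hGint.add (integrable_const _)) (fun y => ?_) hosc hslope).trans_eq ?_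
  · exact add_nonneg (mul_nonneg (Real.exp_pos _).le (hG0 y)) (by positivity)
  · rw [hslope_integral]
    ring

theorem abs_FKiter_one_sub_le [CompactSpace X] [OpensMeasurableSpace X] [IsFiniteMeasure P₀]
    (hR : IsContractiveCoupling κ P₀ q C R R') (hκ : IsFellerKernel κ) {v : ℝ}
    (hv : ∀ x, |V x| ≤ v) {K : ℝ≥0} (hK : LipschitzWith K fun x => Real.exp (V x))
    (hV : Continuous V) (n : ℕ) (x x' : X) :
    |FKiter κ V n 1 x - FKiter κ V n 1 x'| ≤
      (∑ k ∈ Finset.range n, (q ^ k * ((q * K + C * Real.exp v) * supMass κ V (n - 1 - k))) *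
        FKiter κ V k 1 x) * dist x x' := by
  have hcont (k : ℕ) := hκ.continuous_FKiter_one hV k
  induction n generalizing x x' with
  | zero => simp [FKiter]
  | succ n ih =>
    refine (hR.abs_FK_sub_le hκ hv hK hV (hcont n) (by fun_prop) (FKiter_one_nonneg n)
      (fun y => Finset.sum_nonneg fun k _ => mul_nonneg ?_ (FKiter_one_nonneg k y))
      (hκ.FKiter_one_le_supMass hV n) ih x x').trans_eq ?_
    · have := (FKiter_one_nonneg (n - 1 - k) y).trans (hκ.FKiter_one_le_supMass hV (n - 1 - k) y)
      positivity
    · rw [hκ.FK_sum_const_mul hV _ _ hcont, Finset.sum_range_succ', Finset.mul_sum]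
      simp only [FKiter, Nat.add_sub_cancel, Nat.sub_zero, pow_zero, one_mul, Pi.one_apply,
        mul_one, pow_succ', mul_assoc, Nat.sub_sub, Nat.add_comm 1]

theorem upperPressure_le_lowerPressure_of_lipschitzWith [CompactSpace X] [OpensMeasurableSpace X]
    [Nonempty X] [IsFiniteMeasure P₀] (hR : IsContractiveCoupling κ P₀ q C R R')
    (hq1 : q < 1) (hI : IsUniformlyIrreducible κ) (hκ : IsFellerKernel κ) (hV : Continuous V)
    {K : ℝ≥0} (hK : LipschitzWith K fun x => Real.exp (V x)) :
    upperPressure κ V ≤ lowerPressure κ V := by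
  obtain ⟨v, hv⟩ := exists_forall_abs_le hV
  obtain ⟨A, hA0, hA⟩ := exists_frequently_sum_pow_mul_le (hκ.supMass_pos hV)
    (hκ.tendsto_upperPressure hV) q.2 hq1
  set B : ℝ := q * K + C * Real.exp v
  have hB0 : 0 ≤ B := by positivity
  obtain ⟨N, c, hc, hharnack⟩ := hI.exists_mul_le_FKiter hκ hV (mul_nonneg hB0 hA0)
  refine le_of_frequently_mul_le_shift (N := N) (hκ.supMass_pos hV) (hκ.tendsto_upperPressure hV)
    (hκ.tendsto_lowerPressure hV) hc (hA.mono fun n hn => le_ciInf fun x => ?_)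
  obtain ⟨y, hy⟩ := hκ.exists_FKiter_one_eq_supMass hV n
  have hlip (z : X) : |FKiter κ V n 1 y - FKiter κ V n 1 z| ≤
      B * A * FKiter κ V n 1 y * dist y z := by
    refine (hR.abs_FKiter_one_sub_le hκ hv hK hV n y z).trans ?_
    gcongr
    calc ∑ k ∈ Finset.range n, (q ^ k * (B * supMass κ V (n - 1 - k))) * FKiter κ V k 1 y
        ≤ ∑ k ∈ Finset.range n, (q ^ k * (B * supMass κ V (n - 1 - k))) * supMass κ V k := by
          gcongr with k
          · have := (hκ.supMass_pos hV (n - 1 - k)).le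
            positivity
          · exact hκ.FKiter_one_le_supMass hV k y
      _ = B * ∑ k ∈ Finset.range n, q ^ k * (supMass κ V (n - 1 - k) * supMass κ V k) := by
          rw [Finset.mul_sum]
          exact Finset.sum_congr rfl fun k _ => by ring
      _ ≤ B * (A * supMass κ V n) := mul_le_mul_of_nonneg_left hn hB0
      _ = B * A * FKiter κ V n 1 y := by rw [hy, mul_assoc]
  rw [← hy, add_comm, FKiter_add]
  exact hharnack _ (hκ.continuous_FKiter_one hV n)
    (FKiter_one_nonneg n) y hlip x

theorem upperPressure_le_lowerPressure {X : Type*} [MetricSpace X] [CompactSpace X]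
    [MeasurableSpace X] [OpensMeasurableSpace X] [Nonempty X] [IsFiniteMeasure P₀]
    {κ : X → Measure X} {V : X → ℝ} {R R' : X → X → Ω₀ → X}
    (hR : IsContractiveCoupling κ P₀ q C R R') (hq1 : q < 1) (hI : IsUniformlyIrreducible κ)
    (hκ : IsFellerKernel κ) (hV : Continuous V) : upperPressure κ V ≤ lowerPressure κ V := by
  refine le_of_forall_pos_le_add fun e he => ?_
  obtain ⟨W, hWlip, hVW⟩ := exists_locallyLipschitz_abs_sub_lt hV (half_pos he)
  have hW := hWlip.continuous
  obtain ⟨K, hK⟩ := exists_lipschitzWith_exp_comp hWlip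
  have hup : upperPressure κ V ≤ upperPressure κ W + e / 2 :=
    hκ.upperPressure_le_add hV hW fun x => by linarith [(abs_lt.1 (hVW x)).1]
  have hmid : upperPressure κ W ≤ lowerPressure κ W :=
    hR.upperPressure_le_lowerPressure_of_lipschitzWith hq1 hI hκ hW hK
  have hlow : lowerPressure κ W ≤ lowerPressure κ V + e / 2 :=
    hκ.lowerPressure_le_add hW hV fun x => by linarith [(abs_lt.1 (hVW x)).2]
  linarith

end IsContractiveCoupling

end Coupling

/-- Existence of the pressure function: under hypotheses (I) and (C),
for every continuous `V : X → ℝ` there is `Λ(V) ∈ ℝ` such that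
`x ↦ (1/n)·log Q_n^V 1(x)` converges uniformly on `X` to the constant `Λ(V)`. -/
theorem pressure_function_exists
    {X : Type*} [MetricSpace X] [CompactSpace X] [MeasurableSpace X] [BorelSpace X]
    (κ : X → Measure X) (hκmeas : Measurable κ)
    (hκprob : ∀ x, IsProbabilityMeasure (κ x))
    (hFeller : ∀ f : X → ℝ, Continuous f → Continuous fun x => ∫ y, f y ∂(κ x))
    -- hypothesis (I): uniform irreducibility
    (hI : ∀ ε : ℝ, 0 < ε → ∃ (N : ℕ) (p : ℝ≥0∞), 0 < p ∧
      ∀ x y : X, p < kIter κ N x (Metric.ball y ε))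
    -- hypothesis (C): coupling
    {Ω₀ : Type*} [MeasurableSpace Ω₀] (P₀ : Measure Ω₀) [IsProbabilityMeasure P₀]
    (q : ℝ) (hq0 : 0 ≤ q) (hq1 : q < 1) (C : ℝ) (hC : 0 < C)
    (R R' : X → X → Ω₀ → X)
    (hRmeas : Measurable fun p : (X × X) × Ω₀ => R p.1.1 p.1.2 p.2)
    (hR'meas : Measurable fun p : (X × X) × Ω₀ => R' p.1.1 p.1.2 p.2)
    (hRlaw : ∀ x x' : X, Measure.map (R x x') P₀ = κ x)
    (hR'law : ∀ x x' : X, Measure.map (R' x x') P₀ = κ x')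
    (hcouple : ∀ x x' : X,
      P₀ {ω | q * dist x x' < dist (R x x' ω) (R' x x' ω)} ≤ ENNReal.ofReal (C * dist x x'))
    (V : X → ℝ) (hV : Continuous V) :
    ∃ Λ : ℝ, Tendsto
      (fun n : ℕ => ⨆ x : X, |(n : ℝ)⁻¹ * Real.log (FKiter κ V n 1 x) - Λ|)
      atTop (nhds 0) := by
  rcases isEmpty_or_nonempty X with hX | hX
  · exact ⟨0, by simp [Real.iSup_of_isEmpty]⟩
  have hκ : IsFellerKernel κ := ⟨hκmeas, hκprob, hFeller⟩
  lift q to ℝ≥0 using hq0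
  lift C to ℝ≥0 using hC.le
  have hR : IsContractiveCoupling κ P₀ q C R R' :=
    ⟨fun x x' => hRmeas.comp (measurable_prodMk_left (x := (x, x'))),
      fun x x' => hR'meas.comp (measurable_prodMk_left (x := (x, x'))), hRlaw, hR'law, hcouple⟩
  exact ⟨upperPressure κ V, hκ.tendsto_iSup_abs_log_FKiter_sub hV
    (hR.upperPressure_le_lowerPressure hq1 hI hκ hV)⟩
end
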